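/- Let V be a non-trivial irreducible 𝔏_{S,n}(B)-module with finite dimensional weight spaces. Then V is either a uniformly bounded module or a highest weight module. Further: if V is uniformly bounded, then V can be regarded as an irreducible uniformly bounded module for 𝔏(B) or W_n ⊗ B (n ≥ 1), and as such it is a single point evaluation module; if V is a highest weight module, then V can be regarded as an irreducible highest weight module for 𝔏(B) or W_n ⊗ B (n ≥ 2), and as such it is a single point evaluation module. -/

import Mathlib

open scoped TensorProduct

noncomputable section

namespace LoopWitt

/-- The standard pairing `(u | m)` between `ℂⁿ` and `ℤⁿ`. -/
def pairC {n : ℕ} (u : Fin n → ℂ) (m : Fin n → ℤ) : ℂ := ∑ i, u i * (m i : ℂ)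

/-- The standard pairing on `ℂⁿ`. -/
def pairCC {n : ℕ} (u lam : Fin n → ℂ) : ℂ := ∑ i, u i * lam i

/-- `ℤⁿ = K ⊕ ℤβ`. -/
def IsDirectSumDecomp {n : ℕ} (K : AddSubgroup (Fin n → ℤ)) (β : Fin n → ℤ) : Prop :=
  (∀ m : Fin n → ℤ, ∃ a ∈ K, ∃ d : ℤ, m = a + d • β) ∧ ∀ d : ℤ, d • β ∈ K → d = 0

/-- `r` lies in the positive part `K + ℕ₊ β` of `ℤⁿ`. -/
def posDeg {n : ℕ} (K : AddSubgroup (Fin n → ℤ)) (β : Fin n → ℤ) (r : Fin n → ℤ) : Prop :=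
  ∃ a ∈ K, ∃ d : ℤ, 1 ≤ d ∧ r = a + d • β

/-- A representation of the loop Witt algebra `Wₙ ⊗ B`, given by operators
`D u r b` (for `D(u,r) ⊗ b`, where `D(u,r) = Σ uᵢ tʳ dᵢ`), bilinear in `u` and `b`,
subject to the Witt bracket relations. -/
structure WittRep (n : ℕ) (B : Type*) [CommRing B] [Algebra ℂ B]
    (V : Type*) [AddCommGroup V] [Module ℂ V] where
  D : (Fin n → ℂ) → (Fin n → ℤ) → B → Module.End ℂ V
  D_add_u : ∀ u u' r b, D (u + u') r b = D u r b + D u' r b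
  D_smul_u : ∀ (c : ℂ) u r b, D (c • u) r b = c • D u r b
  D_add_b : ∀ u r b b', D u r (b + b') = D u r b + D u r b'
  D_smul_b : ∀ (c : ℂ) u r b, D u r (c • b) = c • D u r b
  comm_DD : ∀ u r b v s b',
    ⁅D u r b, D v s b'⁆ = D (pairC u s • v - pairC v r • u) (r + s) (b * b')

namespace WittRep

variable {n : ℕ} {B : Type*} [CommRing B] [Algebra ℂ B]
  {V : Type*} [AddCommGroup V] [Module ℂ V]

/-- The weight space of weight `lam` with respect to the Cartan subalgebra `H = ⊕ ℂ dᵢ`. -/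
def weightSpace (ρ : WittRep n B V) (lam : Fin n → ℂ) : Submodule ℂ V where
  carrier := {x | ∀ u, ρ.D u 0 1 x = pairCC u lam • x}
  add_mem' := by
    intro a b ha hb u
    rw [map_add, ha u, hb u, smul_add]
  zero_mem' := by intro u; simp
  smul_mem' := by
    intro c a ha u
    rw [map_smul, ha u, smul_comm]

/-- A weight module: the sum of the weight spaces is everything. -/
def IsWeightModule (ρ : WittRep n B V) : Prop :=
  (⨆ lam : Fin n → ℂ, ρ.weightSpace lam) = ⊤

/-- Uniformly bounded weight spaces. -/
def UniformlyBounded (ρ : WittRep n B V) : Prop :=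
  ∃ N : ℕ, ∀ lam, Module.rank ℂ ↥(ρ.weightSpace lam) ≤ (N : Cardinal)

/-- A Harish-Chandra module: a weight module with finite dimensional weight spaces. -/
def HarishChandra (ρ : WittRep n B V) : Prop :=
  ρ.IsWeightModule ∧ ∀ lam, FiniteDimensional ℂ ↥(ρ.weightSpace lam)

/-- A submodule invariant under all the operators. -/
def Invariant (ρ : WittRep n B V) (U : Submodule ℂ V) : Prop :=
  ∀ u r b, ∀ x ∈ U, ρ.D u r b x ∈ U

/-- Irreducibility. -/
def IsIrreducible (ρ : WittRep n B V) : Prop :=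
  (∃ x : V, x ≠ 0) ∧ ∀ U : Submodule ℂ V, ρ.Invariant U → U = ⊥ ∨ U = ⊤

/-- A single point evaluation module. -/
def IsSinglePointEval (ρ : WittRep n B V) : Prop :=
  ∃ η : B →ₐ[ℂ] ℂ, ∀ u r b, ρ.D u r b = η b • ρ.D u r 1

/-- Nontriviality of the action. -/
def IsNontrivial (ρ : WittRep n B V) : Prop := ∃ u r b x, ρ.D u r b x ≠ 0

/-- `z` is a highest weight vector generating the module, with respect to the
triangular decomposition determined by `ℤⁿ = K ⊕ ℤβ`. -/
def IsHWVector (ρ : WittRep n B V) (K : AddSubgroup (Fin n → ℤ)) (β : Fin n → ℤ)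
    (z : V) : Prop :=
  z ≠ 0 ∧ (∃ lam, z ∈ ρ.weightSpace lam) ∧
  (∀ u r b, posDeg K β r → ρ.D u r b z = 0) ∧
  ∀ U : Submodule ℂ V, ρ.Invariant U → z ∈ U → U = ⊤

/-- A highest weight module. -/
def IsHighestWeight (ρ : WittRep n B V) : Prop :=
  ∃ (K : AddSubgroup (Fin n → ℤ)) (β : Fin n → ℤ),
    IsDirectSumDecomp K β ∧ ∃ z, ρ.IsHWVector K β z

end WittRep

/-- A representation of the loop extended Witt algebra `𝔏_{S,n}(B) = (Wₙ ⋉ (S ⊗ Aₙ)) ⊗ B`,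
given by operators `D u r b` (for `D(u,r) ⊗ b`) and `E s m b` (for `s ⊗ tᵐ ⊗ b`),
suitably multilinear, subject to the bracket relations of `𝔏_{S,n}(B)`. -/
structure ExtWittRep (n : ℕ) (S : Type*) [AddCommGroup S] [Module ℂ S]
    (B : Type*) [CommRing B] [Algebra ℂ B]
    (V : Type*) [AddCommGroup V] [Module ℂ V] where
  D : (Fin n → ℂ) → (Fin n → ℤ) → B → Module.End ℂ V
  E : S → (Fin n → ℤ) → B → Module.End ℂ V
  D_add_u : ∀ u u' r b, D (u + u') r b = D u r b + D u' r b
  D_smul_u : ∀ (c : ℂ) u r b, D (c • u) r b = c • D u r b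
  D_add_b : ∀ u r b b', D u r (b + b') = D u r b + D u r b'
  D_smul_b : ∀ (c : ℂ) u r b, D u r (c • b) = c • D u r b
  E_add_s : ∀ s s' m b, E (s + s') m b = E s m b + E s' m b
  E_smul_s : ∀ (c : ℂ) s m b, E (c • s) m b = c • E s m b
  E_add_b : ∀ s m b b', E s m (b + b') = E s m b + E s m b'
  E_smul_b : ∀ (c : ℂ) s m b, E s m (c • b) = c • E s m b
  comm_DD : ∀ u r b v s b',
    ⁅D u r b, D v s b'⁆ = D (pairC u s • v - pairC v r • u) (r + s) (b * b')
  comm_DE : ∀ u r b s m b', ⁅D u r b, E s m b'⁆ = pairC u m • E s (m + r) (b * b')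
  comm_EE : ∀ s m b s' m' b', ⁅E s m b, E s' m' b'⁆ = 0

namespace ExtWittRep

variable {n : ℕ} {S : Type*} [AddCommGroup S] [Module ℂ S]
  {B : Type*} [CommRing B] [Algebra ℂ B]
  {V : Type*} [AddCommGroup V] [Module ℂ V]

/-- The weight space of the weight given by `lam` on `H` and the linear functional `c`
on `S ≅ S ⊗ t⁰ (⊗ 1)`, with respect to the Cartan subalgebra `H ⊕ (S ⊗ t⁰) (⊗ 1)`. -/
def weightSpace (ρ : ExtWittRep n S B V) (lam : Fin n → ℂ) (c : S →ₗ[ℂ] ℂ) :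
    Submodule ℂ V where
  carrier := {x | (∀ u, ρ.D u 0 1 x = pairCC u lam • x) ∧ ∀ s, ρ.E s 0 1 x = c s • x}
  add_mem' := by
    intro a b ha hb
    refine ⟨fun u => ?_, fun s => ?_⟩
    · rw [map_add, ha.1 u, hb.1 u, smul_add]
    · rw [map_add, ha.2 s, hb.2 s, smul_add]
  zero_mem' := by exact ⟨fun u => by simp, fun s => by simp⟩
  smul_mem' := by
    intro t a ha
    refine ⟨fun u => ?_, fun s => ?_⟩
    · rw [map_smul, ha.1 u, smul_comm]
    · rw [map_smul, ha.2 s, smul_comm]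

/-- A weight module: the weight spaces span. -/
def IsWeightModule (ρ : ExtWittRep n S B V) : Prop :=
  (⨆ p : (Fin n → ℂ) × (S →ₗ[ℂ] ℂ), ρ.weightSpace p.1 p.2) = ⊤

/-- Uniformly bounded weight spaces. -/
def UniformlyBounded (ρ : ExtWittRep n S B V) : Prop :=
  ∃ N : ℕ, ∀ lam c, Module.rank ℂ ↥(ρ.weightSpace lam c) ≤ (N : Cardinal)

/-- Harish-Chandra: a weight module with finite dimensional weight spaces. -/
def HarishChandra (ρ : ExtWittRep n S B V) : Prop :=
  ρ.IsWeightModule ∧ ∀ lam c, FiniteDimensional ℂ ↥(ρ.weightSpace lam c)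

/-- Invariant submodule. -/
def Invariant (ρ : ExtWittRep n S B V) (U : Submodule ℂ V) : Prop :=
  (∀ u r b, ∀ x ∈ U, ρ.D u r b x ∈ U) ∧ (∀ s m b, ∀ x ∈ U, ρ.E s m b x ∈ U)

/-- Irreducibility. -/
def IsIrreducible (ρ : ExtWittRep n S B V) : Prop :=
  (∃ x : V, x ≠ 0) ∧ ∀ U : Submodule ℂ V, ρ.Invariant U → U = ⊥ ∨ U = ⊤

/-- A single point evaluation module. -/
def IsSinglePointEval (ρ : ExtWittRep n S B V) : Prop :=
  ∃ η : B →ₐ[ℂ] ℂ, (∀ u r b, ρ.D u r b = η b • ρ.D u r 1) ∧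
    ∀ s m b, ρ.E s m b = η b • ρ.E s m 1

/-- Single point generalised evaluation module: the action factors through
`𝔤 ⊗ B/𝔪ᵏ` for some maximal ideal `𝔪` and some `k`. -/
def IsGenEval (ρ : ExtWittRep n S B V) : Prop :=
  ∃ 𝔪 : Ideal B, 𝔪.IsMaximal ∧ ∃ k : ℕ, ∀ b ∈ 𝔪 ^ k,
    (∀ u r, ρ.D u r b = 0) ∧ ∀ s m, ρ.E s m b = 0

/-- Nontriviality of the action. -/
def IsNontrivial (ρ : ExtWittRep n S B V) : Prop :=
  (∃ u r b x, ρ.D u r b x ≠ 0) ∨ ∃ s m b x, ρ.E s m b x ≠ 0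

/-- The submodule of vectors on which the whole Lie algebra acts trivially. -/
def trivVectors (ρ : ExtWittRep n S B V) : Submodule ℂ V where
  carrier := {x | (∀ u r b, ρ.D u r b x = 0) ∧ ∀ s m b, ρ.E s m b x = 0}
  add_mem' := by
    intro a b ha hb
    exact ⟨fun u r c => by rw [map_add, ha.1 u r c, hb.1 u r c, add_zero],
      fun s m c => by rw [map_add, ha.2 s m c, hb.2 s m c, add_zero]⟩
  zero_mem' := ⟨fun u r c => by simp, fun s m c => by simp⟩
  smul_mem' := by
    intro t a ha
    exact ⟨fun u r c => by rw [map_smul, ha.1 u r c, smul_zero],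
      fun s m c => by rw [map_smul, ha.2 s m c, smul_zero]⟩

/-- Highest weight vector for the triangular decomposition determined by `ℤⁿ = K ⊕ ℤβ`,
generating the whole module. -/
def IsHWVector (ρ : ExtWittRep n S B V) (K : AddSubgroup (Fin n → ℤ)) (β : Fin n → ℤ)
    (z : V) : Prop :=
  z ≠ 0 ∧ (∃ lam c, z ∈ ρ.weightSpace lam c) ∧
  (∀ u r b, posDeg K β r → ρ.D u r b z = 0) ∧
  (∀ s m b, posDeg K β m → ρ.E s m b z = 0) ∧
  ∀ U : Submodule ℂ V, ρ.Invariant U → z ∈ U → U = ⊤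

/-- Highest weight module. -/
def IsHighestWeight (ρ : ExtWittRep n S B V) : Prop :=
  ∃ (K : AddSubgroup (Fin n → ℤ)) (β : Fin n → ℤ),
    IsDirectSumDecomp K β ∧ ∃ z, ρ.IsHWVector K β z

/-- Invariance under the degree-`K` part `(𝔏_{S,n}(B))_K`. -/
def InvariantK (ρ : ExtWittRep n S B V) (K : AddSubgroup (Fin n → ℤ))
    (U : Submodule ℂ V) : Prop :=
  (∀ u, ∀ r ∈ K, ∀ b, ∀ x ∈ U, ρ.D u r b x ∈ U) ∧
    ∀ s, ∀ m ∈ K, ∀ b, ∀ x ∈ U, ρ.E s m b x ∈ U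

/-- The highest weight space: the `(𝔏_{S,n}(B))_K`-submodule generated by `z`. -/
def hwSpace (ρ : ExtWittRep n S B V) (K : AddSubgroup (Fin n → ℤ)) (z : V) :
    Submodule ℂ V :=
  sInf {U : Submodule ℂ V | z ∈ U ∧ ρ.InvariantK K U}

end ExtWittRep

end LoopWitt

open LoopWitt

/-!
View `𝔏_{S,n}(B)` as a `ℤⁿ`-graded Lie algebra spanned by symbols `u tʳ ⊗ b` with `u ∈ ℂⁿ × S`. Call
a direction `r` positive if operators translated far enough along `r` kill any given vector; by
irreducibility one non-zero vector decides. A bracket computation reduces this condition to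
finitely many operators, so when `r` is not positive these embed the weight space of weight `g - r`
into a finite product of weight spaces near `g`. If there is no positive direction, `V` is thus
uniformly bounded.

Otherwise, for `n ≥ 2`, the positive directions form an archimedean cone. It has a minimal element
`β`: if every positive element could be split into two positive ones, some weight space would lie
below arbitrarily long strings with a highest weight, and the products `e₋ₖ e₋₍ₗ₋ₖ₎ v` in such a
string make its dimension exceed every bound. Minimality gives `ℤⁿ = K ⊕ ℤβ`, where `K` consists of
the directions that are neither positive nor negative, and a highest weight with respect to it.

For a bounded irreducible representation, let `I` be the ideal of those `b` for which every
`u tʳ ⊗ b` acts by zero. The Lie algebra acts by derivations on the operator algebras generated by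
its abelian ideals, and derivations preserve nilpotency; this shows that `B / I` is reduced and that
`s ∈ S` acts by zero in all degrees once `s ⊗ t⁰ ⊗ 1` does. An idempotent of `B / I` other than `0`
and `1` would create too many eigenvalues on one weight space, and every `b` is algebraic modulo
`I`. Hence `B / I = ℂ`. A highest weight representation is governed by its highest layer, which is a
bounded irreducible representation of the degree `K` part.
-/

namespace LoopWitt

/-! ### The Witt algebra of the circle -/

section WittLine

variable {k V : Type*} [Field k] [AddCommGroup V] [Module k V]

/-- Operators `e i` (`i : ℤ`) satisfying the relations of the Witt algebra of the circle, with
`e i` standing for `tⁱ (t d/dt)`. -/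
def IsWittLine (e : ℤ → Module.End k V) : Prop :=
  ∀ i j : ℤ, ⁅e i, e j⁆ = ((j : k) - i) • e (i + j)

/-- A non-zero vector killed by the positive half of a Witt line and on which `e 0` acts by
`h`. -/
structure IsWittHighestVector (e : ℤ → Module.End k V) (h : k) (v : V) : Prop where
  ne_zero : v ≠ 0
  apply_pos : ∀ j : ℤ, 1 ≤ j → e j v = 0
  apply_zero : e 0 v = h • v

variable {e : ℤ → Module.End k V} {h : k} {v : V}

theorem IsWittLine.apply_apply (he : IsWittLine e) (i j : ℤ) (w : V) :
    e i (e j w) = e j (e i w) + ((j : k) - i) • e (i + j) w := by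
  have hij := LinearMap.congr_fun (he i j) w
  rw [Ring.lie_def, LinearMap.sub_apply, Module.End.mul_apply, Module.End.mul_apply,
    LinearMap.smul_apply] at hij
  rw [← hij, add_sub_cancel]

theorem IsWittHighestVector.apply_neg_ne_zero [CharZero k] (hv : IsWittHighestVector e h v)
    (he : IsWittLine e) (hh : h ≠ 0) {j : ℤ} (hj : 1 ≤ j) : e (-j) v ≠ 0 := by
  intro hz
  have hlie := he.apply_apply j (-j) v
  rw [hz, hv.apply_pos j hj, add_neg_cancel, hv.apply_zero, map_zero, map_zero, zero_add,
    smul_smul] at hlie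
  have hprod := (smul_eq_zero.1 hlie.symm).resolve_right hv.ne_zero
  have hcoeff : ((-j : ℤ) : k) - j ≠ 0 := by
    exact_mod_cast (by omega : -j - j ≠ 0)
  exact mul_ne_zero hcoeff hh hprod

theorem IsWittHighestVector.raise_lower_lower (hv : IsWittHighestVector e h v)
    (he : IsWittLine e) {m i j : ℤ} (hij : i + j < m) (hjm : j < m) :
    e (m - j) (e (-i) (e (-(m - i)) v)) =
      ((((i + m : ℤ) : k) - j) * (((2 * m - 2 * i : ℤ) : k) - j)) • e (-j) v
        - (2 * m - j - i : k) • e (-i) (e (i - j) v) := by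
  have h₁ := he.apply_apply (m - j) (-(m - i)) v
  have h₂ := he.apply_apply (m - j + -i) (-(m - i)) v
  rw [hv.apply_pos (m - j) (by omega), map_zero, zero_add] at h₁
  rw [hv.apply_pos (m - j + -i) (by omega), map_zero, zero_add] at h₂
  rw [he.apply_apply, h₁, h₂, map_smul, show m - j + -(m - i) = i - j by ring,
    show m - j + -i + -(m - i) = -j by ring]
  push_cast
  module

theorem sum_mul_sub_mul_sub_eq_zero [CharZero k] {ι : Type*} {s : Finset ι} {c α β : ι → k}
    (hzero : ∀ j : ℤ, 1 ≤ j → j ≤ 3 → ∑ i ∈ s, c i * ((α i - j) * (β i - j)) = 0) (x : k) :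
    ∑ i ∈ s, c i * ((α i - x) * (β i - x)) = 0 := by
  have h₁ := hzero 1 le_rfl (by norm_num)
  have h₂ := hzero 2 (by norm_num) (by norm_num)
  have h₃ := hzero 3 (by norm_num) le_rfl
  -- Lagrange interpolation at the nodes `1, 2, 3`
  calc ∑ i ∈ s, c i * ((α i - x) * (β i - x))
      = (x - 2) * (x - 3) / 2 * ∑ i ∈ s, c i * ((α i - (1 : ℤ)) * (β i - (1 : ℤ)))
        - (x - 1) * (x - 3) * ∑ i ∈ s, c i * ((α i - (2 : ℤ)) * (β i - (2 : ℤ)))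
        + (x - 1) * (x - 2) / 2 * ∑ i ∈ s, c i * ((α i - (3 : ℤ)) * (β i - (3 : ℤ))) := by
        simp only [Finset.mul_sum, ← Finset.sum_sub_distrib, ← Finset.sum_add_distrib]
        refine Finset.sum_congr rfl fun i _ => ?_
        push_cast
        ring
    _ = 0 := by rw [h₁, h₂, h₃]; ring

theorem IsWittHighestVector.sum_smul_apply_neg (hv : IsWittHighestVector e h v)
    (he : IsWittLine e) {m j : ℤ} {s : Finset ℤ} {c : ℤ → k}
    (hc : ∑ i ∈ s, c i • e (-i) (e (-(m - i)) v) = 0) (hs : ∀ i ∈ s, i + j < m) (hjm : j < m) :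
    (∑ i ∈ s, c i * ((((i + m : ℤ) : k) - j) * (((2 * m - 2 * i : ℤ) : k) - j))) • e (-j) v =
      ∑ i ∈ s, (c i * (2 * m - j - i)) • e (-i) (e (i - j) v) := by
  have hraise := congrArg (e (m - j)) hc
  rw [map_sum, map_zero] at hraise
  rw [Finset.sum_smul, ← sub_eq_zero, ← Finset.sum_sub_distrib, ← hraise]
  refine Finset.sum_congr rfl fun i hi => ?_
  rw [map_smul, hv.raise_lower_lower he (hs i hi) hjm, smul_sub, smul_smul, smul_smul]

/- For `j = 1, 2, 3` only the multiple of `e (-j) v` survives in `sum_smul_apply_neg`, and its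
coefficient is quadratic in `j`. -/
theorem IsWittHighestVector.sum_mul_eq_zero [CharZero k] (hv : IsWittHighestVector e h v)
    (he : IsWittLine e) (hh : h ≠ 0) {d m : ℤ} (hm : 2 * (d + 5) ≤ m) {c : ℤ → k}
    (hc : ∑ i ∈ Finset.Icc 4 (d + 4), c i • e (-i) (e (-(m - i)) v) = 0) (x : k) :
    ∑ i ∈ Finset.Icc 4 (d + 4),
      c i * ((((i + m : ℤ) : k) - x) * (((2 * m - 2 * i : ℤ) : k) - x)) = 0 := by
  rcases lt_or_ge d 0 with hd | hd
  · simp [Finset.Icc_eq_empty (show ¬ 4 ≤ d + 4 by omega)]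
  refine sum_mul_sub_mul_sub_eq_zero (fun j hj₁ hj₃ => ?_) x
  have hrel := hv.sum_smul_apply_neg he hc (j := j)
    (fun i hi => by rw [Finset.mem_Icc] at hi; omega) (by omega)
  have hright : ∀ i ∈ Finset.Icc 4 (d + 4),
      (c i * (2 * m - j - i)) • e (-i) (e (i - j) v) = 0 := by
    intro i hi
    rw [Finset.mem_Icc] at hi
    rw [hv.apply_pos _ (by omega), map_zero, smul_zero]
  rw [Finset.sum_eq_zero hright] at hrel
  exact (smul_eq_zero.1 hrel).resolve_right (hv.apply_neg_ne_zero he hh hj₁)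

theorem IsWittHighestVector.linearIndepOn_lower_lower [CharZero k]
    (hv : IsWittHighestVector e h v) (he : IsWittLine e) (hh : h ≠ 0) {d m : ℤ}
    (hm : 2 * (d + 5) ≤ m) :
    LinearIndepOn k (fun i : ℤ => e (-i) (e (-(m - i)) v)) (Finset.Icc 4 (d + 4)) := by
  rw [linearIndepOn_finset_iff]
  intro c hc
  have htriangular : ∀ N : ℕ, ∀ i ∈ Finset.Icc 4 (d + 4), i.toNat = N → c i = 0 := by
    intro N
    induction N using Nat.strong_induction_on with
    | _ N ih =>
      intro i hi hiN
      have hi' := Finset.mem_Icc.1 hi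
      have hrel := hv.sum_smul_apply_neg he hc (j := i)
        (fun l hl => by rw [Finset.mem_Icc] at hl; omega) (by omega)
      rw [hv.sum_mul_eq_zero he hh hm hc, zero_smul, Finset.sum_eq_single_of_mem i hi] at hrel
      · rw [sub_self, hv.apply_zero, map_smul, smul_smul] at hrel
        have hprod := (smul_eq_zero.1 hrel.symm).resolve_right
          (hv.apply_neg_ne_zero he hh (by omega))
        have hne : (2 * m - i - i : k) ≠ 0 := by
          exact_mod_cast (by omega : 2 * m - i - i ≠ 0)
        simpa only [mul_eq_zero, hne, hh, or_false] using hprod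
      · intro j hj hji
        have hj' := Finset.mem_Icc.1 hj
        rcases hji.lt_or_gt with hlt | hgt
        · rw [ih j.toNat (by omega) j hj rfl, zero_mul, zero_smul]
        · rw [hv.apply_pos _ (by omega), map_zero, smul_zero]
  exact fun i hi => htriangular _ i hi rfl

theorem IsWittHighestVector.lt_finrank [CharZero k] (hv : IsWittHighestVector e h v)
    (he : IsWittLine e) (hh : h ≠ 0) {d : ℕ} {m : ℤ} (hm : 2 * (d + 5) ≤ m)
    {W : Submodule k V} [FiniteDimensional k W]
    (hW : ∀ i j : ℤ, i + j = m → e (-i) (e (-j) v) ∈ W) : d < Module.finrank k W := by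
  have hind : LinearIndependent k fun i : Finset.Icc (4 : ℤ) (d + 4) =>
      (⟨_, hW i (m - i) (add_sub_cancel _ _)⟩ : W) :=
    LinearIndependent.of_comp W.subtype (hv.linearIndepOn_lower_lower he hh hm)
  have hcard := hind.fintype_card_le_finrank
  rw [Fintype.card_coe, Int.card_Icc] at hcard
  omega

end WittLine

/-! ### Nilpotency and derivations -/

section Derivation

variable {k C : Type*} [Field k] [CommRing C] [Algebra k C]

theorem isNilpotent_smul_iff {A : Type*} [Semiring A] [Algebra k A] {c : k} (hc : c ≠ 0) {x : A} :
    IsNilpotent (c • x) ↔ IsNilpotent x :=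
  ⟨fun h => inv_smul_smul₀ hc x ▸ h.smul c⁻¹, fun h => h.smul c⟩

variable [CharZero k]

theorem isNilpotent_derivation_of_pow_mul_pow_eq_zero (δ : Derivation k C C) {x : C} {m q : ℕ}
    (h : x ^ m * δ x ^ q = 0) : IsNilpotent (δ x) := by
  induction m generalizing q with
  | zero => exact ⟨q, by simpa using h⟩
  | succ m ih =>
    have hδ := congrArg δ h
    rw [Derivation.leibniz, Derivation.leibniz_pow, Derivation.leibniz_pow, map_zero] at hδ
    simp only [smul_eq_mul, nsmul_eq_mul, Nat.add_sub_cancel] at hδ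
    have hsmul : ((m + 1 : ℕ) : k) • (x ^ m * δ x ^ (q + 2)) = 0 := by
      rw [Algebra.smul_def, map_natCast]
      rcases q with _ | q
      · simp only [pow_zero, Nat.cast_zero, zero_mul, mul_zero, zero_add, one_mul] at hδ
        linear_combination δ x * hδ
      · simp only [Nat.add_sub_cancel] at hδ
        linear_combination δ x * hδ - ((q + 1 : ℕ) : C) * δ (δ x) * h
    exact ih ((smul_eq_zero.1 hsmul).resolve_left (Nat.cast_ne_zero.2 m.succ_ne_zero))

theorem isNilpotent_derivation (δ : Derivation k C C) {x : C} (hx : IsNilpotent x) :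
    IsNilpotent (δ x) := by
  obtain ⟨m, hm⟩ := hx
  exact isNilpotent_derivation_of_pow_mul_pow_eq_zero δ (q := 0) (by rw [hm, zero_mul])

theorem pow_succ_dvd_pow_mul_prod_derivation {ι : Type*} (δ : ι → Derivation k C C) {x : C}
    {K m : ℕ} (hx : x ^ K = 0) (l : List ι) (hm : m + l.length = K) :
    x ^ (m + 1) ∣ x ^ m * (l.map fun i => δ i x).prod := by
  induction l generalizing m with
  | nil =>
    rw [List.length_nil, add_zero] at hm
    rw [hm, hx, zero_mul]
    exact dvd_zero _
  | cons i l ih =>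
    rw [List.length_cons] at hm
    obtain ⟨Q, hQ⟩ := ih (m := m + 1) (by omega)
    rw [List.map_cons, List.prod_cons]
    set P := (l.map fun i => δ i x).prod
    have hδ := congrArg (δ i) hQ
    rw [Derivation.leibniz, Derivation.leibniz, Derivation.leibniz_pow,
      Derivation.leibniz_pow] at hδ
    simp only [smul_eq_mul, nsmul_eq_mul, Nat.add_sub_cancel] at hδ
    have hsmul : ((m + 1 : ℕ) : k) • (x ^ m * (δ i x * P)) =
        x ^ (m + 1) * (x * δ i Q + ((m + 1 + 1 : ℕ) : C) * δ i x * Q - δ i P) := by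
      rw [Algebra.smul_def, map_natCast]
      linear_combination hδ
    rw [← inv_smul_smul₀ (Nat.cast_ne_zero.2 m.succ_ne_zero : ((m + 1 : ℕ) : k) ≠ 0)
      (x ^ m * _), hsmul, ← mul_smul_comm]
    exact dvd_mul_right _ _

theorem exists_ne_zero_forall_smul_eq_zero {R M ι : Type*} [Monoid R] [Zero M] [Nontrivial M]
    [MulAction R M] (y : ι → R) {K : ℕ}
    (h : ∀ l : List ι, l.length = K → ∀ w : M, (l.map y).prod • w = 0) :
    ∃ v : M, v ≠ 0 ∧ ∀ i, y i • v = 0 := by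
  induction K with
  | zero =>
    obtain ⟨w, hw⟩ := exists_ne (0 : M)
    exact absurd (by simpa using h [] rfl w) hw
  | succ K ih =>
    by_cases hK : ∀ l : List ι, l.length = K → ∀ w : M, (l.map y).prod • w = 0
    · exact ih hK
    · push Not at hK
      obtain ⟨l, hl, w, hw⟩ := hK
      refine ⟨_, hw, fun i => ?_⟩
      simpa [mul_smul] using h (i :: l) (by rw [List.length_cons, hl]) w

theorem exists_ne_zero_smul_eq_zero_of_isNilpotent {R M : Type*} [Semiring R] [AddCommMonoid M]
    [Nontrivial M] [Module R M] {x : R} (hx : IsNilpotent x) : ∃ v : M, v ≠ 0 ∧ x • v = 0 := by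
  obtain ⟨K, hK⟩ := hx
  obtain ⟨v, hv, hxv⟩ := exists_ne_zero_forall_smul_eq_zero (M := M) (fun _ : Unit => x) (K := K)
    (fun l hl w => by simp [hl, hK])
  exact ⟨v, hv, hxv ()⟩

/- On the `T`-torsion the divisibility of `pow_succ_dvd_pow_mul_prod_derivation` (with `m = 0`)
says that all long enough products of the `δ i x` vanish. -/
theorem exists_ne_zero_derivation_smul_eq_zero {M ι : Type*} [AddCommGroup M] [Module C M]
    (δ : ι → Derivation k C C) {x : C} (hx : IsNilpotent x) {T : Set C} (hxT : x ∈ T) {v : M}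
    (hv : v ≠ 0) (hvT : ∀ t ∈ T, t • v = 0) :
    ∃ w : M, w ≠ 0 ∧ (∀ t ∈ T, t • w = 0) ∧ ∀ i, δ i x • w = 0 := by
  let N := Submodule.torsionBySet C M T
  have : Nontrivial N :=
    ⟨⟨⟨v, (Submodule.mem_torsionBySet_iff _ _).2 fun t => hvT t t.2⟩, 0,
      fun h => hv (congrArg Subtype.val h)⟩⟩
  obtain ⟨K, hK⟩ := hx
  obtain ⟨w, hw, hδw⟩ := exists_ne_zero_forall_smul_eq_zero (M := N) (fun i => δ i x) (K := K) (by
    intro l hl w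
    obtain ⟨Q, hQ⟩ := pow_succ_dvd_pow_mul_prod_derivation δ hK l (m := 0) (by rw [zero_add, hl])
    rw [pow_zero, one_mul, zero_add, pow_one] at hQ
    rw [hQ, mul_comm, mul_smul, show x • w = 0 from
      Subtype.ext ((Submodule.mem_torsionBySet_iff _ _).1 w.2 ⟨x, hxT⟩), smul_zero])
  refine ⟨w, fun h => hw (Subtype.ext h),
    fun t ht => (Submodule.mem_torsionBySet_iff _ _).1 w.2 ⟨t, ht⟩, fun i => ?_⟩
  rw [← Submodule.coe_smul, hδw, Submodule.coe_zero]

section GradedFamily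

variable {G : Type*} [AddCommGroup G] {p : G →+ k} {δ : G → Derivation k C C} {y : G → C} {z : G}

theorem isNilpotent_mul_of_isNilpotent_add_mul (hδ : ∀ r m, δ r (y m) = p m • y (r + m))
    (hz : p z ≠ 0) (hnil : IsNilpotent (y (z + z) * y (-z))) : IsNilpotent (y z * y (-z)) := by
  have hder := isNilpotent_derivation (δ (-z)) hnil
  rw [Derivation.leibniz, hδ, hδ, neg_add_cancel_left, map_neg, map_add, smul_eq_mul,
    smul_eq_mul, mul_smul_comm, mul_smul_comm] at hder
  have hsq : (2 * p z) • (y z * y (-z)) ^ 2 =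
      (y z * y (-z)) * (-p z • (y (z + z) * y (-z + -z)) + (p z + p z) • (y (-z) * y z)) +
        p z • (y (-z + -z) * y z) * (y (z + z) * y (-z)) := by
    simp only [Algebra.smul_def, map_neg, map_add, map_mul, map_ofNat]
    ring
  refine ((isNilpotent_smul_iff (mul_ne_zero two_ne_zero hz)).1 ?_).of_pow (m := 2)
  rw [hsq]
  exact (Commute.all _ _).isNilpotent_add ((Commute.all _ _).isNilpotent_mul_left hder)
    ((Commute.all _ _).isNilpotent_mul_left hnil)

theorem isNilpotent_of_isNilpotent_mul (hδ : ∀ r m, δ r (y m) = p m • y (r + m)) (hz : p z ≠ 0)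
    (hnil : IsNilpotent (y z * y (-z)))
    (hnil' : IsNilpotent (y (z + (z + z)) * y (-z))) : IsNilpotent (y z) := by
  have hder := isNilpotent_derivation (δ (z + z)) hnil
  rw [Derivation.leibniz, hδ, hδ, add_neg_cancel_right, smul_eq_mul, smul_eq_mul, mul_smul_comm,
    mul_smul_comm, map_neg, add_assoc] at hder
  have hsq : p z • y z ^ 2 = -(-p z • (y z * y z) + p z • (y (-z) * y (z + (z + z)))) +
      p z • (y (z + (z + z)) * y (-z)) := by
    simp only [Algebra.smul_def, map_neg]
    ring
  refine ((isNilpotent_smul_iff hz).1 ?_).of_pow (m := 2)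
  rw [hsq]
  exact (Commute.all _ _).isNilpotent_add hder.neg (hnil'.smul _)

theorem isNilpotent_of_isNilpotent_mul_sub (hδ : ∀ r m, δ r (y m) = p m • y (r + m))
    (hy : y 0 = 0) (hz : p z ≠ 0) {χ : k}
    (hnil : IsNilpotent (y z * y (-z) - algebraMap k C χ)) : IsNilpotent (y z) := by
  have htwo : IsNilpotent (y (z + z) * y (-z)) := by
    have hder := isNilpotent_derivation (δ z) hnil
    rw [map_sub, Derivation.map_algebraMap, sub_zero, Derivation.leibniz, hδ, hδ, add_neg_cancel,
      hy, smul_zero, smul_zero, zero_add, smul_eq_mul, mul_smul_comm, mul_comm] at hder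
    exact (isNilpotent_smul_iff hz).1 hder
  have hthree : IsNilpotent (y (z + (z + z)) * y (-z)) := by
    have hder := isNilpotent_derivation (δ z) htwo
    rw [Derivation.leibniz, hδ, hδ, add_neg_cancel, hy, smul_zero, smul_zero, zero_add,
      smul_eq_mul, mul_smul_comm, mul_comm, map_add, ← two_mul] at hder
    exact (isNilpotent_smul_iff (mul_ne_zero two_ne_zero hz)).1 hder
  exact isNilpotent_of_isNilpotent_mul hδ hz (isNilpotent_mul_of_isNilpotent_add_mul hδ hz htwo)
    hthree

end GradedFamily

end Derivation

section CommutatorAction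

variable {k A : Type*} [CommRing k] [Ring A] [Algebra k A]

theorem lie_add_eq (l x y : A) : ⁅l, x + y⁆ = ⁅l, x⁆ + ⁅l, y⁆ := by
  simp only [Ring.lie_def]
  noncomm_ring

theorem lie_mul_eq (l x y : A) : ⁅l, x * y⁆ = ⁅l, x⁆ * y + x * ⁅l, y⁆ := by
  simp only [Ring.lie_def]
  noncomm_ring

theorem lie_algebraMap_eq_zero (l : A) (c : k) : ⁅l, algebraMap k A c⁆ = 0 := by
  rw [Ring.lie_def, ← Algebra.commutes c l, sub_self]

theorem lie_sub_algebraMap (l x : A) (c : k) : ⁅l, x - algebraMap k A c⁆ = ⁅l, x⁆ := by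
  have h := lie_add_eq l (x - algebraMap k A c) (algebraMap k A c)
  rw [sub_add_cancel, lie_algebraMap_eq_zero, add_zero] at h
  exact h.symm

theorem lie_mem_adjoin {l : A} {s : Set A} (hl : ∀ x ∈ s, ⁅l, x⁆ ∈ Algebra.adjoin k s) {x : A}
    (hx : x ∈ Algebra.adjoin k s) : ⁅l, x⁆ ∈ Algebra.adjoin k s := by
  induction hx using Algebra.adjoin_induction with
  | mem x hx => exact hl x hx
  | algebraMap c =>
    rw [lie_algebraMap_eq_zero]
    exact zero_mem _
  | add x y _ _ hx hy =>
    rw [lie_add_eq]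
    exact add_mem hx hy
  | mul x y hx' hy' hx hy =>
    rw [lie_mul_eq]
    exact add_mem (mul_mem hx hy') (mul_mem hx' hy)

open scoped IsMulCommutative in
/-- The derivation `⁅l, ·⁆` of a commutative subalgebra normalised by `l`. -/
def adDerivation (𝒜 : Subalgebra k A) [IsMulCommutative 𝒜] {l : A} (hl : ∀ x ∈ 𝒜, ⁅l, x⁆ ∈ 𝒜) :
    Derivation k 𝒜 𝒜 :=
  Derivation.mk'
    { toFun := fun x => ⟨⁅l, (x : A)⁆, hl x x.2⟩
      map_add' := fun x y => Subtype.ext (lie_add_eq l (x : A) y)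
      map_smul' := fun c x => Subtype.ext (by simp [Ring.lie_def, smul_sub]) }
    fun x y => Subtype.ext (by
      rw [smul_eq_mul, smul_eq_mul, mul_comm y]
      exact (lie_mul_eq l (x : A) y).trans (add_comm _ _))

theorem lie_pow_of_commute {l x : A} (h : Commute x ⁅l, x⁆) (m : ℕ) :
    ⁅l, x ^ (m + 1)⁆ = (m + 1) • (x ^ m * ⁅l, x⁆) := by
  induction m with
  | zero => simp
  | succ m ih =>
    rw [pow_succ, lie_mul_eq, ih, succ_nsmul _ (m + 1), smul_mul_assoc, mul_assoc, ← h.eq,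
      ← mul_assoc, ← pow_succ]

end CommutatorAction

theorem mapsTo_maxGenEigenspace_of_commute_lie {k V : Type*} [CommRing k] [AddCommGroup V]
    [Module k V] {l x : Module.End k V} (h : Commute x ⁅l, x⁆) (χ : k) :
    Set.MapsTo l (x.maxGenEigenspace χ) (x.maxGenEigenspace χ) := by
  set y := x - χ • 1 with hy
  have hly : ⁅l, y⁆ = ⁅l, x⁆ := by
    rw [hy, ← Algebra.algebraMap_eq_smul_one, lie_sub_algebraMap]
  have hcomm : Commute y ⁅l, y⁆ := by
    rw [hly]
    exact h.sub_left ((Commute.one_left _).smul_left χ)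
  intro v hv
  obtain ⟨m, hm⟩ := (Module.End.mem_maxGenEigenspace _ _ _).1 hv
  refine (Module.End.mem_maxGenEigenspace _ _ _).2 ⟨m + 1, ?_⟩
  rw [← hy] at hm ⊢
  have hsucc : (y ^ (m + 1)) v = 0 := by rw [pow_succ', Module.End.mul_apply, hm, map_zero]
  have hlie := LinearMap.congr_fun (lie_pow_of_commute hcomm m) v
  rw [(hcomm.pow_left m).eq, Ring.lie_def] at hlie
  simpa [hm, hsucc] using hlie

theorem inf_maxGenEigenspace_le_genEigenspace_finrank {k V : Type*} [Field k] [AddCommGroup V]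
    [Module k V] {x : Module.End k V} {W : Submodule k V} [FiniteDimensional k W]
    (hx : ∀ w ∈ W, x w ∈ W) (χ : k) :
    W ⊓ x.maxGenEigenspace χ ≤ x.genEigenspace χ (Module.finrank k W) := by
  rintro w ⟨hw, hχ⟩
  have hmem : (⟨w, hw⟩ : W) ∈ Module.End.genEigenspace (x.restrict hx) χ ⊤ := by
    rw [Module.End.genEigenspace_restrict]
    exact hχ
  have hle := Module.End.genEigenspace_le_genEigenspace_finrank _ _ _ hmem
  rw [Module.End.genEigenspace_restrict] at hle
  exact hle

section CommutativeSubalgebra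

open scoped IsMulCommutative

variable {k A : Type*} [Field k] [CharZero k] [Ring A] [Algebra k A] {𝒜 : Subalgebra k A}
  [IsMulCommutative 𝒜]

theorem isNilpotent_lie {l x : A} (hl : ∀ y ∈ 𝒜, ⁅l, y⁆ ∈ 𝒜) (hx : x ∈ 𝒜)
    (hnil : IsNilpotent x) : IsNilpotent ⁅l, x⁆ := by
  lift x to 𝒜 using hx
  exact (isNilpotent_derivation (adDerivation 𝒜 hl)
    ((IsNilpotent.map_iff (f := 𝒜.val) Subtype.val_injective).1 hnil)).map 𝒜.val

theorem isNilpotent_of_isNilpotent_lie_mul_sub {G : Type*} [AddCommGroup G] {p : G →+ k}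
    {l y : G → A} {z : G} {χ : k} (hl : ∀ r, ∀ x ∈ 𝒜, ⁅l r, x⁆ ∈ 𝒜) (hy : ∀ m, y m ∈ 𝒜)
    (hlie : ∀ r m, ⁅l r, y m⁆ = p m • y (r + m)) (h₀ : y 0 = 0) (hz : p z ≠ 0)
    (hnil : IsNilpotent (y z * y (-z) - algebraMap k A χ)) : IsNilpotent (y z) := by
  lift y to G → 𝒜 using hy
  refine (isNilpotent_of_isNilpotent_mul_sub (δ := fun r => adDerivation 𝒜 (hl r))
    (fun r m => Subtype.ext (hlie r m)) (Subtype.ext h₀) hz (χ := χ) ?_).map 𝒜.val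
  exact (IsNilpotent.map_iff (f := 𝒜.val) Subtype.val_injective).1 hnil

theorem exists_ne_zero_lie_apply_eq_zero {V : Type*} [AddCommGroup V] [Module k V]
    {𝒜 : Subalgebra k (Module.End k V)} [IsMulCommutative 𝒜] {x : Module.End k V}
    (hnil : IsNilpotent x) {T : Set (Module.End k V)} (hT : T ⊆ 𝒜) (hxT : x ∈ T) {v : V}
    (hv : v ≠ 0) (hvT : ∀ t ∈ T, t v = 0) :
    ∃ w, w ≠ 0 ∧ (∀ t ∈ T, t w = 0) ∧
      ∀ l : Module.End k V, (∀ y ∈ 𝒜, ⁅l, y⁆ ∈ 𝒜) → ⁅l, x⁆ w = 0 := by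
  lift x to 𝒜 using hT hxT
  obtain ⟨w, hw, hTw, hδ⟩ := exists_ne_zero_derivation_smul_eq_zero
    (δ := fun l : {l : Module.End k V // ∀ y ∈ 𝒜, ⁅l, y⁆ ∈ 𝒜} => adDerivation 𝒜 l.2)
    ((IsNilpotent.map_iff (f := 𝒜.val) Subtype.val_injective).1 hnil)
    (T := Subtype.val ⁻¹' T) hxT hv fun t ht => hvT t ht
  exact ⟨w, hw, fun t ht => hTw ⟨t, hT ht⟩ ht, fun l hl => hδ ⟨l, hl⟩⟩

end CommutativeSubalgebra

/-! ### Graded representations -/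

/-- A representation `X r u b` of the Lie algebra spanned by symbols `u tʳ ⊗ b`
(`u ∈ U`, `r ∈ G`, `b ∈ B`) with bracket determined by a pairing `p` of `U` with `G`. Both
`Wₙ ⋉ (S ⊗ Aₙ)` (with `U = ℂⁿ × S`) and its homogeneous subalgebras have this shape. The vector
`u₀` is generic: it pairs non-trivially with every non-zero degree. -/
structure GradedRep (G U B V : Type*) [AddCommGroup G] [AddCommGroup U] [Module ℂ U]
    [CommRing B] [Algebra ℂ B] [AddCommGroup V] [Module ℂ V] where
  p : U →ₗ[ℂ] (G →+ ℂ)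
  X : G → U →ₗ[ℂ] B →ₗ[ℂ] Module.End ℂ V
  lie_X : ∀ r u b s v c,
    ⁅X r u b, X s v c⁆ = X (r + s) (p u s • v - p v r • u) (b * c)
  u₀ : U
  p_u₀_ne_zero : ∀ {x}, x ≠ 0 → p u₀ x ≠ 0

namespace GradedRep

variable {G U B V : Type*} [AddCommGroup G] [AddCommGroup U] [Module ℂ U]
  [CommRing B] [Algebra ℂ B] [AddCommGroup V] [Module ℂ V] (ρ : GradedRep G U B V)

theorem lie_X_self (r s : G) (u : U) (b c : B) :
    ⁅ρ.X r u b, ρ.X s u c⁆ = ρ.p u (s - r) • ρ.X (r + s) u (b * c) := by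
  rw [ρ.lie_X, ← sub_smul, ← map_sub, map_smul, LinearMap.smul_apply]

theorem X_X_apply (r : G) (u : U) (b : B) (s : G) (v : U) (c : B) (w : V) :
    ρ.X r u b (ρ.X s v c w) =
      ρ.X s v c (ρ.X r u b w) + ρ.X (r + s) (ρ.p u s • v - ρ.p v r • u) (b * c) w := by
  have h := LinearMap.congr_fun (ρ.lie_X r u b s v c) w
  rw [Ring.lie_def, LinearMap.sub_apply, Module.End.mul_apply, Module.End.mul_apply] at h
  rw [← h, add_sub_cancel]

theorem X_p_smul_sub_apply_eq_zero {r s : G} {u v : U} {b c : B} {w : V}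
    (hr : ρ.X r u b w = 0) (hs : ρ.X s v c w = 0) :
    ρ.X (r + s) (ρ.p u s • v - ρ.p v r • u) (b * c) w = 0 := by
  have h := ρ.X_X_apply r u b s v c w
  rwa [hs, hr, map_zero, map_zero, zero_add, eq_comm] at h

theorem zsmul_ne_zero (ρ : GradedRep G U B V) {k : ℤ} (hk : k ≠ 0) {x : G} (hx : x ≠ 0) :
    k • x ≠ 0 := by
  intro h
  have hp := congrArg (ρ.p ρ.u₀) h
  rw [map_zsmul, map_zero, zsmul_eq_mul] at hp
  exact mul_ne_zero (Int.cast_ne_zero.2 hk) (ρ.p_u₀_ne_zero hx) hp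

theorem ne_neg (ρ : GradedRep G U B V) {x : G} (hx : x ≠ 0) : x ≠ -x := by
  rw [Ne, eq_neg_iff_add_eq_zero, ← two_zsmul]
  exact ρ.zsmul_ne_zero two_ne_zero hx

theorem X_add_apply_eq_zero {x y : G} (hxy : x ≠ y) {b c : B} {w : V}
    (hx : ∀ u, ρ.X x u b w = 0) (hy : ∀ u, ρ.X y u c w = 0) (u : U) :
    ρ.X (x + y) u (b * c) w = 0 := by
  have hgen : ∀ v, ρ.p v (y - x) ≠ 0 → ρ.X (x + y) v (b * c) w = 0 := by
    intro v hv
    have h := ρ.X_p_smul_sub_apply_eq_zero (hx v) (hy v)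
    rw [← sub_smul, ← map_sub, map_smul, LinearMap.smul_apply, LinearMap.smul_apply] at h
    exact (smul_eq_zero.1 h).resolve_left hv
  by_cases hu : ρ.p u (y - x) = 0
  · have hu₀ := ρ.p_u₀_ne_zero (sub_ne_zero.2 hxy.symm)
    have hadd := hgen (u + ρ.u₀) (by rwa [map_add, AddMonoidHom.add_apply, hu, zero_add])
    rwa [map_add, LinearMap.add_apply, LinearMap.add_apply, hgen _ hu₀, add_zero] at hadd
  · exact hgen u hu

/-- Submodules stable under the action. -/
def IsInvariant (W : Submodule ℂ V) : Prop := ∀ r u b, ∀ x ∈ W, ρ.X r u b x ∈ W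

/-- Non-triviality of the action. -/
def IsNontrivial : Prop := ∃ r u b, ρ.X r u b ≠ 0

/-- Irreducibility. -/
def IsIrreducible : Prop := Nontrivial V ∧ ∀ W : Submodule ℂ V, ρ.IsInvariant W → W = ⊥ ∨ W = ⊤

/-- Families `Φ` of elements `u ⊗ b` such that the `u tʳ ⊗ b` with `(u, b) ∈ Φ` span an
ideal. -/
def IsIdealFamily (Φ : Set (U × B)) : Prop :=
  ∀ q ∈ Φ, ∀ a x r c, (ρ.p a r • q.1 - ρ.p q.1 x • a, c * q.2) ∈ Φ

/-- The vectors annihilated by all `u tʳ ⊗ b` with `(u, b) ∈ Φ`. -/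
def commonKer (Φ : Set (U × B)) : Submodule ℂ V :=
  ⨅ q ∈ Φ, ⨅ r, LinearMap.ker (ρ.X r q.1 q.2)

/-- The weight space of weight `μ + p(·, g)`. -/
def weightSpace (μ : U → ℂ) (g : G) : Submodule ℂ V :=
  ⨅ u, Module.End.eigenspace (ρ.X 0 u 1) (μ u + ρ.p u g)

/-- The set of all `u ⊗ b c`, for `b` fixed. -/
def multiples (U : Type*) (b : B) : Set (U × B) := {q | b ∣ q.2}

variable {ρ}

theorem IsIrreducible.eq_top (h : ρ.IsIrreducible) {W : Submodule ℂ V} (hW : ρ.IsInvariant W)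
    {v : V} (hv : v ∈ W) (hv₀ : v ≠ 0) : W = ⊤ :=
  (h.2 W hW).resolve_left fun hbot => hv₀ ((Submodule.eq_bot_iff W).1 hbot v hv)

theorem mem_commonKer {Φ : Set (U × B)} {w : V} :
    w ∈ ρ.commonKer Φ ↔ ∀ q ∈ Φ, ∀ r, ρ.X r q.1 q.2 w = 0 := by
  simp only [commonKer, Submodule.mem_iInf, LinearMap.mem_ker]

theorem IsIdealFamily.isInvariant_commonKer {Φ : Set (U × B)} (h : ρ.IsIdealFamily Φ) :
    ρ.IsInvariant (ρ.commonKer Φ) := by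
  intro x a c w hw
  rw [mem_commonKer] at hw ⊢
  intro q hq r
  have hlie := ρ.X_X_apply x a c r q.1 q.2 w
  rwa [hw q hq r, map_zero, hw _ (h q hq a x r c), add_zero, eq_comm] at hlie

theorem IsIdealFamily.X_eq_zero {Φ : Set (U × B)} (h : ρ.IsIdealFamily Φ)
    (hirr : ρ.IsIrreducible) {w : V} (hw : w ≠ 0) (hΦ : ∀ q ∈ Φ, ∀ r, ρ.X r q.1 q.2 w = 0)
    {u : U} {b : B} (hub : (u, b) ∈ Φ) (r : G) : ρ.X r u b = 0 := by
  have htop := hirr.eq_top h.isInvariant_commonKer (mem_commonKer.2 hΦ) hw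
  ext v
  exact mem_commonKer.1 (htop ▸ Submodule.mem_top : v ∈ ρ.commonKer Φ) _ hub r

theorem isIdealFamily_multiples (b : B) : ρ.IsIdealFamily (multiples U b) :=
  fun _ hq _ _ _ c => Dvd.dvd.mul_left hq c

variable {μ : U → ℂ}

theorem mem_weightSpace {g : G} {v : V} :
    v ∈ ρ.weightSpace μ g ↔ ∀ u, ρ.X 0 u 1 v = (μ u + ρ.p u g) • v := by
  simp only [weightSpace, Submodule.mem_iInf, Module.End.mem_eigenspace_iff]

theorem X_mem_weightSpace {g : G} {v : V} (hv : v ∈ ρ.weightSpace μ g) (r : G) (u : U) (b : B) :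
    ρ.X r u b v ∈ ρ.weightSpace μ (g + r) := by
  rw [mem_weightSpace] at hv ⊢
  intro a
  rw [ρ.X_X_apply, hv a]
  simp only [map_zero, zero_smul, sub_zero, one_mul, zero_add, map_smul, map_add,
    LinearMap.smul_apply]
  rw [← add_smul, add_assoc]

theorem X_mem_weightSpace_of_add_eq {g g' : G} {v : V} (hv : v ∈ ρ.weightSpace μ g) (r : G)
    (u : U) (b : B) (h : g + r = g') : ρ.X r u b v ∈ ρ.weightSpace μ g' :=
  h ▸ X_mem_weightSpace hv r u b

theorem weightSpace_le_eigenspace (g : G) :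
    ρ.weightSpace μ g ≤ Module.End.eigenspace (ρ.X 0 ρ.u₀ 1) (μ ρ.u₀ + ρ.p ρ.u₀ g) :=
  iInf_le _ _

theorem weight_injective : Function.Injective fun g => μ ρ.u₀ + ρ.p ρ.u₀ g := by
  intro g g' h
  by_contra hne
  exact ρ.p_u₀_ne_zero (sub_ne_zero.2 hne) (by rw [map_sub, sub_eq_zero, add_left_cancel h])

theorem iSupIndep_weightSpace : iSupIndep (ρ.weightSpace μ) :=
  ((Module.End.eigenspaces_iSupIndep (ρ.X 0 ρ.u₀ 1)).comp
    (weight_injective (ρ := ρ) (μ := μ))).mono weightSpace_le_eigenspace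

theorem iSup_weightSpace (hirr : ρ.IsIrreducible) {g : G} (hg : ρ.weightSpace μ g ≠ ⊥) :
    ⨆ g, ρ.weightSpace μ g = ⊤ := by
  obtain ⟨v, hv, hv₀⟩ := Submodule.exists_mem_ne_zero_of_ne_bot hg
  refine hirr.eq_top (fun r u b x hx => ?_) (Submodule.mem_iSup_of_mem g hv) hv₀
  induction hx using Submodule.iSup_induction' with
  | mem i x hx => exact Submodule.mem_iSup_of_mem _ (X_mem_weightSpace hx r u b)
  | zero => simp
  | add x y _ _ hx hy =>
    rw [map_add]
    exact add_mem hx hy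

theorem eq_zero_of_forall_mem_weightSpace (htop : ⨆ g, ρ.weightSpace μ g = ⊤)
    {T : Module.End ℂ V} (h : ∀ g, ∀ v ∈ ρ.weightSpace μ g, T v = 0) : T = 0 := by
  rw [← LinearMap.ker_eq_top, ← top_le_iff, ← htop]
  exact iSup_le h

theorem lt_finrank_of_line {r g : G} (hr : r ≠ 0) {v : V} (hv : v ≠ 0)
    (hg : v ∈ ρ.weightSpace μ g) (hw : μ ρ.u₀ + ρ.p ρ.u₀ g ≠ 0)
    (hpos : ∀ j : ℤ, 1 ≤ j → ρ.X (j • r) ρ.u₀ 1 v = 0) {d : ℕ} {m : ℤ} (hm : 2 * (d + 5) ≤ m)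
    [FiniteDimensional ℂ (ρ.weightSpace μ (g - m • r))] :
    d < Module.finrank ℂ (ρ.weightSpace μ (g - m • r)) := by
  have hι := ρ.p_u₀_ne_zero hr
  let e : ℤ → Module.End ℂ V := fun j => (ρ.p ρ.u₀ r)⁻¹ • ρ.X (j • r) ρ.u₀ 1
  have he : IsWittLine e := by
    intro i j
    have hlie : ⁅e i, e j⁆ = (ρ.p ρ.u₀ r)⁻¹ • (ρ.p ρ.u₀ r)⁻¹ •
        ⁅ρ.X (i • r) ρ.u₀ 1, ρ.X (j • r) ρ.u₀ 1⁆ := by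
      simp only [e, Ring.lie_def, smul_mul_smul_comm, smul_sub, smul_smul]
    rw [hlie, ρ.lie_X_self, ← sub_smul, ← add_smul, map_zsmul, one_mul, zsmul_eq_mul, smul_smul,
      smul_smul, smul_smul]
    congr 1
    push_cast
    field_simp
  have hv' : IsWittHighestVector e ((ρ.p ρ.u₀ r)⁻¹ * (μ ρ.u₀ + ρ.p ρ.u₀ g)) v :=
    { ne_zero := hv
      apply_pos := fun j hj => by rw [LinearMap.smul_apply, hpos j hj, smul_zero]
      apply_zero := by
        rw [LinearMap.smul_apply, zero_smul, mem_weightSpace.1 hg, smul_smul] }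
  refine hv'.lt_finrank he (mul_ne_zero (inv_ne_zero hι) hw) hm fun i j hij => ?_
  simp only [e, LinearMap.smul_apply, map_smul]
  refine Submodule.smul_mem _ _ (Submodule.smul_mem _ _ ?_)
  refine X_mem_weightSpace_of_add_eq (X_mem_weightSpace hg _ _ _) _ _ _ ?_
  rw [← hij, neg_smul, neg_smul, add_smul]
  abel

variable {G U B V : Type*} [AddCommGroup G] [AddCommGroup U] [Module ℂ U]
  [CommRing B] [Algebra ℂ B] [AddCommGroup V] [Module ℂ V] {ρ : GradedRep G U B V}
  {μ : U → ℂ} {d : ℕ} {Φ : Set (U × B)}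

/-- Irreducible representations with weight spaces of dimension at most `d`. -/
structure BoundedIrreducible (ρ : GradedRep G U B V) (μ : U → ℂ) (d : ℕ) : Prop where
  irreducible : ρ.IsIrreducible
  exists_ne_bot : ∃ g, ρ.weightSpace μ g ≠ ⊥
  finiteDimensional : ∀ g, FiniteDimensional ℂ (ρ.weightSpace μ g)
  finrank_le : ∀ g, Module.finrank ℂ (ρ.weightSpace μ g) ≤ d

/-- The associative algebra of operators generated by the ideal attached to `Φ`. -/
def operatorAlgebra (ρ : GradedRep G U B V) (Φ : Set (U × B)) : Subalgebra ℂ (Module.End ℂ V) :=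
  Algebra.adjoin ℂ {T | ∃ q ∈ Φ, ∃ r, ρ.X r q.1 q.2 = T}

/-- Families whose ideal acts by commuting operators. -/
structure IsAbelianIdealFamily (ρ : GradedRep G U B V) (Φ : Set (U × B)) : Prop where
  isIdealFamily : ρ.IsIdealFamily Φ
  commute : ∀ q ∈ Φ, ∀ q' ∈ Φ, ∀ r r', Commute (ρ.X r q.1 q.2) (ρ.X r' q'.1 q'.2)

theorem X_mem_operatorAlgebra {u : U} {b : B} (h : (u, b) ∈ Φ) (r : G) :
    ρ.X r u b ∈ ρ.operatorAlgebra Φ :=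
  Algebra.subset_adjoin ⟨_, h, r, rfl⟩

theorem IsIdealFamily.lie_mem_operatorAlgebra (hΦ : ρ.IsIdealFamily Φ) (r : G) (u : U) (b : B)
    {x : Module.End ℂ V} (hx : x ∈ ρ.operatorAlgebra Φ) :
    ⁅ρ.X r u b, x⁆ ∈ ρ.operatorAlgebra Φ := by
  refine lie_mem_adjoin ?_ hx
  rintro _ ⟨q, hq, s, rfl⟩
  rw [lie_X]
  exact X_mem_operatorAlgebra (hΦ q hq u r s b) _

theorem IsAbelianIdealFamily.isMulCommutative (hΦ : ρ.IsAbelianIdealFamily Φ) :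
    IsMulCommutative (ρ.operatorAlgebra Φ) := by
  refine Algebra.isMulCommutative_adjoin ℂ ?_
  rintro _ ⟨q, hq, r, rfl⟩ _ ⟨q', hq', r', rfl⟩
  exact (hΦ.commute q hq q' hq' r r').eq

theorem isAbelianIdealFamily_smul {s : U} (hs : ρ.p s = 0) :
    ρ.IsAbelianIdealFamily {q : U × B | ∃ t : ℂ, q.1 = t • s} where
  isIdealFamily := by
    rintro ⟨_, b⟩ ⟨t, rfl⟩ a x r c
    exact ⟨ρ.p a r * t, by simp [hs, smul_smul]⟩
  commute := by
    rintro ⟨_, b⟩ ⟨t, rfl⟩ ⟨_, b'⟩ ⟨t', rfl⟩ r r'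
    rw [commute_iff_lie_eq, lie_X]
    simp [hs]

theorem BoundedIrreducible.exists_isNilpotent_sub (h : ρ.BoundedIrreducible μ d)
    (hΦ : ρ.IsAbelianIdealFamily Φ) {x : Module.End ℂ V} (hxΦ : x ∈ ρ.operatorAlgebra Φ)
    (hx : ∀ g, ∀ v ∈ ρ.weightSpace μ g, x v ∈ ρ.weightSpace μ g) :
    ∃ χ : ℂ, IsNilpotent (x - algebraMap ℂ _ χ) := by
  have := hΦ.isMulCommutative
  obtain ⟨g₀, hg₀⟩ := h.exists_ne_bot
  have := h.finiteDimensional g₀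
  have := Submodule.nontrivial_iff_ne_bot.2 hg₀
  obtain ⟨χ, hχ⟩ := Module.End.exists_eigenvalue (x.restrict (hx g₀))
  obtain ⟨v, hv, hv₀⟩ := hχ.exists_hasEigenvector
  have hxv : x v = χ • (v : V) := congrArg Subtype.val (Module.End.mem_eigenspace_iff.1 hv)
  have htop : x.maxGenEigenspace χ = ⊤ := by
    refine h.irreducible.eq_top (v := (v : V)) (fun r u b => ?_) ?_ (by simpa using hv₀)
    · refine mapsTo_maxGenEigenspace_of_commute_lie ?_ χ
      exact setLike_mul_comm hxΦ (hΦ.isIdealFamily.lie_mem_operatorAlgebra r u b hxΦ)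
    · exact Module.End.mem_maxGenEigenspace _ _ _ |>.2 ⟨1, by simp [hxv]⟩
  refine ⟨χ, d, eq_zero_of_forall_mem_weightSpace (iSup_weightSpace h.irreducible hg₀)
    (μ := μ) fun g w hw => ?_⟩
  have := h.finiteDimensional g
  have hwd := (x.genEigenspace χ).monotone (Nat.cast_le.2 (h.finrank_le g))
    (inf_maxGenEigenspace_le_genEigenspace_finrank (hx g) χ ⟨hw, htop ▸ Submodule.mem_top⟩)
  rwa [Module.End.mem_genEigenspace_nat, LinearMap.mem_ker, ← Algebra.algebraMap_eq_smul_one]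
    at hwd

theorem X_mul_eq_zero [Nontrivial G] {b : B} (hb : ∀ r u, ρ.X r u b = 0) (c : B) (s : G) (u : U) :
    ρ.X s u (c * b) = 0 := by
  obtain ⟨z, hz⟩ := exists_ne (0 : G)
  have hself : ∀ x r : G, x ≠ r → ρ.X (x + r) ρ.u₀ (c * b) = 0 := by
    intro x r hxr
    have h := ρ.lie_X_self x r ρ.u₀ c b
    rw [hb, Ring.lie_def, mul_zero, zero_mul, sub_zero] at h
    exact (smul_eq_zero.1 h.symm).resolve_left (ρ.p_u₀_ne_zero (sub_ne_zero.2 hxr.symm))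
  have hu₀ : ρ.X s ρ.u₀ (c * b) = 0 := by
    by_cases hs : s = 0
    · rw [hs, ← add_neg_cancel z]
      exact hself z (-z) (ρ.ne_neg hz)
    · simpa using hself s 0 hs
  have h := ρ.lie_X (s - z) ρ.u₀ c z u b
  rw [hb, Ring.lie_def, mul_zero, zero_mul, sub_zero, sub_add_cancel, map_sub, map_smul,
    map_smul, LinearMap.sub_apply, LinearMap.smul_apply, LinearMap.smul_apply, hu₀, smul_zero,
    sub_zero] at h
  exact (smul_eq_zero.1 h.symm).resolve_left (ρ.p_u₀_ne_zero hz)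

/-- The ideal of all `b` such that `u tʳ ⊗ b` acts by zero for all `u` and `r`. -/
def annihilator (ρ : GradedRep G U B V) [Nontrivial G] : Ideal B where
  carrier := {b | ∀ r u, ρ.X r u b = 0}
  add_mem' ha hb r u := by rw [map_add, ha, hb, add_zero]
  zero_mem' r u := map_zero _
  smul_mem' c _ hb := X_mul_eq_zero hb c

variable [Nontrivial G]

theorem mem_annihilator {b : B} : b ∈ ρ.annihilator ↔ ∀ r u, ρ.X r u b = 0 := Iff.rfl

theorem IsIrreducible.mem_annihilator (hirr : ρ.IsIrreducible) {b : B} {v : V} (hv : v ≠ 0)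
    (h : ∀ r u c, ρ.X r u (b * c) v = 0) : b ∈ ρ.annihilator := by
  intro r u
  refine (isIdealFamily_multiples b).X_eq_zero hirr hv ?_ (dvd_refl b : (u, b) ∈ multiples U b) r
  rintro ⟨u, _⟩ ⟨c, rfl⟩ r
  exact h r u c

theorem isAbelianIdealFamily_multiples {b : B} (hb : b * b ∈ ρ.annihilator) :
    ρ.IsAbelianIdealFamily (multiples U b) where
  isIdealFamily := isIdealFamily_multiples b
  commute := by
    rintro ⟨u, _⟩ ⟨c, rfl⟩ ⟨v, _⟩ ⟨c', rfl⟩ r r'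
    rw [commute_iff_lie_eq, lie_X, mul_mul_mul_comm]
    exact Ideal.mul_mem_right _ _ hb _ _

theorem BoundedIrreducible.isNilpotent_X (h : ρ.BoundedIrreducible μ d) {b : B}
    (hb : b * b ∈ ρ.annihilator) (r : G) : IsNilpotent (ρ.X r ρ.u₀ b) := by
  have hΦ := isAbelianIdealFamily_multiples hb
  have := hΦ.isMulCommutative
  have hX (r) : ρ.X r ρ.u₀ b ∈ ρ.operatorAlgebra (multiples U b) :=
    X_mem_operatorAlgebra (dvd_refl b) r
  have hlie (x s : G) (hs : IsNilpotent (ρ.X s ρ.u₀ b)) (hne : s ≠ x) :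
      IsNilpotent (ρ.X (x + s) ρ.u₀ b) := by
    have hnil := isNilpotent_lie
      (fun _ => hΦ.isIdealFamily.lie_mem_operatorAlgebra x ρ.u₀ 1) (hX s) hs
    rwa [lie_X_self, one_mul, isNilpotent_smul_iff (ρ.p_u₀_ne_zero (sub_ne_zero.2 hne))] at hnil
  have hne : ∀ z : G, z ≠ 0 → IsNilpotent (ρ.X z ρ.u₀ b) := by
    intro z hz
    obtain ⟨χ, hχ⟩ := h.exists_isNilpotent_sub hΦ (hX 0)
      fun g v hv => X_mem_weightSpace_of_add_eq hv _ _ _ (add_zero g)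
    have hnil := isNilpotent_lie
      (fun _ => hΦ.isIdealFamily.lie_mem_operatorAlgebra z ρ.u₀ 1)
      (sub_mem (hX 0) (Subalgebra.algebraMap_mem _ χ)) hχ
    rwa [lie_sub_algebraMap, lie_X_self, one_mul, add_zero,
      isNilpotent_smul_iff (ρ.p_u₀_ne_zero (sub_ne_zero.2 hz.symm))] at hnil
  by_cases hr : r = 0
  · obtain ⟨z, hz⟩ := exists_ne (0 : G)
    rw [hr, ← add_neg_cancel z]
    exact hlie z (-z) (hne _ (neg_ne_zero.2 hz)) (ρ.ne_neg hz).symm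
  · exact hne r hr

theorem BoundedIrreducible.mem_annihilator_of_sq (h : ρ.BoundedIrreducible μ d) {b : B}
    (hb : b * b ∈ ρ.annihilator) : b ∈ ρ.annihilator := by
  have := h.irreducible.1
  have hΦ := isAbelianIdealFamily_multiples hb
  have := hΦ.isMulCommutative
  have hlie := hΦ.isIdealFamily.lie_mem_operatorAlgebra
  obtain ⟨z, hz⟩ := exists_ne (0 : G)
  obtain ⟨v₀, hv₀, hXv₀⟩ :=
    exists_ne_zero_smul_eq_zero_of_isNilpotent (M := V) (h.isNilpotent_X hb 0)
  obtain ⟨v, hv, -, hlv⟩ := exists_ne_zero_lie_apply_eq_zero (h.isNilpotent_X hb 0)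
    (𝒜 := ρ.operatorAlgebra (multiples U b)) (T := {ρ.X 0 ρ.u₀ b})
    (by simpa using X_mem_operatorAlgebra (dvd_refl b) 0) rfl hv₀ (by simpa using hXv₀)
  have hXv : ∀ r : G, r ≠ 0 → ∀ u c, ρ.X r u (b * c) v = 0 := by
    intro r hr u c
    have hl := hlv _ fun _ => hlie r u c
    rw [lie_X, map_zero, zero_smul, zero_sub, ← neg_smul, map_smul, add_zero,
      LinearMap.smul_apply, LinearMap.smul_apply, mul_comm] at hl
    exact (smul_eq_zero.1 hl).resolve_left (neg_ne_zero.2 (ρ.p_u₀_ne_zero hr))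
  obtain ⟨w, hw, hXw, hlw⟩ := exists_ne_zero_lie_apply_eq_zero (h.isNilpotent_X hb z)
    (𝒜 := ρ.operatorAlgebra (multiples U b))
    (T := {T | ∃ r ≠ (0 : G), ∃ u c, ρ.X r u (b * c) = T})
    (by rintro _ ⟨r, -, u, c, rfl⟩; exact X_mem_operatorAlgebra (dvd_mul_right b c) r)
    ⟨z, hz, ρ.u₀, 1, by rw [mul_one]⟩ hv
    (by rintro _ ⟨r, hr, u, c, rfl⟩; exact hXv r hr u c)
  have hX₀w : ∀ u c, ρ.p u z • ρ.X 0 ρ.u₀ (b * c) w + ρ.p ρ.u₀ z • ρ.X 0 u (b * c) w = 0 := by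
    intro u c
    have hl := hlw _ fun _ => hlie (-z) u c
    rwa [lie_X, map_neg, neg_smul, sub_neg_eq_add, neg_add_cancel, map_add, map_smul, map_smul,
      mul_comm] at hl
  have hp := ρ.p_u₀_ne_zero hz
  have hzero : ∀ c, ρ.X 0 ρ.u₀ (b * c) w = 0 := fun c =>
    (smul_eq_zero.1 ((add_smul _ _ _).trans (hX₀w ρ.u₀ c))).resolve_left (by simpa using hp)
  refine h.irreducible.mem_annihilator hw fun r u c => ?_
  by_cases hr : r = 0
  · have hu := hX₀w u c
    rw [hzero, smul_zero, zero_add] at hu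
    exact hr ▸ (smul_eq_zero.1 hu).resolve_left hp
  · exact hXw _ ⟨r, hr, u, c, rfl⟩

theorem BoundedIrreducible.isRadical_annihilator (h : ρ.BoundedIrreducible μ d) :
    ρ.annihilator.IsRadical := by
  have hpow : ∀ j : ℕ, ∀ b : B, b ^ (2 ^ j) ∈ ρ.annihilator → b ∈ ρ.annihilator := by
    intro j
    induction j with
    | zero => intro b hb; simpa using hb
    | succ j ih =>
      intro b hb
      refine ih b (h.mem_annihilator_of_sq ?_)
      rwa [← pow_add, ← two_mul, ← pow_succ']
  rintro b ⟨k, hb⟩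
  exact hpow k b (Ideal.mem_of_dvd _ (pow_dvd_pow b Nat.lt_two_pow_self.le) hb)

theorem BoundedIrreducible.X_eq_zero_of_X_zero_eq_zero (h : ρ.BoundedIrreducible μ d) {s : U}
    (hs : ρ.p s = 0) (h0 : ρ.X 0 s 1 = 0) (m : G) (b : B) : ρ.X m s b = 0 := by
  have := h.irreducible.1
  obtain ⟨z, hz⟩ := exists_ne (0 : G)
  have hp := ρ.p_u₀_ne_zero hz
  have hΦ := isAbelianIdealFamily_smul (ρ := ρ) hs
  have := hΦ.isMulCommutative
  have hlie := hΦ.isIdealFamily.lie_mem_operatorAlgebra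
  have hsΦ (b : B) : (s, b) ∈ {q : U × B | ∃ t : ℂ, q.1 = t • s} := ⟨1, (one_smul _ s).symm⟩
  have hXΦ (m) := X_mem_operatorAlgebra (ρ := ρ) (hsΦ 1) m
  have hbr (r m : G) (b : B) : ⁅ρ.X r ρ.u₀ b, ρ.X m s 1⁆ = ρ.p ρ.u₀ m • ρ.X (r + m) s b := by
    rw [lie_X, hs, AddMonoidHom.zero_apply, zero_smul, sub_zero, map_smul, mul_one,
      LinearMap.smul_apply]
  obtain ⟨χ, hχ⟩ := h.exists_isNilpotent_sub hΦ (mul_mem (hXΦ z) (hXΦ (-z)))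
    fun g v hv => X_mem_weightSpace_of_add_eq (X_mem_weightSpace hv _ _ _) _ _ _ (by abel)
  have hnil : IsNilpotent (ρ.X z s 1) :=
    isNilpotent_of_isNilpotent_lie_mul_sub (p := ρ.p ρ.u₀) (y := fun m => ρ.X m s 1)
      (fun r _ => hlie r ρ.u₀ 1) hXΦ (fun r m => hbr r m 1) h0 hp hχ
  obtain ⟨v₀, hv₀, hXv₀⟩ := exists_ne_zero_smul_eq_zero_of_isNilpotent (M := V) hnil
  obtain ⟨v, hv, -, hlv⟩ := exists_ne_zero_lie_apply_eq_zero hnil (T := {ρ.X z s 1})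
    (by simpa using hXΦ z) rfl hv₀ (by simpa using hXv₀)
  refine hΦ.isIdealFamily.X_eq_zero h.irreducible hv ?_ (hsΦ b) m
  rintro ⟨_, b⟩ ⟨t, rfl⟩ r
  have hl := hlv _ fun _ => hlie (r - z) ρ.u₀ b
  rw [hbr, sub_add_cancel, LinearMap.smul_apply] at hl
  simp [(smul_eq_zero.1 hl).resolve_left hp]

end GradedRep

/-! ### Single point evaluation of bounded representations -/

section AlgebraicElements

open Polynomial

variable {k C : Type*} [Field k] [CommRing C] [Algebra k C]

theorem exists_eq_X_pow_mul_isCoprime {q : k[X]} (hq : q ≠ 0) :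
    ∃ m ≤ q.natDegree, ∃ h, q = X ^ m * h ∧ IsCoprime X h := by
  obtain ⟨h, hqh, hh⟩ := exists_eq_pow_rootMultiplicity_mul_and_not_dvd q hq 0
  rw [C_0, sub_zero] at hqh hh
  refine ⟨_, ?_, h, hqh, (irreducible_X.coprime_iff_not_dvd).2 hh⟩
  simpa only [natDegree_X_pow] using natDegree_le_of_dvd (Dvd.intro h hqh.symm) hq

theorem pow_mem_of_aeval_mem {I : Ideal C} {a : C} {q : k[X]} (hq : q ≠ 0) (hqa : aeval a q ∈ I)
    {l : ℕ} (hl : a ^ l ∈ I) {K : ℕ} (hK : q.natDegree ≤ K) : a ^ K ∈ I := by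
  obtain ⟨m, hm, h, rfl, hcop⟩ := exists_eq_X_pow_mul_isCoprime hq
  obtain ⟨u, v, huv⟩ := hcop.pow_left (m := l)
  have hone := congrArg (aeval a) huv
  simp only [map_add, map_mul, map_pow, aeval_X, map_one] at hone hqa
  refine Ideal.mem_of_dvd _ (pow_dvd_pow a (hm.trans hK)) ?_
  rw [show a ^ m = aeval a u * a ^ m * a ^ l + aeval a v * (a ^ m * aeval a h) by
    linear_combination (-a ^ m) * hone]
  exact add_mem (Ideal.mul_mem_left _ _ hl) (Ideal.mul_mem_left _ _ hqa)

/-- If `b` is a root of `Xᵐ h` with `u X + v h = 1`, then `u(b) b` is an idempotent fixing `b`. -/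
theorem eq_zero_or_isUnit_of_isAlgebraic [IsReduced C]
    (hidem : ∀ e : C, IsIdempotentElem e → e = 0 ∨ e = 1) {b : C} (hb : IsAlgebraic k b) :
    b = 0 ∨ IsUnit b := by
  obtain ⟨q, hq, hqb⟩ := hb
  obtain ⟨m, -, h, rfl, u, v, huv⟩ := exists_eq_X_pow_mul_isCoprime hq
  have hone := congrArg (aeval b) huv
  simp only [map_add, map_mul, map_pow, aeval_X, map_one] at hone hqb
  have hbh : b * aeval b h = 0 := eq_zero_of_pow_eq_zero (n := m + 1) <| by
    rw [mul_pow]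
    linear_combination b * aeval b h ^ m * hqb
  have hfix : aeval b u * b * b = b := by linear_combination b * hone - aeval b v * hbh
  rcases hidem (aeval b u * b) (by
    rw [IsIdempotentElem]
    linear_combination aeval b u * hfix) with he | he
  · exact Or.inl (by rw [← hfix, he, zero_mul])
  · exact Or.inr (IsUnit.of_mul_eq_one _ ((mul_comm _ _).trans he))

theorem algebraMap_bijective_of_isAlgebraic [IsAlgClosed k] [Nontrivial C] [IsReduced C]
    (hidem : ∀ e : C, IsIdempotentElem e → e = 0 ∨ e = 1) (halg : ∀ b : C, IsAlgebraic k b) :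
    Function.Bijective (algebraMap k C) := by
  have hunit (b : C) := eq_zero_or_isUnit_of_isAlgebraic hidem (halg b)
  have : NoZeroDivisors C :=
    ⟨fun {a b} hab => (hunit a).imp_right fun ha => (ha.mul_right_eq_zero).1 hab⟩
  have : IsDomain C := NoZeroDivisors.to_isDomain C
  have : Algebra.IsIntegral k C := ⟨fun b => (halg b).isIntegral⟩
  exact IsAlgClosed.algebraMap_bijective_of_isIntegral

theorem exists_aeval_mem_ker {M : Type*} [AddCommGroup M] [Module k M] [FiniteDimensional k M]
    {K : ℕ} (hK : Module.finrank k M ≤ K) (f : C →ₗ[k] M) (b : C) :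
    ∃ q : k[X], q ≠ 0 ∧ q.natDegree ≤ K ∧ f (aeval b q) = 0 := by
  let F : degreeLT k (K + 1) →ₗ[k] M :=
    f ∘ₗ (aeval b).toLinearMap ∘ₗ (degreeLT k (K + 1)).subtype
  have hfin : Module.finrank k (degreeLT k (K + 1)) = K + 1 := by
    rw [(degreeLTEquiv k (K + 1)).finrank_eq, Module.finrank_fin_fun]
  have : FiniteDimensional k (degreeLT k (K + 1)) :=
    Module.Finite.equiv (degreeLTEquiv k (K + 1)).symm
  obtain ⟨q, hq, hq₀⟩ := Submodule.exists_mem_ne_zero_of_ne_bot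
    (LinearMap.ker_ne_bot_of_finrank_lt (f := F) (by omega))
  refine ⟨q, Subtype.coe_ne_coe.2 hq₀, Nat.lt_succ_iff.1 ?_, hq⟩
  exact (natDegree_lt_iff_degree_lt (Subtype.coe_ne_coe.2 hq₀)).2 (mem_degreeLT.1 q.2)

theorem card_le_finrank_of_exists_eigenvector {V : Type*} [AddCommGroup V] [Module k V]
    {x : Module.End k V} {W : Submodule k V} [FiniteDimensional k W] {F : Finset k}
    (h : ∀ c ∈ F, ∃ w ∈ W, w ≠ 0 ∧ x w = c • w) : F.card ≤ Module.finrank k W := by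
  choose! w hw hw₀ hxw using h
  have hli := Module.End.eigenvectors_linearIndependent' x (Subtype.val : F → k)
    Subtype.val_injective (fun c => w c)
    fun c => ⟨Module.End.mem_eigenspace_iff.2 (hxw c c.2), hw₀ c c.2⟩
  have hliW : LinearIndependent k fun c : F => (⟨_, hw c c.2⟩ : W) :=
    LinearIndependent.of_comp W.subtype hli
  simpa using hliW.fintype_card_le_finrank

end AlgebraicElements

/-- Pigeonhole: the `(5d + 1)²` pairs `(k, l)` give pairs `(a, b)` with only `4(5d + 1) + 1`
possible sums. -/
theorem exists_lt_card_forall_sub {P : ℤ → ℤ → Prop}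
    (h : ∀ k l : ℕ, 1 ≤ k → 1 ≤ l → ∃ a b, a.natAbs = k ∧ b.natAbs = l ∧ P a b) (d : ℕ) :
    ∃ (s : ℤ) (F : Finset ℤ), d < F.card ∧ ∀ a ∈ F, P a (s - a) := by
  choose! a b ha hb hP using h
  set M := 5 * d + 1 with hM
  have hIcc : ∀ {q}, q ∈ Finset.Icc 1 M ×ˢ Finset.Icc 1 M →
      (1 ≤ q.1 ∧ q.1 ≤ M) ∧ (1 ≤ q.2 ∧ q.2 ≤ M) := by
    intro q hq
    simpa only [Finset.mem_product, Finset.mem_Icc] using hq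
  obtain ⟨s, -, hs⟩ := Finset.exists_lt_card_fiber_of_mul_lt_card_of_maps_to
    (s := Finset.Icc 1 M ×ˢ Finset.Icc 1 M) (t := Finset.Icc (-2 * (M : ℤ)) (2 * M))
    (f := fun q => a q.1 q.2 + b q.1 q.2) (n := d) (by
      intro q hq
      obtain ⟨⟨hk, hkM⟩, hl, hlM⟩ := hIcc hq
      have := ha _ _ hk hl
      have := hb _ _ hk hl
      rw [Finset.mem_Icc]
      omega) (by
      simp only [Finset.card_product, Nat.card_Icc, Int.card_Icc, Nat.add_sub_cancel]
      rw [show (2 * (M : ℤ) + 1 - -2 * (M : ℤ)).toNat = 4 * M + 1 by omega, hM]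
      nlinarith)
  refine ⟨s, Finset.image (fun q : ℕ × ℕ => a q.1 q.2) _,
    hs.trans_eq (Finset.card_image_of_injOn ?_).symm, ?_⟩
  · intro q hq q' hq' haa
    dsimp only at haa
    obtain ⟨hq, hqs⟩ := Finset.mem_filter.1 hq
    obtain ⟨hq', hqs'⟩ := Finset.mem_filter.1 hq'
    obtain ⟨⟨hk, -⟩, hl, -⟩ := hIcc hq
    obtain ⟨⟨hk', -⟩, hl', -⟩ := hIcc hq'
    have hbb : b q.1 q.2 = b q'.1 q'.2 := add_left_cancel ((hqs.trans hqs'.symm).trans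
      (congrArg (· + b q'.1 q'.2) haa.symm))
    exact Prod.ext (by rw [← ha _ _ hk hl, ← ha _ _ hk' hl', haa])
      (by rw [← hb _ _ hk hl, ← hb _ _ hk' hl', hbb])
  · simp only [Finset.mem_image, Finset.mem_filter]
    rintro _ ⟨q, ⟨hq, rfl⟩, rfl⟩
    obtain ⟨⟨hk, -⟩, hl, -⟩ := hIcc hq
    rw [add_sub_cancel_left]
    exact hP _ _ hk hl

theorem one_sub_mul_self_sub_mem {B : Type*} [CommRing B] {e : B} {I : Ideal B}
    (he : e * e - e ∈ I) : (1 - e) * (1 - e) - (1 - e) ∈ I := by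
  rwa [show (1 - e) * (1 - e) - (1 - e) = e * e - e by ring]

namespace GradedRep

variable {G U B V : Type*} [AddCommGroup G] [AddCommGroup U] [Module ℂ U]
  [CommRing B] [Algebra ℂ B] [AddCommGroup V] [Module ℂ V] {ρ : GradedRep G U B V}
  {μ : U → ℂ} {d : ℕ} [Nontrivial G]

theorem X_eq_of_sub_mem_annihilator {b c : B} (h : b - c ∈ ρ.annihilator) (r : G) (u : U) :
    ρ.X r u b = ρ.X r u c := by
  rw [← sub_eq_zero, ← map_sub]
  exact h r u

theorem IsIrreducible.mul_self_mem_annihilator (hirr : ρ.IsIrreducible) {b : B} {v : V}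
    (hv : v ≠ 0) (h : ∀ r : G, r ≠ 0 → ∀ u c, ρ.X r u (b * c) v = 0) :
    b * b ∈ ρ.annihilator := by
  refine hirr.mem_annihilator hv fun r u c => ?_
  rw [mul_assoc]
  by_cases hr : r = 0
  · obtain ⟨z, hz⟩ := exists_ne (0 : G)
    rw [hr, ← add_neg_cancel z]
    refine ρ.X_add_apply_eq_zero (ρ.ne_neg hz) (fun u => ?_) (fun u => ?_) u
    · simpa using h z hz u 1
    · simpa [mul_comm] using h (-z) (neg_ne_zero.2 hz) u c
  · exact h r hr u _

section Idempotents

variable {e : B} {r : G} {u : U} {c : B} {α : ℂ} {v : V}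

theorem X_zero_apply_X_mul (he : e * e - e ∈ ρ.annihilator) (hv : ρ.X 0 ρ.u₀ e v = α • v) :
    ρ.X 0 ρ.u₀ e (ρ.X r u (e * c) v) = (α + ρ.p ρ.u₀ r) • ρ.X r u (e * c) v := by
  have hec : e * (e * c) - e * c ∈ ρ.annihilator := by
    rw [← mul_assoc, ← sub_mul]
    exact Ideal.mul_mem_right _ _ he
  rw [X_X_apply, hv, map_smul, map_zero, zero_smul, sub_zero, map_smul, zero_add, add_smul,
    LinearMap.smul_apply, LinearMap.smul_apply, X_eq_of_sub_mem_annihilator hec]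

theorem X_zero_apply_X_one_sub_mul (he : e * e - e ∈ ρ.annihilator)
    (hv : ρ.X 0 ρ.u₀ e v = α • v) :
    ρ.X 0 ρ.u₀ e (ρ.X r u ((1 - e) * c) v) = α • ρ.X r u ((1 - e) * c) v := by
  have hec : e * ((1 - e) * c) ∈ ρ.annihilator := by
    rw [show e * ((1 - e) * c) = -c * (e * e - e) by ring]
    exact Ideal.mul_mem_left _ _ he
  rw [X_X_apply, hv, mem_annihilator.1 hec, LinearMap.zero_apply, add_zero, map_smul]

theorem X_apply_ne_zero_or_X_neg_apply_ne_zero (he : e * e - e ∈ ρ.annihilator) (hα : α ≠ 0)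
    (hv₀ : v ≠ 0) (hv : ρ.X 0 ρ.u₀ e v = α • v) {x : G} (hx : x ≠ 0) :
    ρ.X x ρ.u₀ e v ≠ 0 ∨ ρ.X (-x) ρ.u₀ e v ≠ 0 := by
  by_contra! hcon
  have h := ρ.X_p_smul_sub_apply_eq_zero hcon.1 hcon.2
  rw [add_neg_cancel, ← sub_smul, map_smul, LinearMap.smul_apply, LinearMap.smul_apply,
    X_eq_of_sub_mem_annihilator he, hv, smul_smul, map_neg] at h
  refine smul_ne_zero (mul_ne_zero ?_ hα) hv₀ h
  rw [← neg_add', neg_ne_zero, ← two_mul]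
  exact mul_ne_zero two_ne_zero (ρ.p_u₀_ne_zero hx)

theorem exists_eigenvector_of_idempotent (he : e * e - e ∈ ρ.annihilator) {g z : G} (hz : z ≠ 0)
    (hv₀ : v ≠ 0) (hg : v ∈ ρ.weightSpace μ g) (hv : ρ.X 0 ρ.u₀ e v = α • v) (hα : α ≠ 0)
    (hα' : α ≠ μ ρ.u₀ + ρ.p ρ.u₀ g) {k l : ℕ} (hk : 1 ≤ k) (hl : 1 ≤ l) :
    ∃ a b : ℤ, a.natAbs = k ∧ b.natAbs = l ∧ ∃ w ∈ ρ.weightSpace μ (g + (a + b) • z),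
      w ≠ 0 ∧ ρ.X 0 ρ.u₀ e w = (α + a * ρ.p ρ.u₀ z) • w := by
  have hsign : ∀ {m : ℕ} (f : B) {w : V}, (ρ.X ((m : ℤ) • z) ρ.u₀ f w ≠ 0 ∨
      ρ.X (-((m : ℤ) • z)) ρ.u₀ f w ≠ 0) → ∃ a : ℤ, a.natAbs = m ∧ ρ.X (a • z) ρ.u₀ f w ≠ 0 := by
    rintro m f w (h | h)
    exacts [⟨m, by simp, h⟩, ⟨-m, by simp, by rwa [neg_smul]⟩]
  have hne : ∀ {m : ℕ}, 1 ≤ m → (m : ℤ) • z ≠ 0 := fun hm => ρ.zsmul_ne_zero (by omega) hz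
  obtain ⟨a, ha, hw₀⟩ := hsign e (X_apply_ne_zero_or_X_neg_apply_ne_zero he hα hv₀ hv (hne hk))
  set w := ρ.X (a • z) ρ.u₀ e v
  have hw : w ∈ ρ.weightSpace μ (g + a • z) := X_mem_weightSpace hg _ _ _
  have hew : ρ.X 0 ρ.u₀ e w = (α + a * ρ.p ρ.u₀ z) • w := by
    have h := X_zero_apply_X_mul he (r := a • z) (u := ρ.u₀) (c := 1) hv
    rwa [mul_one, map_zsmul, zsmul_eq_mul] at h
  have hew' : ρ.X 0 ρ.u₀ (1 - e) w = (μ ρ.u₀ + ρ.p ρ.u₀ g - α) • w := by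
    rw [map_sub, LinearMap.sub_apply, mem_weightSpace.1 hw, hew, ← sub_smul, map_add, map_zsmul,
      zsmul_eq_mul]
    ring_nf
  obtain ⟨b, hb, hw'⟩ := hsign (1 - e) (X_apply_ne_zero_or_X_neg_apply_ne_zero
    (one_sub_mul_self_sub_mem he) (sub_ne_zero.2 hα'.symm) hw₀ hew' (hne hl))
  refine ⟨a, b, ha, hb, _, X_mem_weightSpace_of_add_eq hw _ _ _ ?_, hw', ?_⟩
  · rw [add_smul, add_assoc]
  · simpa using X_zero_apply_X_one_sub_mul he (r := b • z) (u := ρ.u₀) (c := 1) hew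

/-- Otherwise degree shifts through `e` and through `1 - e` are independent, and a single weight
space contains eigenvectors of `X 0 u₀ e` for too many eigenvalues. -/
theorem BoundedIrreducible.eq_zero_or_eq_of_idempotent (h : ρ.BoundedIrreducible μ d)
    (he : e * e - e ∈ ρ.annihilator) {g : G} (hv₀ : v ≠ 0) (hg : v ∈ ρ.weightSpace μ g)
    (hv : ρ.X 0 ρ.u₀ e v = α • v) : α = 0 ∨ α = μ ρ.u₀ + ρ.p ρ.u₀ g := by
  by_contra! hcon
  obtain ⟨z, hz⟩ := exists_ne (0 : G)
  obtain ⟨s, F, hdF, hF⟩ := exists_lt_card_forall_sub (d := d) fun k l hk hl =>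
    exists_eigenvector_of_idempotent he hz hv₀ hg hv hcon.1 hcon.2 hk hl
  have hinj : Function.Injective fun a : ℤ => α + a * ρ.p ρ.u₀ z := fun a a' haa =>
    Int.cast_injective (mul_right_cancel₀ (ρ.p_u₀_ne_zero hz) (add_left_cancel haa))
  have := h.finiteDimensional (g + s • z)
  have hcard := card_le_finrank_of_exists_eigenvector (x := ρ.X 0 ρ.u₀ e)
    (W := ρ.weightSpace μ (g + s • z)) (F := F.image fun a : ℤ => α + a * ρ.p ρ.u₀ z) (by
      simp only [Finset.forall_mem_image]
      intro a ha
      simpa only [add_sub_cancel] using hF a ha)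
  rw [Finset.card_image_of_injective _ hinj] at hcard
  exact (hdF.trans_le (hcard.trans (h.finrank_le _))).false

theorem IsIrreducible.mem_annihilator_of_idempotent (hirr : ρ.IsIrreducible)
    (he : e * e - e ∈ ρ.annihilator) (hv : v ≠ 0)
    (h : ∀ r : G, r ≠ 0 → ∀ u c, ρ.X r u (e * c) v = 0) : e ∈ ρ.annihilator := by
  rw [← sub_sub_cancel (e * e) e]
  exact sub_mem (hirr.mul_self_mem_annihilator hv h) he

theorem BoundedIrreducible.mem_annihilator_or_one_sub_mem (h : ρ.BoundedIrreducible μ d)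
    (he : e * e - e ∈ ρ.annihilator) : e ∈ ρ.annihilator ∨ 1 - e ∈ ρ.annihilator := by
  by_cases hex : ∃ (g : G) (v : V) (α : ℂ),
    v ≠ 0 ∧ v ∈ ρ.weightSpace μ g ∧ ρ.X 0 ρ.u₀ e v = α • v ∧ α ≠ 0
  · right
    obtain ⟨g, v, α, hv₀, hg, hv, hα⟩ := hex
    have hαg := (h.eq_zero_or_eq_of_idempotent he hv₀ hg hv).resolve_left hα
    refine h.irreducible.mem_annihilator_of_idempotent (one_sub_mul_self_sub_mem he) hv₀ ?_
    intro r hr u c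
    by_contra hne
    have hαr := (h.eq_zero_or_eq_of_idempotent he hne (X_mem_weightSpace hg _ _ _)
      (X_zero_apply_X_one_sub_mul he hv)).resolve_left hα
    rw [map_add, ← add_assoc, ← hαg] at hαr
    exact ρ.p_u₀_ne_zero hr (left_eq_add.1 hαr)
  · left
    push Not at hex
    obtain ⟨g, hg⟩ := h.exists_ne_bot
    have := h.finiteDimensional g
    have := Submodule.nontrivial_iff_ne_bot.2 hg
    obtain ⟨α, hα⟩ := Module.End.exists_eigenvalue ((ρ.X 0 ρ.u₀ e).restrict
      (fun v hv => X_mem_weightSpace_of_add_eq hv _ _ _ (add_zero g) :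
        ∀ v ∈ ρ.weightSpace μ g, _ ∈ ρ.weightSpace μ g))
    obtain ⟨v, hv, hv₀⟩ := hα.exists_hasEigenvector
    have hv₀ : (v : V) ≠ 0 := by simpa using hv₀
    have hve : ρ.X 0 ρ.u₀ e v = α • (v : V) :=
      congrArg Subtype.val (Module.End.mem_eigenspace_iff.1 hv)
    refine h.irreducible.mem_annihilator_of_idempotent he hv₀ fun r hr u c => ?_
    by_contra hne
    have hαr := hex _ _ _ hne (X_mem_weightSpace v.2 _ _ _) (X_zero_apply_X_mul he hve)
    rw [hex g v α hv₀ v.2 hve, zero_add] at hαr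
    exact ρ.p_u₀_ne_zero hr hαr

end Idempotents

variable {G U B V : Type*} [AddCommGroup G] [AddCommGroup U] [Module ℂ U]
  [CommRing B] [Algebra ℂ B] [AddCommGroup V] [Module ℂ V] {ρ : GradedRep G U B V}
  {μ : U → ℂ} {d : ℕ}

/-- The action of degree `r`, as a linear map from `B` to families of operators between two
weight spaces. -/
def block (ρ : GradedRep G U B V) (μ : U → ℂ) (g r : G) :
    B →ₗ[ℂ] U →ₗ[ℂ] (ρ.weightSpace μ g →ₗ[ℂ] ρ.weightSpace μ (g + r)) :=
  LinearMap.mk₂ ℂ (fun b u => (ρ.X r u b).restrict fun _ hv => X_mem_weightSpace hv r u b)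
    (fun b b' u => by ext v; simp [LinearMap.coe_restrict_apply])
    (fun c b u => by ext v; simp [LinearMap.coe_restrict_apply])
    (fun b u u' => by ext v; simp [LinearMap.coe_restrict_apply])
    (fun c b u => by ext v; simp [LinearMap.coe_restrict_apply])

/-- The ideal of all `b ∈ B` for which `u tʳ ⊗ b` kills the weight space of degree `g`. -/
def blockIdeal (ρ : GradedRep G U B V) (μ : U → ℂ) (g : G) {r : G} (hr : r ≠ 0) : Ideal B where
  carrier := {b | ∀ u, ∀ v ∈ ρ.weightSpace μ g, ρ.X r u b v = 0}
  add_mem' := by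
    intro a b ha hb u v hv
    rw [map_add, LinearMap.add_apply, ha u v hv, hb u v hv, add_zero]
  zero_mem' := by intro u v _; simp
  smul_mem' := by
    intro c b hb u v hv
    have h := ρ.X_X_apply 0 ρ.u₀ c r u b v
    rw [hb u v hv, map_zero, hb u _ (X_mem_weightSpace_of_add_eq hv 0 ρ.u₀ c (add_zero g)),
      zero_add, map_zero, zero_smul, sub_zero, map_smul, zero_add, LinearMap.smul_apply,
      LinearMap.smul_apply] at h
    exact (smul_eq_zero.1 h.symm).resolve_left (ρ.p_u₀_ne_zero hr)

theorem mem_blockIdeal_of_block_eq_zero {g r : G} (hr : r ≠ 0) {b : B}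
    (h : ρ.block μ g r b = 0) : b ∈ ρ.blockIdeal μ g hr :=
  fun u v hv => congrArg Subtype.val (LinearMap.congr_fun (LinearMap.congr_fun h u) ⟨v, hv⟩)

theorem exists_pow_mem_blockIdeal {S : Set G} (hS : AddSubmonoid.closure S = ⊤) {g : G} {a : B}
    (h : ∀ s ∈ S, ∀ hs : s ≠ 0, a ∈ ρ.blockIdeal μ g hs)
    (h₂ : ∀ s ∈ S, ∀ hs : s + s ≠ 0, a ∈ ρ.blockIdeal μ g hs) {r : G} (hr : r ≠ 0) :
    ∃ k : ℕ, a ^ k ∈ ρ.blockIdeal μ g hr := by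
  have hmem : r ∈ AddSubmonoid.closure S := hS ▸ AddSubmonoid.mem_top r
  induction hmem using AddSubmonoid.closure_induction_right with
  | zero => exact absurd rfl hr
  | add_right r _ s hs ih =>
    rcases eq_or_ne r 0 with rfl | hr₀
    · simp only [zero_add] at hr ⊢
      exact ⟨1, (pow_one a).symm ▸ h s hs hr⟩
    rcases eq_or_ne s 0 with rfl | hs₀
    · simpa only [add_zero] using ih hr₀
    rcases eq_or_ne r s with rfl | hrs
    · exact ⟨1, (pow_one a).symm ▸ h₂ r hs hr⟩
    obtain ⟨k, hk⟩ := ih hr₀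
    refine ⟨k + 1, fun u v hv => ?_⟩
    rw [pow_succ]
    exact ρ.X_add_apply_eq_zero hrs (fun u => hk u v hv) (fun u => h s hs hs₀ u v hv) u

theorem BoundedIrreducible.exists_aeval_mem_blockIdeal [FiniteDimensional ℂ U]
    (h : ρ.BoundedIrreducible μ d) (g : G) {r : G} (hr : r ≠ 0) (b : B) :
    ∃ q : Polynomial ℂ, q ≠ 0 ∧ q.natDegree ≤ Module.finrank ℂ U * (d * d) ∧
      Polynomial.aeval b q ∈ ρ.blockIdeal μ g hr := by
  have := h.finiteDimensional
  let M := U →ₗ[ℂ] (ρ.weightSpace μ g →ₗ[ℂ] ρ.weightSpace μ (g + r))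
  have hfr : Module.finrank ℂ M ≤ Module.finrank ℂ U * (d * d) := by
    rw [Module.finrank_linearMap, Module.finrank_linearMap]
    exact Nat.mul_le_mul le_rfl (Nat.mul_le_mul (h.finrank_le _) (h.finrank_le _))
  obtain ⟨q, hq, hdeg, hker⟩ := exists_aeval_mem_ker (M := M) hfr (ρ.block μ g r) b
  exact ⟨q, hq, hdeg, mem_blockIdeal_of_block_eq_zero hr hker⟩

variable [Nontrivial G] [AddGroup.FG G] [FiniteDimensional ℂ U]

/-- A polynomial in `b` handles the finitely many degrees `s` and `2s`, `s` a generator of `G`.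
Some power then handles any given degree, and an exponent bounded in terms of the dimensions of
the blocks handles all degrees at once. -/
theorem BoundedIrreducible.exists_aeval_mem_annihilator (h : ρ.BoundedIrreducible μ d) (b : B) :
    ∃ q : Polynomial ℂ, q ≠ 0 ∧ Polynomial.aeval b q ∈ ρ.annihilator := by
  classical
  obtain ⟨g, hg⟩ := h.exists_ne_bot
  choose! P hP₀ hPdeg hP using
    fun (r : G) (hr : r ≠ 0) (b : B) => h.exists_aeval_mem_blockIdeal g hr b
  obtain ⟨S, hS⟩ := AddMonoid.fg_def.1 (AddGroup.fg_iff_addMonoid_fg.1 ‹AddGroup.FG G›)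
  let R : Finset G := (S ∪ S.image fun s => s + s).filter (· ≠ 0)
  have hR : ∀ {r}, r ∈ R → r ≠ 0 := fun hr => (Finset.mem_filter.1 hr).2
  refine ⟨∏ r ∈ R, P r b, Finset.prod_ne_zero_iff.2 fun r hr => hP₀ r (hR hr) b, ?_⟩
  set a := Polynomial.aeval b (∏ r ∈ R, P r b)
  have haR : ∀ r ∈ R, ∀ hr : r ≠ 0, a ∈ ρ.blockIdeal μ g hr := fun r hrR hr =>
    Ideal.mem_of_dvd _ (map_dvd _ (Finset.dvd_prod_of_mem (fun r => P r b) hrR)) (hP r hr b)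
  have hpow : ∀ r, ∀ hr : r ≠ 0,
      a ^ (Module.finrank ℂ U * (d * d)) ∈ ρ.blockIdeal μ g hr := by
    intro r hr
    obtain ⟨k, hk⟩ := exists_pow_mem_blockIdeal hS
      (fun s hs hs₀ => haR s (Finset.mem_filter.2 ⟨Finset.mem_union_left _ hs, hs₀⟩) hs₀)
      (fun s hs hs₀ => haR (s + s) (Finset.mem_filter.2 ⟨Finset.mem_union_right _
        (Finset.mem_image_of_mem _ hs), hs₀⟩) hs₀) hr
    exact pow_mem_of_aeval_mem (hP₀ r hr a) (hP r hr a) hk (hPdeg r hr a)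
  obtain ⟨v, hv, hv₀⟩ := Submodule.exists_mem_ne_zero_of_ne_bot hg
  have hsq := h.irreducible.mul_self_mem_annihilator hv₀ fun r hr u c =>
    Ideal.mul_mem_right c _ (hpow r hr) u v hv
  exact h.isRadical_annihilator ⟨_, (pow_add a _ _).symm ▸ hsq⟩

theorem BoundedIrreducible.exists_eval (h : ρ.BoundedIrreducible μ d) (hnt : ρ.IsNontrivial) :
    ∃ η : B →ₐ[ℂ] ℂ, ∀ r u b, ρ.X r u b = η b • ρ.X r u 1 := by
  let C := B ⧸ ρ.annihilator
  have : IsReduced C := (Ideal.isRadical_iff_quotient_reduced _).1 h.isRadical_annihilator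
  have : Nontrivial C := Ideal.Quotient.nontrivial_iff.2 fun htop => by
    obtain ⟨r, u, b, hb⟩ := hnt
    exact hb ((htop ▸ Submodule.mem_top : b ∈ ρ.annihilator) r u)
  have hidem : ∀ e : C, IsIdempotentElem e → e = 0 ∨ e = 1 := by
    intro e he
    obtain ⟨e, rfl⟩ := Ideal.Quotient.mk_surjective e
    rw [IsIdempotentElem, ← map_mul, Ideal.Quotient.eq] at he
    refine (h.mem_annihilator_or_one_sub_mem he).imp Ideal.Quotient.eq_zero_iff_mem.2 fun h1 => ?_
    exact (Ideal.Quotient.eq.2 h1).symm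
  have halg : ∀ b : C, IsAlgebraic ℂ b := by
    intro b
    obtain ⟨b, rfl⟩ := Ideal.Quotient.mk_surjective b
    obtain ⟨q, hq, hqb⟩ := h.exists_aeval_mem_annihilator b
    refine ⟨q, hq, ?_⟩
    exact (Polynomial.aeval_algHom_apply (Ideal.Quotient.mkₐ ℂ _) b q).trans
      (Ideal.Quotient.eq_zero_iff_mem.2 hqb)
  let ψ := AlgEquiv.ofBijective (Algebra.ofId ℂ C) (algebraMap_bijective_of_isAlgebraic hidem halg)
  refine ⟨(ψ.symm : C →ₐ[ℂ] ℂ).comp (Ideal.Quotient.mkₐ ℂ _), fun r u b => ?_⟩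
  have hsub : b - algebraMap ℂ B (ψ.symm (Ideal.Quotient.mk _ b)) ∈ ρ.annihilator :=
    Ideal.Quotient.eq.1 (ψ.apply_symm_apply (Ideal.Quotient.mk _ b)).symm
  rw [X_eq_of_sub_mem_annihilator hsub, Algebra.algebraMap_eq_smul_one, map_smul]
  rfl

/-! ### Positive directions -/

open Filter

variable {G U B V : Type*} [AddCommGroup G] [AddCommGroup U] [Module ℂ U]
  [CommRing B] [Algebra ℂ B] [AddCommGroup V] [Module ℂ V] {ρ : GradedRep G U B V} {μ : U → ℂ}

/-- The vectors annihilated by every family of operators `u t^(k r + x) ⊗ b` once `k` is large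
(how large may depend on the vector, on `x` and on `b`, but not on `u`). -/
def eventualKer (ρ : GradedRep G U B V) (r : G) : Submodule ℂ V where
  carrier := {v | ∀ x b, ∀ᶠ k : ℤ in atTop, ∀ u, ρ.X (k • r + x) u b v = 0}
  add_mem' := by
    intro v w hv hw x b
    filter_upwards [hv x b, hw x b] with k hkv hkw u
    rw [map_add, hkv, hkw, add_zero]
  zero_mem' := fun _ _ => Eventually.of_forall fun _ _ => map_zero _
  smul_mem' := by
    intro c v hv x b
    filter_upwards [hv x b] with k hk u
    rw [map_smul, hk, smul_zero]

/-- A direction `r` is positive if translating operators far along `r` annihilates any given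
vector. -/
def IsPositive (ρ : GradedRep G U B V) (r : G) : Prop := ρ.eventualKer r = ⊤

theorem isPositive_iff {r : G} :
    ρ.IsPositive r ↔ ∀ v x b, ∀ᶠ k : ℤ in atTop, ∀ u, ρ.X (k • r + x) u b v = 0 :=
  Submodule.eq_top_iff'

theorem isInvariant_eventualKer (r : G) : ρ.IsInvariant (ρ.eventualKer r) := by
  intro s a c v hv x b
  filter_upwards [hv x b, hv (x + s) (b * c)] with k hk hks u
  rw [ρ.X_X_apply, hk, map_zero, zero_add, add_assoc, hks]

theorem isPositive_of_mem_eventualKer (hirr : ρ.IsIrreducible) {r : G} {v : V}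
    (hv : v ∈ ρ.eventualKer r) (hv₀ : v ≠ 0) : ρ.IsPositive r :=
  hirr.eq_top (isInvariant_eventualKer r) hv hv₀

/- When `x = y`, the bracket of `u tˣ` and `v tʸ` may vanish; the second decomposition
`x + y = (x + z) + (y - z)` then has distinct summands. -/
theorem X_add_apply_eq_zero_of_shift {x y z : G} (hz : z ≠ 0) {b c : B} {w : V}
    (hx : ∀ u, ρ.X x u b w = 0) (hy : ∀ u, ρ.X y u c w = 0)
    (hx' : ∀ u, ρ.X (x + z) u b w = 0) (hy' : ∀ u, ρ.X (y - z) u c w = 0) (u : U) :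
    ρ.X (x + y) u (b * c) w = 0 := by
  by_cases hxy : x = y
  · have hne : x + z ≠ y - z := by
      rw [hxy, sub_eq_add_neg]
      exact fun h => ρ.ne_neg hz (add_left_cancel h)
    have h := ρ.X_add_apply_eq_zero hne hx' hy' u
    rwa [add_add_sub_cancel] at h
  · exact ρ.X_add_apply_eq_zero hxy hx hy u

theorem IsNontrivial.not_isPositive_zero (hnt : ρ.IsNontrivial) : ¬ ρ.IsPositive 0 := by
  intro h
  obtain ⟨r, u, b, hne⟩ := hnt
  refine hne (LinearMap.ext fun v => ?_)
  obtain ⟨k, hk⟩ := (isPositive_iff.1 h v r b).exists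
  simpa using hk u

theorem IsPositive.ne_zero (hnt : ρ.IsNontrivial) {a : G} (h : ρ.IsPositive a) : a ≠ 0 := by
  rintro rfl
  exact hnt.not_isPositive_zero h

theorem IsPositive.add [Nontrivial G] {r s : G} (hr : ρ.IsPositive r) (hs : ρ.IsPositive s) :
    ρ.IsPositive (r + s) := by
  rw [isPositive_iff] at hr hs ⊢
  intro v x b
  obtain ⟨z, hz⟩ := exists_ne (0 : G)
  filter_upwards [hr v 0 1, hr v z 1, hs v x b, hs v (x - z) b] with k h₁ h₂ h₃ h₄ u
  have h := X_add_apply_eq_zero_of_shift (x := k • r) (y := k • s + x) hz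
    (by simpa only [add_zero] using h₁) h₃ h₂ (by simpa only [add_sub_assoc] using h₄) u
  rwa [one_mul, ← add_assoc, ← smul_add] at h

theorem IsPositive.of_zsmul {r : G} {k : ℤ} (hk : 0 < k) (h : ρ.IsPositive (k • r)) :
    ρ.IsPositive r := by
  rw [isPositive_iff] at h ⊢
  intro v x b
  obtain ⟨M, hM⟩ := eventually_atTop.1 <| (eventually_all_finset (Finset.Ico 0 k)).2 fun i _ =>
    h v (i • r + x) b
  filter_upwards [eventually_ge_atTop (M * k)] with j hj u
  have hjk := hM (j / k) ((Int.le_ediv_iff_mul_le hk).2 hj) (j % k)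
    (Finset.mem_Ico.2 ⟨Int.emod_nonneg j hk.ne', Int.emod_lt_of_pos j hk⟩) u
  rwa [smul_smul, ← add_assoc, ← add_smul, mul_comm, Int.mul_ediv_add_emod] at hjk

theorem IsPositive.zsmul [Nontrivial G] {r : G} (h : ρ.IsPositive r) {k : ℤ} (hk : 1 ≤ k) :
    ρ.IsPositive (k • r) := by
  induction k, hk using Int.leInduction with
  | base => rwa [one_smul]
  | succ k _ ih =>
    rw [add_smul, one_smul]
    exact ih.add h

theorem not_isPositive_zsmul (hnt : ρ.IsNontrivial) {r : G} (h : ¬ ρ.IsPositive r)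
    (h' : ¬ ρ.IsPositive (-r)) (k : ℤ) : ¬ ρ.IsPositive (k • r) := by
  intro hk
  rcases lt_trichotomy k 0 with hneg | rfl | hpos
  · exact h' (IsPositive.of_zsmul (neg_pos.2 hneg) (by rwa [neg_smul_neg]))
  · exact hnt.not_isPositive_zero (by rwa [zero_smul] at hk)
  · exact h (hk.of_zsmul hpos)

theorem eq_zero_of_X_apply_eq_zero {h r : G} (hr : r ≠ 0) {w : V} (hw : w ∈ ρ.weightSpace μ h)
    (hne : μ ρ.u₀ + ρ.p ρ.u₀ h ≠ 0) (h1 : ρ.X r ρ.u₀ 1 w = 0)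
    (h2 : ρ.X r ρ.u₀ 1 (ρ.X (-r) ρ.u₀ 1 w) = 0) : w = 0 := by
  have hp : ρ.p ρ.u₀ (-r) - ρ.p ρ.u₀ r ≠ 0 := by
    rw [← map_sub]
    exact ρ.p_u₀_ne_zero (sub_ne_zero.2 (ρ.ne_neg hr).symm)
  have hlie := ρ.X_X_apply r ρ.u₀ 1 (-r) ρ.u₀ 1 w
  rw [h1, h2, map_zero, zero_add, add_neg_cancel, ← sub_smul, map_smul, LinearMap.smul_apply,
    LinearMap.smul_apply, one_mul, mem_weightSpace.1 hw, smul_smul] at hlie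
  exact (smul_eq_zero.1 hlie.symm).resolve_left (mul_ne_zero hp hne)

theorem IsPositive.eventually_forall_mem_weightSpace {a : G} (ha : ρ.IsPositive a) (g : G)
    [FiniteDimensional ℂ (ρ.weightSpace μ g)] :
    ∀ᶠ j : ℤ in atTop, ∀ v ∈ ρ.weightSpace μ g, ρ.X (j • a) ρ.u₀ 1 v = 0 := by
  obtain ⟨s, hs⟩ := (Submodule.fg_iff_finiteDimensional (ρ.weightSpace μ g)).2 inferInstance
  filter_upwards [(eventually_all_finset s).2 fun v _ => isPositive_iff.1 ha v 0 1] with j hj v hv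
  rw [← hs] at hv
  have hle : Submodule.span ℂ (s : Set V) ≤ LinearMap.ker (ρ.X (j • a) ρ.u₀ 1) :=
    Submodule.span_le.2 fun x hx => by
      simpa only [add_zero, SetLike.mem_coe, LinearMap.mem_ker] using hj x hx ρ.u₀
  exact hle hv

theorem eventually_weight_ne_zero {a : G} (ha : a ≠ 0) (g : G) (ρ : GradedRep G U B V)
    (μ : U → ℂ) : ∀ᶠ k : ℤ in atTop, μ ρ.u₀ + ρ.p ρ.u₀ (g + k • a) ≠ 0 := by
  have hinj : Function.Injective fun k : ℤ => g + k • a := by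
    intro k l hkl
    by_contra hne
    refine ρ.zsmul_ne_zero (sub_ne_zero.2 hne) ha ?_
    rw [sub_smul, add_left_cancel hkl, sub_self]
  have hcof := ((weight_injective (ρ := ρ) (μ := μ)).comp hinj).tendsto_cofinite
  exact (hcof.mono_left atTop_le_cofinite).eventually (eventually_cofinite_ne 0)

theorem IsPositive.exists_singular {a : G} (ha : ρ.IsPositive a) (ha₀ : a ≠ 0) {g : G}
    [FiniteDimensional ℂ (ρ.weightSpace μ g)] (hg : ρ.weightSpace μ g ≠ ⊥)
    (hμ : ∀ l : ℤ, 0 ≤ l → μ ρ.u₀ + ρ.p ρ.u₀ (g + l • a) ≠ 0) :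
    ∃ l : ℤ, 0 ≤ l ∧ ∃ w ∈ ρ.weightSpace μ (g + l • a), w ≠ 0 ∧
      ∀ j : ℤ, 1 ≤ j → ρ.X (j • a) ρ.u₀ 1 w = 0 := by
  obtain ⟨j₁, hj₁⟩ := eventually_atTop.1 <| (eventually_ge_atTop 1).and <|
    ha.eventually_forall_mem_weightSpace (μ := μ) g
  let P : ℤ → Prop := fun l => 0 ≤ l ∧ ∃ w ∈ ρ.weightSpace μ (g + l • a), w ≠ 0 ∧
    ∀ j ≥ j₁, ρ.X (j • a) ρ.u₀ 1 w = 0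
  have hbdd : ∀ l, P l → l ≤ j₁ := by
    rintro l ⟨hl, w, hw, hw₀, hwj⟩
    by_contra! hlt
    have hj₁' := (hj₁ j₁ le_rfl).1
    refine hw₀ (eq_zero_of_X_apply_eq_zero (ρ.zsmul_ne_zero (k := l) (by lia) ha₀) hw (hμ l hl)
      (hwj l hlt.le) ((hj₁ l hlt.le).2 _ ?_))
    exact X_mem_weightSpace_of_add_eq hw _ _ _ (by module)
  have hex : ∃ l, P l := by
    obtain ⟨w, hw, hw₀⟩ := Submodule.exists_mem_ne_zero_of_ne_bot hg
    exact ⟨0, le_rfl, w, by simpa using hw, hw₀, fun j hj => (hj₁ j hj).2 w hw⟩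
  obtain ⟨l, ⟨hl, w, hw, hw₀, hwj⟩, hmax⟩ := Int.exists_greatest_of_bdd ⟨_, hbdd⟩ hex
  refine ⟨l, hl, w, hw, hw₀, fun j hj => ?_⟩
  by_contra hne
  have hPlj : P (l + j) := by
    refine ⟨by lia, _, X_mem_weightSpace_of_add_eq hw (j • a) ρ.u₀ 1 (by module), hne, ?_⟩
    intro i hi
    rw [ρ.X_X_apply, hwj i hi, map_zero, zero_add, ← sub_smul, map_smul, LinearMap.smul_apply,
      LinearMap.smul_apply, mul_one, ← add_smul, hwj _ (by lia), smul_zero]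
  have := hmax _ hPlj
  lia

theorem IsPositive.eventually_weightSpace_eq_bot (hnt : ρ.IsNontrivial)
    (hfin : ∀ g, FiniteDimensional ℂ (ρ.weightSpace μ g)) {a : G} (ha : ρ.IsPositive a) (g : G) :
    ∀ᶠ k : ℤ in atTop, ρ.weightSpace μ (g + k • a) = ⊥ := by
  have ha₀ := ha.ne_zero hnt
  obtain ⟨k₀, hk₀⟩ := eventually_atTop.1 <|
    (eventually_weight_ne_zero ha₀ g ρ μ).and (ha.eventually_forall_mem_weightSpace (μ := μ) g)
  filter_upwards [eventually_ge_atTop k₀, eventually_gt_atTop 0] with k hk hk_pos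
  by_contra hne
  obtain ⟨l, hl, w, hw, hw₀, hwj⟩ := ha.exists_singular ha₀ hne fun l hl => by
    rw [add_assoc, ← add_smul]
    exact (hk₀ _ (by lia)).1
  rw [add_assoc, ← add_smul] at hw
  refine hw₀ (eq_zero_of_X_apply_eq_zero (ρ.zsmul_ne_zero (k := k + l) (by lia) ha₀) hw
    (hk₀ _ (by lia)).1 (hwj _ (by lia)) ((hk₀ _ (by lia)).2 _ ?_))
  exact X_mem_weightSpace_of_add_eq hw _ _ _ (by module)

theorem IsPositive.X_apply_eq_zero_of_notMem_zmultiples {r : G} (hr : ρ.IsPositive r) {w : V}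
    (hw : ∀ u c, ρ.X (-r) u c w = 0) {x : G} (hx : x ∉ AddSubgroup.zmultiples r) (u : U) (b : B) :
    ρ.X x u b w = 0 := by
  obtain ⟨k, hk₀, hk⟩ := ((eventually_ge_atTop 0).and (isPositive_iff.1 hr w x b)).exists
  have hdown : ∀ j ≤ k, ∀ u, ρ.X (j • r + x) u b w = 0 := by
    intro j hj
    induction j, hj using Int.leInductionDown with
    | base => exact hk
    | pred j _ ih =>
      intro u
      have hne : j • r + x ≠ -r := fun h => hx <| AddSubgroup.mem_zmultiples_iff.2
        ⟨-1 - j, by rw [sub_smul, neg_one_smul, ← h, add_sub_cancel_left]⟩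
      have h := ρ.X_add_apply_eq_zero hne ih (fun u => hw u 1) u
      rwa [mul_one, show j • r + x + -r = (j - 1) • r + x by module] at h
  simpa only [zero_smul, zero_add] using hdown 0 hk₀ u

theorem IsPositive.exists_X_neg_apply_ne_zero (hirr : ρ.IsIrreducible) (hnt : ρ.IsNontrivial)
    (hcyc : ¬ IsAddCyclic G) {r : G} (hr : ρ.IsPositive r) {w : V} (hw : w ≠ 0) :
    ∃ u c, ρ.X (-r) u c w ≠ 0 := by
  by_contra! hcon
  have hout : ∀ x ∉ AddSubgroup.zmultiples r, ∀ u b, ρ.X x u b w = 0 := fun _ hx =>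
    hr.X_apply_eq_zero_of_notMem_zmultiples hcon hx
  obtain ⟨y, hy⟩ : ∃ y, y ∉ AddSubgroup.zmultiples r := by
    by_contra! h
    exact hcyc ⟨r, h⟩
  have hr_mem := AddSubgroup.mem_zmultiples r
  have hall : ∀ x u b, ρ.X x u b w = 0 := by
    intro x u b
    by_cases hx : x ∈ AddSubgroup.zmultiples r
    · have hsub : ∀ z, x - z ∈ AddSubgroup.zmultiples r → z ∈ AddSubgroup.zmultiples r :=
        fun z hz => sub_sub_cancel x z ▸ sub_mem hx hz
      have h := X_add_apply_eq_zero_of_shift (x := y) (y := x - y) (z := r) (b := b) (c := 1)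
        (hr.ne_zero hnt) (fun u => hout _ hy u b)
        (fun u => hout _ (fun h => hy (hsub y h)) u 1)
        (fun u => hout _ (fun h => hy ((add_mem_cancel_right hr_mem).1 h)) u b)
        (fun u => hout _ (fun h => hy (hsub y (sub_add_cancel (x - y) r ▸ add_mem h hr_mem))) u 1) u
      rwa [mul_one, add_sub_cancel] at h
    · exact hout x hx u b
  obtain ⟨s, u, b, hne⟩ := hnt
  have huniv : ρ.IsIdealFamily Set.univ := fun _ _ _ _ _ _ => trivial
  exact hne (huniv.X_eq_zero hirr hw (fun q _ x => hall x q.1 q.2) trivial s)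

theorem IsPositive.weightSpace_sub_ne_bot (hirr : ρ.IsIrreducible) (hnt : ρ.IsNontrivial)
    (hcyc : ¬ IsAddCyclic G) {r : G} (hr : ρ.IsPositive r) {g : G}
    (hg : ρ.weightSpace μ g ≠ ⊥) : ρ.weightSpace μ (g - r) ≠ ⊥ := by
  obtain ⟨w, hw, hw₀⟩ := Submodule.exists_mem_ne_zero_of_ne_bot hg
  obtain ⟨u, c, hne⟩ := hr.exists_X_neg_apply_ne_zero hirr hnt hcyc hw₀
  exact (Submodule.ne_bot_iff _).2
    ⟨_, X_mem_weightSpace_of_add_eq hw (-r) u c (sub_eq_add_neg g r).symm, hne⟩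

theorem IsPositive.weightSpace_add_eq_bot (hirr : ρ.IsIrreducible) (hnt : ρ.IsNontrivial)
    (hcyc : ¬ IsAddCyclic G) {r : G} (hr : ρ.IsPositive r) {g : G}
    (hg : ρ.weightSpace μ g = ⊥) : ρ.weightSpace μ (g + r) = ⊥ := by
  by_contra hne
  exact hr.weightSpace_sub_ne_bot hirr hnt hcyc hne (by rwa [add_sub_cancel_right])

theorem X_zsmul_apply_eq_zero {x : G} (hx : x ≠ 0) {w : V} (h1 : ∀ u, ρ.X x u 1 w = 0)
    (h2 : ∀ u, ρ.X ((2 : ℤ) • x) u 1 w = 0) {j : ℤ} (hj : 1 ≤ j) (u : U) :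
    ρ.X (j • x) u 1 w = 0 := by
  rcases hj.eq_or_lt with rfl | (hj : 2 ≤ j)
  · simpa only [one_smul] using h1 u
  · induction j, hj using Int.leInduction generalizing u with
    | base => exact h2 u
    | succ j hj ih =>
      have hne : j • x ≠ x := fun h => ρ.zsmul_ne_zero (k := j - 1) (by lia) hx <| by
        rw [sub_one_zsmul, h, add_neg_cancel]
      have h := ρ.X_add_apply_eq_zero hne (ih (by lia)) h1 u
      rwa [mul_one, ← add_one_zsmul] at h

theorem weightSpace_add_natCast_zsmul_eq_bot {h r : G} (hr : r ≠ 0) {d : ℕ}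
    (hfin : ∀ g, FiniteDimensional ℂ (ρ.weightSpace μ g))
    (hd : ∀ k : ℤ, Module.finrank ℂ (ρ.weightSpace μ (h + k • r)) ≤ d)
    (hw : ∀ k : ℤ, μ ρ.u₀ + ρ.p ρ.u₀ (h + k • r) ≠ 0)
    (h0 : ρ.weightSpace μ h = ⊥) (h1 : ρ.weightSpace μ (h + r) = ⊥) (k : ℕ) :
    ρ.weightSpace μ (h + (k : ℤ) • r) = ⊥ := by
  induction k using Nat.twoStepInduction with
  | zero => simpa using h0
  | one => simpa using h1
  | more k ih₀ ih₁ =>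
    by_contra hne
    obtain ⟨w, hwm, hw₀⟩ := Submodule.exists_mem_ne_zero_of_ne_bot hne
    have hX1 : ∀ u, ρ.X (-r) u 1 w = 0 := fun u => (Submodule.mem_bot ℂ).1 <| ih₁ ▸
      X_mem_weightSpace_of_add_eq hwm (-r) u 1 (by push_cast; module)
    have hX2 : ∀ u, ρ.X ((2 : ℤ) • -r) u 1 w = 0 := fun u => (Submodule.mem_bot ℂ).1 <| ih₀ ▸
      X_mem_weightSpace_of_add_eq hwm ((2 : ℤ) • -r) u 1 (by push_cast; module)
    have hr' := neg_ne_zero.2 hr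
    have := hfin (h + ((k + 2 : ℕ) : ℤ) • r - (2 * ((d : ℤ) + 5)) • -r)
    have hlt := lt_finrank_of_line hr' hw₀ hwm (hw _)
      (fun j hj => X_zsmul_apply_eq_zero hr' hX1 hX2 hj _) (d := d) le_rfl
    rw [show h + ((k + 2 : ℕ) : ℤ) • r - (2 * ((d : ℤ) + 5)) • -r =
      h + (((k + 2 : ℕ) : ℤ) + 2 * (d + 5)) • r by module] at hlt
    exact (hd _).not_gt hlt

theorem weightSpace_add_zsmul_eq_bot {h r : G} (hr : r ≠ 0) {d : ℕ}
    (hfin : ∀ g, FiniteDimensional ℂ (ρ.weightSpace μ g))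
    (hd : ∀ k : ℤ, Module.finrank ℂ (ρ.weightSpace μ (h + k • r)) ≤ d)
    (hw : ∀ k : ℤ, μ ρ.u₀ + ρ.p ρ.u₀ (h + k • r) ≠ 0)
    (h0 : ρ.weightSpace μ h = ⊥) (h1 : ρ.weightSpace μ (h + r) = ⊥) (k : ℤ) :
    ρ.weightSpace μ (h + k • r) = ⊥ := by
  rcases le_total 0 k with hk | hk
  · obtain ⟨k, rfl⟩ := Int.eq_ofNat_of_zero_le hk
    exact weightSpace_add_natCast_zsmul_eq_bot hr hfin hd hw h0 h1 k
  · obtain ⟨l, hl⟩ := Int.eq_ofNat_of_zero_le (show 0 ≤ 1 - k by lia)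
    have hflip : ∀ j : ℤ, h + r + j • -r = h + (1 - j) • r := fun j => by module
    have hbot := weightSpace_add_natCast_zsmul_eq_bot (h := h + r) (neg_ne_zero.2 hr) hfin
      (fun j => hflip j ▸ hd _) (fun j => hflip j ▸ hw _) h1 (by rwa [add_neg_cancel_right]) l
    rwa [hflip, ← hl, sub_sub_cancel] at hbot

end GradedRep

theorem exists_finset_one_mem_adjoin_eq_top (R A : Type*) [CommSemiring R] [Semiring A]
    [Algebra R A] [Algebra.FiniteType R A] :
    ∃ F : Finset A, 1 ∈ F ∧ Algebra.adjoin R (F : Set A) = ⊤ := by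
  classical
  obtain ⟨F, hF⟩ := Algebra.FiniteType.out (R := R) (A := A)
  refine ⟨insert 1 F, Finset.mem_insert_self _ _, top_unique ?_⟩
  rw [← hF, Finset.coe_insert]
  exact Algebra.adjoin_mono (Set.subset_insert _ _)

/-- The integral points of the cube of radius `m`. -/
def cube (n : ℕ) (m : ℤ) : Finset (Fin n → ℤ) := Finset.Icc (fun _ => -m) (fun _ => m)

variable {n : ℕ}

theorem mem_cube {m : ℤ} {x : Fin n → ℤ} : x ∈ cube n m ↔ ∀ i, -m ≤ x i ∧ x i ≤ m := by
  simp only [cube, Finset.mem_Icc, Pi.le_def, forall_and]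

theorem exists_mem_cube_sub_mem_cube [NeZero n] {m : ℤ} (hm : 2 ≤ m) {x : Fin n → ℤ}
    (hx : x ∈ cube n (m + 1)) :
    ∃ s z, z ≠ 0 ∧ x - s ∈ cube n m ∧ s ∈ cube n 2 ∧ x - s + z ∈ cube n m ∧ s - z ∈ cube n 2 := by
  rw [mem_cube] at hx
  refine ⟨fun i => if 0 < x i then 1 else if x i < 0 then -1 else 0,
    fun i => if 0 < x i then -1 else 1, fun h => ?_, ?_⟩
  · have := congrFun h 0
    simp only [Pi.zero_apply] at this
    lia
  · simp only [mem_cube, Pi.add_apply, Pi.sub_apply]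
    refine ⟨fun i => ?_, fun i => ?_, fun i => ?_, fun i => ?_⟩ <;> have := hx i <;> lia

namespace GradedRep

open Filter

section

variable {G U B V : Type*} [AddCommGroup G] [Nontrivial G] [AddCommGroup U] [Module ℂ U]
  [CommRing B] [Algebra ℂ B] [AddCommGroup V] [Module ℂ V] {ρ : GradedRep G U B V}

theorem eventually_X_mul_apply_eq_zero {r : G} {v : V} {b c : B}
    (hb : ∀ x, ∀ᶠ k : ℤ in atTop, ∀ u, ρ.X (k • r + x) u b v = 0)
    (hc : ∀ x, ∀ᶠ k : ℤ in atTop, ∀ u, ρ.X (k • r + x) u c v = 0) (x : G) :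
    ∀ᶠ k : ℤ in atTop, ∀ u, ρ.X (k • r + x) u (b * c) v = 0 := by
  obtain ⟨z, hz⟩ := exists_ne (0 : G)
  obtain ⟨M, hM⟩ := eventually_atTop.1 (((hb x).and (hb (x + z))).and ((hc 0).and (hc (-z))))
  filter_upwards [eventually_ge_atTop (2 * M)] with k hk u
  obtain ⟨hbx, hbz⟩ := (hM (k / 2) (by lia)).1
  obtain ⟨hc0, hcz⟩ := (hM (k - k / 2) (by lia)).2
  have h := X_add_apply_eq_zero_of_shift (x := (k / 2) • r + x) (y := (k - k / 2) • r) hz hbx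
    (by simpa only [add_zero] using hc0) (by simpa only [add_assoc] using hbz)
    (by simpa only [sub_eq_add_neg] using hcz) u
  rwa [show (k / 2) • r + x + (k - k / 2) • r = k • r + x by module] at h

theorem mem_eventualKer_of_adjoin_eq_top {F : Set B} (h1 : 1 ∈ F) (hF : Algebra.adjoin ℂ F = ⊤)
    {r : G} {v : V} (h : ∀ f ∈ F, ∀ x, ∀ᶠ k : ℤ in atTop, ∀ u, ρ.X (k • r + x) u f v = 0) :
    v ∈ ρ.eventualKer r := by
  intro x b
  have hb : b ∈ Algebra.adjoin ℂ F := hF ▸ Algebra.mem_top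
  induction hb using Algebra.adjoin_induction generalizing x with
  | mem f hf => exact h f hf x
  | algebraMap c =>
    filter_upwards [h 1 h1 x] with k hk u
    rw [Algebra.algebraMap_eq_smul_one, map_smul, LinearMap.smul_apply, hk, smul_zero]
  | add b c _ _ hb hc =>
    filter_upwards [hb x, hc x] with k hkb hkc u
    rw [map_add, LinearMap.add_apply, hkb, hkc, add_zero]
  | mul b c _ _ hb hc => exact eventually_X_mul_apply_eq_zero hb hc x

end

variable {U B V : Type*} [AddCommGroup U] [Module ℂ U] [CommRing B] [Algebra ℂ B]
  [AddCommGroup V] [Module ℂ V] {ρ : GradedRep (Fin n → ℤ) U B V} {μ : U → ℂ} [NeZero n]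

theorem X_zsmul_add_apply_eq_zero_of_cube {r : Fin n → ℤ} {v : V} {b : B}
    (h1 : ∀ x ∈ cube n 2, ∀ u, ρ.X (r + x) u 1 v = 0)
    (hb : ∀ x ∈ cube n 2, ∀ u, ρ.X (r + x) u b v = 0) {k : ℤ} (hk : 1 ≤ k) {x : Fin n → ℤ}
    (hx : x ∈ cube n (k + 1)) (u : U) : ρ.X (k • r + x) u b v = 0 := by
  induction k, hk using Int.leInduction generalizing x u with
  | base => simpa only [one_smul] using hb x hx u
  | succ k hk ih =>
    obtain ⟨s, z, hz, hxs, hs, hxz, hsz⟩ := exists_mem_cube_sub_mem_cube (by lia) hx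
    have h := X_add_apply_eq_zero_of_shift (x := k • r + (x - s)) (y := r + s) hz (ih hxs)
      (h1 s hs) (by simpa only [add_assoc] using ih hxz)
      (by simpa only [add_sub_assoc] using h1 _ hsz) u
    rwa [mul_one, show k • r + (x - s) + (r + s) = (k + 1) • r + x by module] at h

theorem isPositive_of_cube (hirr : ρ.IsIrreducible) {F : Set B} (h1 : 1 ∈ F)
    (hF : Algebra.adjoin ℂ F = ⊤) {r : Fin n → ℤ} {v : V} (hv : v ≠ 0)
    (h : ∀ x ∈ cube n 2, ∀ f ∈ F, ∀ u, ρ.X (r + x) u f v = 0) : ρ.IsPositive r := by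
  refine isPositive_of_mem_eventualKer hirr (mem_eventualKer_of_adjoin_eq_top h1 hF ?_) hv
  intro f hf x
  filter_upwards [eventually_ge_atTop 1, eventually_all.2 fun i => eventually_ge_atTop |x i|]
    with k hk hkx
  exact X_zsmul_add_apply_eq_zero_of_cube (fun x hx => h x hx 1 h1) (fun x hx => h x hx f hf) hk
    (mem_cube.2 fun i => abs_le.1 ((hkx i).trans (by lia)))

theorem IsPositive.eventually_forall_weight_ne_zero (hnt : ρ.IsNontrivial) {a r : Fin n → ℤ}
    (ha : ρ.IsPositive a) (hr : ¬ ρ.IsPositive r) (hr' : ¬ ρ.IsPositive (-r)) (g : Fin n → ℤ) :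
    ∀ᶠ i : ℤ in atTop, ∀ l : ℤ, μ ρ.u₀ + ρ.p ρ.u₀ (g + i • a + l • r) ≠ 0 := by
  by_cases hex : ∃ i l : ℤ, μ ρ.u₀ + ρ.p ρ.u₀ (g + i • a + l • r) = 0
  · obtain ⟨i, l, hil⟩ := hex
    filter_upwards [eventually_gt_atTop i] with i' hi' l' hil'
    have heq : g + i' • a + l' • r = g + i • a + l • r := weight_injective (hil'.trans hil.symm)
    have hpos : ρ.IsPositive ((i' - i) • a) := ha.zsmul (by lia)
    rw [show (i' - i) • a = (g + i' • a + l' • r) - (g + i • a + l • r) + (l - l') • r by module,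
      heq, sub_self, zero_add] at hpos
    exact not_isPositive_zsmul hnt hr hr' _ hpos
  · push Not at hex
    exact Eventually.of_forall hex

variable [Algebra.FiniteType ℂ B]

theorem IsPositive.eventually_isPositive_zsmul_add (hirr : ρ.IsIrreducible) {a : Fin n → ℤ}
    (ha : ρ.IsPositive a) (x : Fin n → ℤ) : ∀ᶠ N : ℤ in atTop, ρ.IsPositive (N • a + x) := by
  obtain ⟨F, h1, hF⟩ := exists_finset_one_mem_adjoin_eq_top ℂ B
  have := hirr.1
  obtain ⟨v, hv⟩ := exists_ne (0 : V)
  have hcube : ∀ᶠ N : ℤ in atTop, ∀ y ∈ cube n 2, ∀ f ∈ F, ∀ u, ρ.X (N • a + (x + y)) u f v = 0 :=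
    (eventually_all_finset _).2 fun y _ => (eventually_all_finset _).2 fun f _ =>
      isPositive_iff.1 ha v (x + y) f
  filter_upwards [hcube] with N hN
  exact isPositive_of_cube hirr h1 hF hv fun y hy f hf u => by
    simpa only [add_assoc] using hN y hy f hf u

theorem exists_finrank_le_of_not_isPositive [FiniteDimensional ℂ U] (hirr : ρ.IsIrreducible)
    (hfin : ∀ g, FiniteDimensional ℂ (ρ.weightSpace μ g)) (g : Fin n → ℤ) :
    ∃ d : ℕ, ∀ r, ¬ ρ.IsPositive r → Module.finrank ℂ (ρ.weightSpace μ (g - r)) ≤ d := by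
  obtain ⟨F, h1, hF⟩ := exists_finset_one_mem_adjoin_eq_top ℂ B
  refine ⟨Module.finrank ℂ ((q : cube n 2 × F) → U →ₗ[ℂ] ρ.weightSpace μ (g + q.1)),
    fun r hr => ?_⟩
  let f : ρ.weightSpace μ (g - r) →ₗ[ℂ] (q : cube n 2 × F) → U →ₗ[ℂ] ρ.weightSpace μ (g + q.1) :=
    LinearMap.pi fun q => LinearMap.mk₂ ℂ
      (fun v u => ⟨ρ.X (r + q.1) u q.2 v, X_mem_weightSpace_of_add_eq v.2 _ _ _ (by abel)⟩)
      (fun v v' u => by ext; simp) (fun c v u => by ext; simp)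
      (fun v u u' => by ext; simp) (fun c v u => by ext; simp)
  refine LinearMap.finrank_le_finrank_of_injective (f := f) ?_
  rw [← LinearMap.ker_eq_bot, LinearMap.ker_eq_bot']
  rintro ⟨v, hv⟩ hfv
  by_contra hne
  refine hr (isPositive_of_cube hirr h1 hF (v := v) (by simpa using hne) fun x hx b hb u => ?_)
  exact congrArg Subtype.val (LinearMap.congr_fun (congrFun hfv (⟨x, hx⟩, ⟨b, hb⟩)) u)

theorem IsPositive.weightSpace_add_add_zsmul_eq_bot [FiniteDimensional ℂ U]
    (hirr : ρ.IsIrreducible) (hnt : ρ.IsNontrivial)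
    (hfin : ∀ g, FiniteDimensional ℂ (ρ.weightSpace μ g)) (hcyc : ¬ IsAddCyclic (Fin n → ℤ))
    {s r : Fin n → ℤ} (hs : ρ.IsPositive s) (hsr : ρ.IsPositive (s + r)) (hr : ¬ ρ.IsPositive r)
    (hr' : ¬ ρ.IsPositive (-r)) {g : Fin n → ℤ} (hg : ρ.weightSpace μ g = ⊥)
    (hw : ∀ l : ℤ, μ ρ.u₀ + ρ.p ρ.u₀ (g + s + l • r) ≠ 0) (l : ℤ) :
    ρ.weightSpace μ (g + s + l • r) = ⊥ := by
  have h0 := hs.weightSpace_add_eq_bot hirr hnt hcyc hg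
  have h1 := hsr.weightSpace_add_eq_bot hirr hnt hcyc hg
  rw [← add_assoc] at h1
  rcases eq_or_ne r 0 with rfl | hr₀
  · rwa [smul_zero, add_zero]
  obtain ⟨d, hd⟩ := exists_finrank_le_of_not_isPositive hirr hfin (g + s)
  refine weightSpace_add_zsmul_eq_bot hr₀ hfin (d := d) (fun k => ?_) hw h0 h1 l
  rw [← sub_neg_eq_add, ← neg_smul]
  exact hd _ (not_isPositive_zsmul hnt hr hr' _)

theorem IsPositive.add_zsmul_of_not_isPositive [FiniteDimensional ℂ U] (hirr : ρ.IsIrreducible)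
    (hnt : ρ.IsNontrivial) (hfin : ∀ g, FiniteDimensional ℂ (ρ.weightSpace μ g))
    (hex : ∃ g, ρ.weightSpace μ g ≠ ⊥) (hcyc : ¬ IsAddCyclic (Fin n → ℤ))
    {a r : Fin n → ℤ} (ha : ρ.IsPositive a) (hr : ¬ ρ.IsPositive r) (hr' : ¬ ρ.IsPositive (-r))
    (k : ℤ) : ρ.IsPositive (a + k • r) := by
  obtain ⟨g, hg⟩ := hex
  obtain ⟨v, hv, hv₀⟩ := Submodule.exists_mem_ne_zero_of_ne_bot hg
  obtain ⟨N, hN, hNr⟩ := ((eventually_ge_atTop 1).and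
    (ha.eventually_isPositive_zsmul_add hirr r)).exists
  refine isPositive_of_mem_eventualKer hirr (fun x b => ?_) hv₀
  have hshift := tendsto_atTop_add_const_right atTop (-N) tendsto_id
  filter_upwards [hshift.eventually (ha.eventually_weightSpace_eq_bot hnt hfin (g + x)),
    ha.eventually_forall_weight_ne_zero (μ := μ) hnt hr hr' (g + x)] with i hbot hw u
  have hiN : g + x + (i + -N) • a + N • a = g + x + i • a := by module
  have hline := (ha.zsmul hN).weightSpace_add_add_zsmul_eq_bot hirr hnt hfin hcyc hNr hr hr' hbot
    (by simpa only [id, hiN] using hw) (i * k)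
  rw [id, hiN] at hline
  rw [← Submodule.mem_bot ℂ, ← hline]
  exact X_mem_weightSpace_of_add_eq hv _ u b (by module)

end GradedRep

/-! ### Archimedean cones -/

/-- The set of strictly positive elements of an archimedean total preorder on an abelian group.
The preorder need not be antisymmetric: elements that are neither positive nor negative count as
equivalent to `0`. -/
structure IsArchimedeanCone {G : Type*} [AddCommGroup G] (P : Set G) : Prop where
  zero_notMem : 0 ∉ P
  add_mem : ∀ {r s}, r ∈ P → s ∈ P → r + s ∈ P
  eventually_zsmul_add_mem : ∀ {a}, a ∈ P → ∀ x, ∀ᶠ N : ℤ in Filter.atTop, N • a + x ∈ P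
  add_mem_of_notMem : ∀ {a r}, a ∈ P → r ∉ P → -r ∉ P → a + r ∈ P

namespace IsArchimedeanCone

variable {G : Type*} [AddCommGroup G] {P : Set G}

/-- The subgroup of elements that are neither positive nor negative. -/
def neutral (h : IsArchimedeanCone P) : AddSubgroup G where
  carrier := {r | r ∉ P ∧ -r ∉ P}
  zero_mem' := ⟨h.zero_notMem, by rw [neg_zero]; exact h.zero_notMem⟩
  neg_mem' := fun ⟨hr, hr'⟩ => ⟨hr', by rwa [neg_neg]⟩
  add_mem' := by
    rintro r s ⟨hr, hr'⟩ ⟨hs, hs'⟩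
    refine ⟨fun hrs => hs ?_, fun hrs => hs' ?_⟩
    · have hmem := h.add_mem_of_notMem hrs hr' (by rwa [neg_neg])
      rwa [add_neg_cancel_comm] at hmem
    · have hmem := h.add_mem_of_notMem hrs hr hr'
      rwa [neg_add_rev, neg_add_cancel_right] at hmem

theorem mem_or_mem_neutral_or_neg_mem (h : IsArchimedeanCone P) (r : G) :
    r ∈ P ∨ r ∈ h.neutral ∨ -r ∈ P := by
  have hneutral : r ∉ P → -r ∉ P → r ∈ h.neutral := And.intro
  tauto

theorem zsmul_mem (h : IsArchimedeanCone P) {r : G} (hr : r ∈ P) {k : ℤ} (hk : 1 ≤ k) :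
    k • r ∈ P := by
  induction k, hk using Int.leInduction with
  | base => rwa [one_smul]
  | succ k _ ih =>
    rw [add_smul, one_smul]
    exact h.add_mem ih hr

theorem neg_notMem (h : IsArchimedeanCone P) {r : G} (hr : r ∈ P) : -r ∉ P := fun hr' =>
  h.zero_notMem (add_neg_cancel r ▸ h.add_mem hr hr')

theorem add_mem_of_mem_neutral (h : IsArchimedeanCone P) {a r : G} (ha : a ∈ P)
    (hr : r ∈ h.neutral) : a + r ∈ P :=
  h.add_mem_of_notMem ha hr.1 hr.2

theorem add_zsmul_mem (h : IsArchimedeanCone P) {a r : G} (ha : a ∈ P)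
    (hr : r ∈ P ∨ r ∈ h.neutral) {k : ℤ} (hk : 0 ≤ k) : a + k • r ∈ P := by
  rcases hr with hr | hr
  · rcases hk.eq_or_lt with rfl | hk
    · rwa [zero_smul, add_zero]
    · exact h.add_mem ha (h.zsmul_mem hr hk)
  · exact h.add_mem_of_mem_neutral ha (h.neutral.zsmul_mem hr k)

theorem exists_mem_neutral_add_zsmul (h : IsArchimedeanCone P) {β : G} (hβ : β ∈ P)
    (hmin : ∀ s ∈ P, β - s ∉ P) (m : G) : ∃ a ∈ h.neutral, ∃ d : ℤ, m = a + d • β := by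
  obtain ⟨N, hN⟩ := Filter.eventually_atTop.1 (h.eventually_zsmul_add_mem hβ (-m))
  obtain ⟨N', hN'⟩ := (h.eventually_zsmul_add_mem hβ m).exists
  have hbdd : ∀ d : ℤ, m - d • β ∈ P ∨ m - d • β ∈ h.neutral → d ≤ N := by
    intro d hd
    by_contra! hlt
    have hneg := hN d hlt.le
    rw [show d • β + -m = -(m - d • β) by abel] at hneg
    exact hd.elim (fun hd => h.neg_notMem hd hneg) fun hd => hd.2 hneg
  have hex : ∃ d : ℤ, m - d • β ∈ P ∨ m - d • β ∈ h.neutral :=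
    ⟨-N', Or.inl (by rwa [neg_smul, sub_neg_eq_add, add_comm])⟩
  obtain ⟨d, hd, hmax⟩ := Int.exists_greatest_of_bdd ⟨N, hbdd⟩ hex
  refine ⟨m - d • β, hd.resolve_left fun hs => ?_, d, (sub_add_cancel _ _).symm⟩
  rcases h.mem_or_mem_neutral_or_neg_mem (m - (d + 1) • β) with hm | hm | hm
  · exact (Int.lt_succ d).not_ge (hmax _ (Or.inl hm))
  · exact (Int.lt_succ d).not_ge (hmax _ (Or.inr hm))
  · exact hmin _ hs (by rwa [show β - (m - d • β) = -(m - (d + 1) • β) by module])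

theorem exists_half (h : IsArchimedeanCone P) {ε s : G} (hs : s ∈ P) (hεs : ε - s ∈ P) :
    ∃ t ∈ P, ε - (2 : ℤ) • t ∈ P ∨ ε - (2 : ℤ) • t ∈ h.neutral := by
  rcases h.mem_or_mem_neutral_or_neg_mem (ε - (2 : ℤ) • s) with hpos | hzero | hneg
  · exact ⟨s, hs, Or.inl hpos⟩
  · exact ⟨s, hs, Or.inr hzero⟩
  · refine ⟨ε - s, hεs, Or.inl ?_⟩
    rwa [show ε - (2 : ℤ) • (ε - s) = -(ε - (2 : ℤ) • s) by module]

theorem exists_sub_zsmul_mem (h : IsArchimedeanCone P) (hdense : ∀ β ∈ P, ∃ s ∈ P, β - s ∈ P)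
    {δ : G} (hδ : δ ∈ P) {m : ℤ} (hm : 1 ≤ m) : ∃ ε ∈ P, δ - m • ε ∈ P := by
  induction m, hm using Int.leInduction with
  | base => simpa only [one_smul] using hdense δ hδ
  | succ m hm ih =>
    obtain ⟨ε, hε, hδε⟩ := ih
    obtain ⟨s, hs, hεs⟩ := hdense ε hε
    obtain ⟨t, ht, hεt⟩ := h.exists_half hs hεs
    have hmem := h.add_zsmul_mem (h.add_zsmul_mem hδε hεt (k := m) (by lia)) (Or.inl ht)
      (k := m - 1) (by lia)
    refine ⟨t, ht, ?_⟩
    rwa [show δ - m • ε + m • (ε - (2 : ℤ) • t) + (m - 1) • t = δ - (m + 1) • t by module] at hmem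

end IsArchimedeanCone

/-! ### Highest weights from positive directions -/

namespace GradedRep

section Dichotomy

variable {n : ℕ} {U B V : Type*} [AddCommGroup U] [Module ℂ U] [CommRing B] [Algebra ℂ B]
  [AddCommGroup V] [Module ℂ V] {ρ : GradedRep (Fin n → ℤ) U B V} {μ : U → ℂ}

open Filter

theorem exists_isHighest_of_bdd {K : AddSubgroup (Fin n → ℤ)} {β g : Fin n → ℤ}
    (hg : ρ.weightSpace μ g ≠ ⊥) {k₀ : ℤ}
    (hbdd : ∀ d : ℤ, ∀ κ ∈ K, ρ.weightSpace μ (g + κ + d • β) ≠ ⊥ → d ≤ k₀) :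
    ∃ h, ρ.weightSpace μ h ≠ ⊥ ∧ ∀ r, posDeg K β r → ρ.weightSpace μ (h + r) = ⊥ := by
  obtain ⟨d, ⟨κ, hκ, hne⟩, hmax⟩ := Int.exists_greatest_of_bdd
    (P := fun d => ∃ κ ∈ K, ρ.weightSpace μ (g + κ + d • β) ≠ ⊥)
    ⟨k₀, fun d ⟨κ, hκ, h⟩ => hbdd d κ hκ h⟩ ⟨0, 0, K.zero_mem, by simpa using hg⟩
  refine ⟨_, hne, ?_⟩
  rintro _ ⟨a, ha, e, he, rfl⟩
  by_contra hne'
  rw [show g + κ + d • β + (a + e • β) = g + (κ + a) + (d + e) • β by module] at hne'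
  have hle := hmax (d + e) ⟨κ + a, K.add_mem hκ ha, hne'⟩
  lia

theorem eventually_forall_ne_zero_weight_ne_zero (ρ : GradedRep (Fin n → ℤ) U B V) (μ : U → ℂ)
    (g : Fin n → ℤ) :
    ∀ᶠ L : ℤ in atTop, ∀ ε : Fin n → ℤ, ε ≠ 0 → μ ρ.u₀ + ρ.p ρ.u₀ (g + L • ε) ≠ 0 := by
  by_cases hex : ∃ y, μ ρ.u₀ + ρ.p ρ.u₀ (g + y) = 0
  · obtain ⟨y, hy⟩ := hex
    filter_upwards [eventually_gt_atTop (∑ i, |y i|), eventually_ge_atTop 0] with L hL hL₀ ε hε h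
    obtain rfl : L • ε = y := add_left_cancel (weight_injective (h.trans hy.symm))
    obtain ⟨i, hi⟩ := Function.ne_iff.1 hε
    have hle : |(L • ε) i| ≤ ∑ i, |(L • ε) i| :=
      Finset.single_le_sum (fun i _ => abs_nonneg ((L • ε) i)) (Finset.mem_univ i)
    rw [Pi.smul_apply, smul_eq_mul, abs_mul, abs_of_nonneg hL₀] at hle
    exact (le_mul_of_one_le_right hL₀ (Int.one_le_abs hi)).not_gt (hle.trans_lt hL)
  · push Not at hex
    exact Eventually.of_forall fun L ε _ => hex _

theorem IsPositive.lt_finrank (hnt : ρ.IsNontrivial)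
    (hfin : ∀ g, FiniteDimensional ℂ (ρ.weightSpace μ g)) {ε : Fin n → ℤ} (hε : ρ.IsPositive ε)
    {g : Fin n → ℤ} {M : ℤ} (hne : ρ.weightSpace μ (g + M • ε) ≠ ⊥)
    (hw : ∀ L ≥ M, μ ρ.u₀ + ρ.p ρ.u₀ (g + L • ε) ≠ 0) {d : ℕ} (hM : 2 * (d + 5) ≤ M) :
    d < Module.finrank ℂ (ρ.weightSpace μ g) := by
  obtain ⟨k₀, hk₀⟩ := eventually_atTop.1 (hε.eventually_weightSpace_eq_bot hnt hfin g)
  obtain ⟨L, hL, hmax⟩ := Int.exists_greatest_of_bdd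
    (P := fun L : ℤ => ρ.weightSpace μ (g + L • ε) ≠ ⊥)
    ⟨k₀, fun L hL => le_of_not_ge fun hle => hL (hk₀ L hle)⟩ ⟨M, hne⟩
  have hML := hmax M hne
  obtain ⟨v, hv, hv₀⟩ := Submodule.exists_mem_ne_zero_of_ne_bot hL
  have hpos : ∀ j : ℤ, 1 ≤ j → ρ.X (j • ε) ρ.u₀ 1 v = 0 := by
    intro j hj
    by_contra hne'
    have hle := hmax (L + j) ((Submodule.ne_bot_iff _).2
      ⟨_, X_mem_weightSpace_of_add_eq hv (j • ε) _ 1 (by module), hne'⟩)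
    lia
  have := hfin (g + L • ε - L • ε)
  have hlt := lt_finrank_of_line (hε.ne_zero hnt) hv₀ hv (hw L hML) hpos (hM.trans hML)
  rwa [add_sub_cancel_right] at hlt

theorem IsPositive.exists_isHighest_of_isAddCyclic [IsAddCyclic (Fin n → ℤ)]
    (hnt : ρ.IsNontrivial) (hfin : ∀ g, FiniteDimensional ℂ (ρ.weightSpace μ g))
    (hex : ∃ g, ρ.weightSpace μ g ≠ ⊥) {δ : Fin n → ℤ} (hδ : ρ.IsPositive δ) :
    ∃ K β, IsDirectSumDecomp K β ∧
      ∃ h, ρ.weightSpace μ h ≠ ⊥ ∧ ∀ r, posDeg K β r → ρ.weightSpace μ (h + r) = ⊥ := by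
  obtain ⟨g, hg⟩ := hex
  obtain ⟨β, hβ, hgen⟩ : ∃ β, ρ.IsPositive β ∧ ∀ m, ∃ d : ℤ, m = d • β := by
    obtain ⟨z, hz⟩ := IsAddCyclic.exists_generator (α := Fin n → ℤ)
    simp only [AddSubgroup.mem_zmultiples_iff] at hz
    obtain ⟨k, rfl⟩ := hz δ
    rcases lt_trichotomy k 0 with hk | rfl | hk
    · refine ⟨-z, IsPositive.of_zsmul (neg_pos.2 hk) (by rwa [neg_smul_neg]), fun m => ?_⟩
      obtain ⟨d, rfl⟩ := hz m
      exact ⟨-d, (neg_smul_neg d z).symm⟩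
    · exact absurd (zero_zsmul z) (hδ.ne_zero hnt)
    · exact ⟨z, hδ.of_zsmul hk, fun m => (hz m).imp fun _ => Eq.symm⟩
  refine ⟨⊥, β, ⟨fun m => ?_, fun d hd => ?_⟩, ?_⟩
  · obtain ⟨d, hd⟩ := hgen m
    exact ⟨0, zero_mem _, d, by rw [zero_add, hd]⟩
  · by_contra hd₀
    exact zsmul_ne_zero ρ hd₀ (hβ.ne_zero hnt) (AddSubgroup.mem_bot.1 hd)
  · obtain ⟨k₀, hk₀⟩ := eventually_atTop.1 (hβ.eventually_weightSpace_eq_bot hnt hfin g)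
    refine exists_isHighest_of_bdd hg (k₀ := k₀) fun d κ hκ hne => le_of_not_ge fun hle => ?_
    rw [AddSubgroup.mem_bot.1 hκ, add_zero] at hne
    exact hne (hk₀ d hle)

theorem exists_isHighest_of_forall_posDeg (hirr : ρ.IsIrreducible) (hnt : ρ.IsNontrivial)
    (hfin : ∀ g, FiniteDimensional ℂ (ρ.weightSpace μ g)) (hex : ∃ g, ρ.weightSpace μ g ≠ ⊥)
    (hcyc : ¬ IsAddCyclic (Fin n → ℤ)) {K : AddSubgroup (Fin n → ℤ)} {β : Fin n → ℤ}
    (hpos : ∀ r, posDeg K β r → ρ.IsPositive r) :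
    ∃ h, ρ.weightSpace μ h ≠ ⊥ ∧ ∀ r, posDeg K β r → ρ.weightSpace μ (h + r) = ⊥ := by
  obtain ⟨g, hg⟩ := hex
  have hβ : ρ.IsPositive β := hpos β ⟨0, zero_mem _, 1, le_rfl, by rw [one_smul, zero_add]⟩
  obtain ⟨k₀, hk₀⟩ := eventually_atTop.1 (hβ.eventually_weightSpace_eq_bot hnt hfin g)
  refine exists_isHighest_of_bdd hg (k₀ := k₀) fun d κ hκ hne => ?_
  by_contra! hlt
  have hsub := (hpos (κ + (d - k₀) • β) ⟨κ, hκ, d - k₀, by lia, rfl⟩).weightSpace_sub_ne_bot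
    hirr hnt hcyc hne
  rw [show g + κ + d • β - (κ + (d - k₀) • β) = g + k₀ • β by module] at hsub
  exact hsub (hk₀ k₀ le_rfl)

variable [NeZero n] [Algebra.FiniteType ℂ B] [FiniteDimensional ℂ U]

theorem isArchimedeanCone_setOf_isPositive (hirr : ρ.IsIrreducible) (hnt : ρ.IsNontrivial)
    (hfin : ∀ g, FiniteDimensional ℂ (ρ.weightSpace μ g)) (hex : ∃ g, ρ.weightSpace μ g ≠ ⊥)
    (hcyc : ¬ IsAddCyclic (Fin n → ℤ)) : IsArchimedeanCone {r | ρ.IsPositive r} where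
  zero_notMem := hnt.not_isPositive_zero
  add_mem := IsPositive.add
  eventually_zsmul_add_mem ha x := ha.eventually_isPositive_zsmul_add hirr x
  add_mem_of_notMem {_ r} ha hr hr' :=
    one_zsmul r ▸ IsPositive.add_zsmul_of_not_isPositive hirr hnt hfin hex hcyc ha hr hr' 1

theorem IsPositive.exists_isHighest_of_minimal (hirr : ρ.IsIrreducible) (hnt : ρ.IsNontrivial)
    (hfin : ∀ g, FiniteDimensional ℂ (ρ.weightSpace μ g)) (hex : ∃ g, ρ.weightSpace μ g ≠ ⊥)
    (hcyc : ¬ IsAddCyclic (Fin n → ℤ)) {β : Fin n → ℤ} (hβ : ρ.IsPositive β)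
    (hmin : ∀ s, ρ.IsPositive s → ¬ ρ.IsPositive (β - s)) :
    ∃ K, IsDirectSumDecomp K β ∧
      ∃ h, ρ.weightSpace μ h ≠ ⊥ ∧ ∀ r, posDeg K β r → ρ.weightSpace μ (h + r) = ⊥ := by
  have hC := isArchimedeanCone_setOf_isPositive hirr hnt hfin hex hcyc
  refine ⟨hC.neutral, ⟨hC.exists_mem_neutral_add_zsmul hβ hmin, fun d hd => ?_⟩,
    exists_isHighest_of_forall_posDeg hirr hnt hfin hex hcyc ?_⟩
  · by_contra hd₀
    rcases lt_or_gt_of_ne hd₀ with hlt | hgt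
    · exact hd.2 (by rw [← neg_smul]; exact hβ.zsmul (by lia))
    · exact hd.1 (hβ.zsmul (by lia))
  · rintro _ ⟨κ, hκ, d, hd, rfl⟩
    rw [add_comm]
    exact hC.add_mem_of_mem_neutral (hβ.zsmul hd) hκ

/-- If every positive element could be split into two, then a single weight space would be the
bottom of arbitrarily long strings ending in a highest weight space, so its dimension would be
unbounded by `lt_finrank_of_line`. -/
theorem IsPositive.exists_minimal (hirr : ρ.IsIrreducible) (hnt : ρ.IsNontrivial)
    (hfin : ∀ g, FiniteDimensional ℂ (ρ.weightSpace μ g)) (hex : ∃ g, ρ.weightSpace μ g ≠ ⊥)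
    (hcyc : ¬ IsAddCyclic (Fin n → ℤ)) {δ : Fin n → ℤ} (hδ : ρ.IsPositive δ) :
    ∃ β, ρ.IsPositive β ∧ ∀ s, ρ.IsPositive s → ¬ ρ.IsPositive (β - s) := by
  by_contra! hdense
  have hC := isArchimedeanCone_setOf_isPositive hirr hnt hfin hex hcyc
  obtain ⟨g, hg⟩ := hex
  set d := Module.finrank ℂ (ρ.weightSpace μ (g - δ))
  obtain ⟨M, hM⟩ := eventually_atTop.1 <| (eventually_ge_atTop (2 * (d + 5) : ℤ)).and <|
    eventually_forall_ne_zero_weight_ne_zero ρ μ (g - δ)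
  have hdM := (hM M le_rfl).1
  obtain ⟨ε, hε, hδε⟩ := hC.exists_sub_zsmul_mem hdense hδ (m := M) (by lia)
  have hne := IsPositive.weightSpace_sub_ne_bot hirr hnt hcyc hδε hg
  rw [show g - (δ - M • ε) = g - δ + M • ε by abel] at hne
  exact (IsPositive.lt_finrank hnt hfin hε hne
    (fun L hL => (hM L hL).2 ε (IsPositive.ne_zero hnt hε)) hdM).false

theorem IsPositive.exists_isHighest (hirr : ρ.IsIrreducible) (hnt : ρ.IsNontrivial)
    (hfin : ∀ g, FiniteDimensional ℂ (ρ.weightSpace μ g)) (hex : ∃ g, ρ.weightSpace μ g ≠ ⊥)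
    {δ : Fin n → ℤ} (hδ : ρ.IsPositive δ) :
    ∃ K β, IsDirectSumDecomp K β ∧
      ∃ h, ρ.weightSpace μ h ≠ ⊥ ∧ ∀ r, posDeg K β r → ρ.weightSpace μ (h + r) = ⊥ := by
  by_cases hcyc : IsAddCyclic (Fin n → ℤ)
  · exact hδ.exists_isHighest_of_isAddCyclic hnt hfin hex
  · obtain ⟨β, hβ, hmin⟩ := hδ.exists_minimal hirr hnt hfin hex hcyc
    obtain ⟨K, hK⟩ := hβ.exists_isHighest_of_minimal hirr hnt hfin hex hcyc hmin
    exact ⟨K, β, hK⟩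

end Dichotomy

/-! ### The highest layer -/

section HighestLayer

variable {G U B V : Type*} [AddCommGroup G] [AddCommGroup U] [Module ℂ U]
  [CommRing B] [Algebra ℂ B] [AddCommGroup V] [Module ℂ V]

/-- The sum of the weight spaces with index in `s`. -/
def weightSum (ρ : GradedRep G U B V) (μ : U → ℂ) (s : Set G) : Submodule ℂ V :=
  ⨆ i ∈ s, ρ.weightSpace μ i

/-- The weight vectors of height `0`, for the height function `ℓ`. -/
def highestLayer (ρ : GradedRep G U B V) (μ : U → ℂ) (ℓ : G →+ ℤ) : Submodule ℂ V :=
  ρ.weightSum μ {i | ℓ i = 0}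

/-- The sum of the weight spaces of negative height. -/
def lowerPart (ρ : GradedRep G U B V) (μ : U → ℂ) (ℓ : G →+ ℤ) : Submodule ℂ V :=
  ρ.weightSum μ {i | ℓ i < 0}

/-- Subspaces stable under all operators that do not raise the height. -/
def IsLowerInvariant (ρ : GradedRep G U B V) (ℓ : G →+ ℤ) (W : Submodule ℂ V) : Prop :=
  ∀ r, ℓ r ≤ 0 → ∀ u b, ∀ v ∈ W, ρ.X r u b v ∈ W

/-- The vectors of `W` that remain in `W` under all height raising operators. -/
def raisingCore (ρ : GradedRep G U B V) (ℓ : G →+ ℤ) (W : Submodule ℂ V) : Submodule ℂ V :=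
  W ⊓ ⨅ (r) (_ : 0 < ℓ r) (u) (b), W.comap (ρ.X r u b)

/-- The height `ℓ` is bounded by `0` on the weights of an irreducible representation, and `0` is
a weight. -/
structure HasHighestLayer (ρ : GradedRep G U B V) (μ : U → ℂ) (ℓ : G →+ ℤ) : Prop where
  irreducible : ρ.IsIrreducible
  ne_bot : ρ.weightSpace μ 0 ≠ ⊥
  eq_bot : ∀ i, 0 < ℓ i → ρ.weightSpace μ i = ⊥

/-- The action of the degree `K` part on a subspace. -/
def restrict (ρ : GradedRep G U B V) (K : AddSubgroup G) (T : Submodule ℂ V)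
    (hT : ∀ r ∈ K, ∀ u b, ∀ v ∈ T, ρ.X r u b v ∈ T) : GradedRep K U B T where
  p :=
    { toFun u := (ρ.p u).comp K.subtype
      map_add' u u' := by ext; simp
      map_smul' c u := by ext; simp }
  X r := LinearMap.mk₂ ℂ (fun u b => (ρ.X r u b).restrict (hT r r.2 u b))
    (fun u u' b => by ext; simp) (fun c u b => by ext; simp)
    (fun u b b' => by ext; simp) (fun c u b => by ext; simp)
  lie_X r u b s v c := LinearMap.ext fun w => Subtype.ext <|
    LinearMap.congr_fun (ρ.lie_X r u b s v c) w
  u₀ := ρ.u₀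
  p_u₀_ne_zero hx := ρ.p_u₀_ne_zero fun h => hx (Subtype.ext h)

variable {ρ : GradedRep G U B V} {μ : U → ℂ} {ℓ : G →+ ℤ}

theorem weightSpace_restrict {K : AddSubgroup G} {T : Submodule ℂ V}
    (hT : ∀ r ∈ K, ∀ u b, ∀ v ∈ T, ρ.X r u b v ∈ T) (r : K) :
    (ρ.restrict K T hT).weightSpace μ r = (ρ.weightSpace μ (r : G)).comap T.subtype := by
  ext v
  rw [Submodule.mem_comap, mem_weightSpace, mem_weightSpace]
  exact forall_congr' fun _ => Subtype.ext_iff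

theorem weightSpace_le_weightSum {s : Set G} {i : G} (hi : i ∈ s) :
    ρ.weightSpace μ i ≤ ρ.weightSum μ s :=
  le_biSup (ρ.weightSpace μ) hi

theorem weightSpace_le_highestLayer {i : G} (hi : ℓ i = 0) :
    ρ.weightSpace μ i ≤ ρ.highestLayer μ ℓ :=
  weightSpace_le_weightSum hi

theorem X_mem_weightSum {s t : Set G} {r : G} (h : ∀ i ∈ s, i + r ∈ t) {v : V}
    (hv : v ∈ ρ.weightSum μ s) (u : U) (b : B) : ρ.X r u b v ∈ ρ.weightSum μ t := by
  have hle : ρ.weightSum μ s ≤ (ρ.weightSum μ t).comap (ρ.X r u b) :=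
    iSup₂_le fun i hi x hx => weightSpace_le_weightSum (h i hi) (X_mem_weightSpace hx r u b)
  exact hle hv

theorem X_mem_highestLayer {r : G} (hr : r ∈ ℓ.ker) (u : U) (b : B) {v : V}
    (hv : v ∈ ρ.highestLayer μ ℓ) : ρ.X r u b v ∈ ρ.highestLayer μ ℓ :=
  X_mem_weightSum (fun i (hi : ℓ i = 0) => by
    rw [Set.mem_ofPred_eq, map_add, hi, AddMonoidHom.mem_ker.1 hr, add_zero]) hv u b

theorem X_mem_lowerPart {r : G} (hr : ℓ r < 0) (u : U) (b : B) {v : V}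
    (hv : v ∈ ρ.highestLayer μ ℓ) : ρ.X r u b v ∈ ρ.lowerPart μ ℓ :=
  X_mem_weightSum (fun i (hi : ℓ i = 0) => by
    rwa [Set.mem_ofPred_eq, map_add, hi, zero_add]) hv u b

theorem isLowerInvariant_lowerPart : ρ.IsLowerInvariant ℓ (ρ.lowerPart μ ℓ) :=
  fun _ hr u b _ hv => X_mem_weightSum (fun i (hi : ℓ i < 0) => by
    rw [Set.mem_ofPred_eq, map_add]
    exact add_neg_of_neg_of_nonpos hi hr) hv u b

theorem disjoint_highestLayer_lowerPart :
    Disjoint (ρ.highestLayer μ ℓ) (ρ.lowerPart μ ℓ) :=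
  iSupIndep_weightSpace.disjoint_biSup_biSup <|
    Set.disjoint_left.2 fun _ (hi : ℓ _ = 0) (hi' : ℓ _ < 0) => hi'.ne hi

theorem mem_raisingCore {W : Submodule ℂ V} {v : V} :
    v ∈ ρ.raisingCore ℓ W ↔ v ∈ W ∧ ∀ r, 0 < ℓ r → ∀ u b, ρ.X r u b v ∈ W := by
  simp only [raisingCore, Submodule.mem_inf, Submodule.mem_iInf, Submodule.mem_comap]

theorem IsLowerInvariant.raisingCore {W : Submodule ℂ V} (h : ρ.IsLowerInvariant ℓ W) :
    ρ.IsLowerInvariant ℓ (ρ.raisingCore ℓ W) := by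
  intro r hr u b v hv
  rw [mem_raisingCore] at hv ⊢
  refine ⟨h r hr u b v hv.1, fun s hs a c => ?_⟩
  rw [ρ.X_X_apply]
  refine add_mem (h r hr u b _ (hv.2 s hs a c)) ?_
  rcases le_or_gt (ℓ (s + r)) 0 with hsr | hsr
  · exact h _ hsr _ _ v hv.1
  · exact hv.2 _ hsr _ _

/-- The smallest lower invariant subspace containing `W` equals its raising core, hence is
invariant: this is the triangular decomposition `U(𝔤) = U(𝔤₋ + 𝔤₀) U(𝔤₊)` without the
enveloping algebra. -/
theorem IsIrreducible.eq_top_of_isLowerInvariant (hirr : ρ.IsIrreducible) {W A : Submodule ℂ V}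
    (hW₀ : W ≠ ⊥) (hWA : W ≤ A) (hW : ∀ r, 0 < ℓ r → ∀ u b, ∀ v ∈ W, ρ.X r u b v = 0)
    (hA : ρ.IsLowerInvariant ℓ A) : A = ⊤ := by
  let C : Set (Submodule ℂ V) := {M | W ≤ M ∧ ρ.IsLowerInvariant ℓ M}
  have hWC : W ≤ sInf C := le_sInf fun M hM => hM.1
  have hC : ρ.IsLowerInvariant ℓ (sInf C) := fun r hr u b v hv =>
    Submodule.mem_sInf.2 fun M hM => hM.2 r hr u b v (Submodule.mem_sInf.1 hv M hM)
  have hcore : sInf C ≤ ρ.raisingCore ℓ (sInf C) :=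
    sInf_le ⟨fun v hv => mem_raisingCore.2 ⟨hWC hv, fun r hr u b => by
      rw [hW r hr u b v hv]; exact zero_mem _⟩, hC.raisingCore⟩
  have hinv : ρ.IsInvariant (sInf C) := by
    intro r u b v hv
    rcases le_or_gt (ℓ r) 0 with hr | hr
    · exact hC r hr u b v hv
    · exact (mem_raisingCore.1 (hcore hv)).2 r hr u b
  obtain ⟨w, hw, hw₀⟩ := Submodule.exists_mem_ne_zero_of_ne_bot hW₀
  rw [eq_top_iff, ← hirr.eq_top hinv (hWC hw) hw₀]
  exact sInf_le ⟨hWA, hA⟩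

variable (ρ μ ℓ) in
/-- The action of the height zero part on the highest layer. -/
def layerRep : GradedRep ℓ.ker U B (ρ.highestLayer μ ℓ) :=
  ρ.restrict ℓ.ker (ρ.highestLayer μ ℓ) fun _ hr u b _ => X_mem_highestLayer hr u b

namespace HasHighestLayer

theorem X_apply_eq_zero (h : ρ.HasHighestLayer μ ℓ) {r : G} (hr : 0 < ℓ r) (u : U) (b : B) {v : V}
    (hv : v ∈ ρ.highestLayer μ ℓ) : ρ.X r u b v = 0 := by
  have hmem : ρ.X r u b v ∈ ρ.weightSum μ {i | 0 < ℓ i} :=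
    X_mem_weightSum (fun i (hi : ℓ i = 0) => by
      rwa [Set.mem_ofPred_eq, map_add, hi, zero_add]) hv u b
  have hbot : ρ.weightSum μ {i | 0 < ℓ i} ≤ ⊥ := iSup₂_le fun i hi => (h.eq_bot i hi).le
  exact (Submodule.mem_bot ℂ).1 (hbot hmem)

theorem highestLayer_ne_bot (h : ρ.HasHighestLayer μ ℓ) : ρ.highestLayer μ ℓ ≠ ⊥ := fun hbot =>
  h.ne_bot (le_bot_iff.1 (hbot ▸ weightSpace_le_highestLayer (map_zero ℓ)))

theorem eq_zero_of_mem_lowerPart (h : ρ.HasHighestLayer μ ℓ) {w : V} (hw : w ∈ ρ.lowerPart μ ℓ)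
    (hraise : ∀ r, 0 < ℓ r → ∀ u b, ρ.X r u b w = 0) : w = 0 := by
  by_contra hw₀
  have htop : ρ.lowerPart μ ℓ = ⊤ := by
    refine h.irreducible.eq_top_of_isLowerInvariant (W := ℂ ∙ w) (by simpa using hw₀)
      (by simpa using hw) (fun r hr u b v hv => ?_) isLowerInvariant_lowerPart
    obtain ⟨c, rfl⟩ := Submodule.mem_span_singleton.1 hv
    rw [map_smul, hraise r hr, smul_zero]
  have hdisj := disjoint_highestLayer_lowerPart (ρ := ρ) (μ := μ) (ℓ := ℓ)
  rw [htop, disjoint_top] at hdisj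
  exact h.highestLayer_ne_bot hdisj

/-- An ideal whose height zero part kills the highest layer kills its images under lowering
operators one height at a time, because raising them again lands in the part already treated. -/
theorem X_eq_zero_of_isIdealFamily (h : ρ.HasHighestLayer μ ℓ) {Φ : Set (U × B)}
    (hΦ : ρ.IsIdealFamily Φ)
    (hker : ∀ q ∈ Φ, ∀ r ∈ ℓ.ker, ∀ v ∈ ρ.highestLayer μ ℓ, ρ.X r q.1 q.2 v = 0)
    {u : U} {b : B} (hub : (u, b) ∈ Φ) (r : G) : ρ.X r u b = 0 := by
  have hkill : ∀ k : ℕ, ∀ r, -(k : ℤ) ≤ ℓ r → ∀ q ∈ Φ, ∀ v ∈ ρ.highestLayer μ ℓ,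
      ρ.X r q.1 q.2 v = 0 := by
    intro k
    induction k with
    | zero =>
      intro r hr q hq v hv
      rcases hr.lt_or_eq with hr | hr
      · exact h.X_apply_eq_zero (by simpa using hr) _ _ hv
      · exact hker q hq r (AddMonoidHom.mem_ker.2 (by simpa using hr.symm)) v hv
    | succ k ih =>
      intro r hr q hq v hv
      rcases hr.lt_or_eq with hr | hr
      · exact ih r (by lia) q hq v hv
      · refine h.eq_zero_of_mem_lowerPart (X_mem_lowerPart (by lia) _ _ hv) fun s hs a c => ?_
        rw [ρ.X_X_apply, h.X_apply_eq_zero hs a c hv, map_zero, zero_add]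
        exact ih (s + r) (by rw [map_add]; lia) _ (hΦ q hq a s r c) v hv
  obtain ⟨v, hv, hv₀⟩ := Submodule.exists_mem_ne_zero_of_ne_bot h.highestLayer_ne_bot
  exact hΦ.X_eq_zero h.irreducible hv₀
    (fun q hq r => hkill (ℓ r).natAbs r (by lia) q hq v hv) hub r

theorem isLowerInvariant_map_sup_lowerPart {W : Submodule ℂ (ρ.highestLayer μ ℓ)}
    (hW : (layerRep ρ μ ℓ).IsInvariant W) :
    ρ.IsLowerInvariant ℓ (W.map (ρ.highestLayer μ ℓ).subtype ⊔ ρ.lowerPart μ ℓ) := by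
  intro r hr u b v hv
  obtain ⟨_, ⟨w, hw, rfl⟩, z, hz, rfl⟩ := Submodule.mem_sup.1 hv
  rw [map_add]
  refine add_mem ?_ (Submodule.mem_sup_right (isLowerInvariant_lowerPart r hr u b z hz))
  rcases hr.lt_or_eq with hr | hr
  · exact Submodule.mem_sup_right (X_mem_lowerPart hr u b w.2)
  · exact Submodule.mem_sup_left ⟨_, hW ⟨r, hr⟩ u b w hw, rfl⟩

theorem isIrreducible_layerRep (h : ρ.HasHighestLayer μ ℓ) : (layerRep ρ μ ℓ).IsIrreducible := by
  refine ⟨Submodule.nontrivial_iff_ne_bot.2 h.highestLayer_ne_bot, fun W hW =>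
    or_iff_not_imp_left.2 fun hW₀ => ?_⟩
  have hle : W.map (ρ.highestLayer μ ℓ).subtype ≤ ρ.highestLayer μ ℓ :=
    Submodule.map_subtype_le _ W
  have hinj := Submodule.map_injective_of_injective (ρ.highestLayer μ ℓ).injective_subtype
  have htop := h.irreducible.eq_top_of_isLowerInvariant
    (W := W.map (ρ.highestLayer μ ℓ).subtype)
    (fun hbot => hW₀ (hinj (hbot.trans (Submodule.map_bot _).symm))) le_sup_left
    (fun r hr u b v hv => h.X_apply_eq_zero hr u b (hle hv)) (isLowerInvariant_map_sup_lowerPart hW)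
  have hmod := sup_inf_assoc_of_le (ρ.lowerPart μ ℓ) hle
  rw [htop, top_inf_eq, disjoint_highestLayer_lowerPart.symm.eq_bot, sup_bot_eq] at hmod
  refine hinj ?_
  rw [← hmod, Submodule.map_subtype_top]

theorem boundedIrreducible_layerRep (h : ρ.HasHighestLayer μ ℓ)
    (hfin : ∀ g, FiniteDimensional ℂ (ρ.weightSpace μ g)) {d : ℕ}
    (hd : ∀ g, ℓ g = 0 → Module.finrank ℂ (ρ.weightSpace μ g) ≤ d) :
    (layerRep ρ μ ℓ).BoundedIrreducible μ d := by
  let e (g : ℓ.ker) : (layerRep ρ μ ℓ).weightSpace μ g ≃ₗ[ℂ] ρ.weightSpace μ (g : G) :=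
    LinearEquiv.ofEq _ _ (weightSpace_restrict _ g) ≪≫ₗ
      Submodule.comapSubtypeEquivOfLe (weightSpace_le_highestLayer g.2)
  refine ⟨h.isIrreducible_layerRep, ⟨0, fun hbot => ?_⟩, fun g => ?_, fun g => ?_⟩
  · have := Submodule.subsingleton_iff_eq_bot.2 hbot
    exact h.ne_bot (Submodule.subsingleton_iff_eq_bot.1 (e 0).symm.toEquiv.subsingleton)
  · have := hfin g
    exact (e g).symm.finiteDimensional
  · exact (e g).finrank_eq.trans_le (hd g g.2)

variable [Nontrivial ℓ.ker] {d : ℕ}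

theorem exists_eval [AddGroup.FG ℓ.ker] [FiniteDimensional ℂ U] (h : ρ.HasHighestLayer μ ℓ)
    (hnt : ρ.IsNontrivial) (hfin : ∀ g, FiniteDimensional ℂ (ρ.weightSpace μ g))
    (hd : ∀ g, ℓ g = 0 → Module.finrank ℂ (ρ.weightSpace μ g) ≤ d) :
    ∃ η : B →ₐ[ℂ] ℂ, ∀ r u b, ρ.X r u b = η b • ρ.X r u 1 := by
  have hlayer : (layerRep ρ μ ℓ).IsNontrivial := by
    by_contra htriv
    simp only [IsNontrivial, not_exists, not_not] at htriv
    obtain ⟨r, u, b, hne⟩ := hnt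
    refine hne (h.X_eq_zero_of_isIdealFamily (isIdealFamily_multiples b) ?_ dvd_rfl r)
    intro q _ r hr v hv
    exact congrArg Subtype.val (LinearMap.congr_fun (htriv ⟨r, hr⟩ q.1 q.2) ⟨v, hv⟩)
  obtain ⟨η, hη⟩ := (h.boundedIrreducible_layerRep hfin hd).exists_eval hlayer
  refine ⟨η, fun r u b => ?_⟩
  have hzero : ρ.X r u (b - η b • 1) = 0 := by
    refine h.X_eq_zero_of_isIdealFamily (isIdealFamily_multiples (b - η b • 1)) ?_ dvd_rfl r
    rintro ⟨u, _⟩ ⟨c, rfl⟩ r hr v hv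
    have hη₀ := hη ⟨r, hr⟩ u ((b - η b • 1) * c)
    have hc : η ((b - η b • 1) * c) = 0 := by simp
    rw [hc, zero_smul] at hη₀
    exact congrArg Subtype.val (LinearMap.congr_fun hη₀ ⟨v, hv⟩)
  rwa [map_sub, map_smul, sub_eq_zero] at hzero

theorem X_eq_zero_of_X_zero_eq_zero (h : ρ.HasHighestLayer μ ℓ)
    (hfin : ∀ g, FiniteDimensional ℂ (ρ.weightSpace μ g))
    (hd : ∀ g, ℓ g = 0 → Module.finrank ℂ (ρ.weightSpace μ g) ≤ d) {s : U} (hs : ρ.p s = 0)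
    (h0 : ρ.X 0 s 1 = 0) (m : G) (b : B) : ρ.X m s b = 0 := by
  have hlayer := (h.boundedIrreducible_layerRep hfin hd).X_eq_zero_of_X_zero_eq_zero (s := s)
    (AddMonoidHom.ext fun x => DFunLike.congr_fun hs (x : G))
    (LinearMap.ext fun v => Subtype.ext (LinearMap.congr_fun h0 (v : V)))
  refine h.X_eq_zero_of_isIdealFamily (isAbelianIdealFamily_smul hs).isIdealFamily ?_
    ⟨1, (one_smul ℂ s).symm⟩ m
  rintro ⟨_, b⟩ ⟨t, rfl⟩ r hr v hv
  have hzero : ρ.X r s b v = 0 :=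
    congrArg Subtype.val (LinearMap.congr_fun (hlayer ⟨r, hr⟩ b) ⟨v, hv⟩)
  rw [map_smul, LinearMap.smul_apply, LinearMap.smul_apply, hzero, smul_zero]

end HasHighestLayer

end HighestLayer

end GradedRep

theorem IsDirectSumDecomp.exists_height {n : ℕ} {K : AddSubgroup (Fin n → ℤ)} {β : Fin n → ℤ}
    (h : IsDirectSumDecomp K β) : ∃ ℓ : (Fin n → ℤ) →+ ℤ, ∀ r, 0 < ℓ r ↔ posDeg K β r := by
  choose a ha d hd using h.1
  have huniq (κ) (hκ : κ ∈ K) (e : ℤ) : d (κ + e • β) = e := by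
    refine sub_eq_zero.1 (h.2 _ ?_)
    have heq : (d (κ + e • β) - e) • β = κ - a (κ + e • β) := by
      rw [sub_smul, sub_eq_sub_iff_add_eq_add, add_comm, ← hd]
    rw [heq]
    exact sub_mem hκ (ha _)
  refine ⟨AddMonoidHom.mk' d fun r s => ?_, fun r => ⟨fun hr => ⟨a r, ha r, d r, hr, hd r⟩, ?_⟩⟩
  · rw [← huniq _ (add_mem (ha r) (ha s)) (d r + d s), add_smul, add_add_add_comm, ← hd, ← hd]
  · rintro ⟨κ, hκ, e, he, rfl⟩
    change 0 < d _
    rw [huniq κ hκ]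
    lia

theorem not_isAddCyclic_pi_int {n : ℕ} (hn : 2 ≤ n) : ¬ IsAddCyclic (Fin n → ℤ) := by
  rintro ⟨g, hg⟩
  have hrank := finrank_le_one (R := ℤ) g fun w => AddSubgroup.mem_zmultiples_iff.1 (hg w)
  rw [Module.finrank_fin_fun] at hrank
  lia

theorem nontrivial_ker_of_two_le {n : ℕ} (hn : 2 ≤ n) (ℓ : (Fin n → ℤ) →+ ℤ) :
    Nontrivial ℓ.ker := by
  by_contra h
  rw [AddSubgroup.nontrivial_iff_ne_bot, not_not, AddMonoidHom.ker_eq_bot_iff] at h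
  have hrank := LinearMap.finrank_le_finrank_of_injective (f := ℓ.toIntLinearMap) h
  rw [Module.finrank_fin_fun, Module.finrank_self] at hrank
  lia

theorem fg_ker {n : ℕ} (ℓ : (Fin n → ℤ) →+ ℤ) : AddGroup.FG ℓ.ker :=
  Module.Finite.iff_addGroup_fg.1
    (inferInstanceAs (Module.Finite ℤ (AddSubgroup.toIntSubmodule ℓ.ker)))

namespace GradedRep

section WeightSpace

variable {G U B V : Type*} [AddCommGroup G] [AddCommGroup U] [Module ℂ U] [CommRing B]
  [Algebra ℂ B] [AddCommGroup V] [Module ℂ V]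

theorem weightSpace_add_p (ρ : GradedRep G U B V) (μ : U → ℂ) (g i : G) :
    ρ.weightSpace (fun u => μ u + ρ.p u g) i = ρ.weightSpace μ (g + i) := by
  ext v
  simp only [mem_weightSpace, map_add, add_assoc]

theorem exists_eigenspace_le_weightSpace {ρ : GradedRep G U B V} {μ : U → ℂ}
    (htop : ⨆ g, ρ.weightSpace μ g = ⊤) {α : ℂ}
    (hα : Module.End.eigenspace (ρ.X 0 ρ.u₀ 1) α ≠ ⊥) :
    ∃ g, Module.End.eigenspace (ρ.X 0 ρ.u₀ 1) α ≤ ρ.weightSpace μ g := by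
  let T := ρ.X 0 ρ.u₀ 1
  have hind := Module.End.eigenspaces_iSupIndep T α
  have hle (g) (hg : μ ρ.u₀ + ρ.p ρ.u₀ g ≠ α) :
      ρ.weightSpace μ g ≤ ⨆ γ, ⨆ (_ : γ ≠ α), T.eigenspace γ :=
    (weightSpace_le_eigenspace g).trans (le_iSup₂_of_le _ hg le_rfl)
  by_cases h : ∃ g, μ ρ.u₀ + ρ.p ρ.u₀ g = α
  · obtain ⟨g, rfl⟩ := h
    have hsup : ρ.weightSpace μ g ⊔ ⨆ γ, ⨆ (_ : γ ≠ μ ρ.u₀ + ρ.p ρ.u₀ g), T.eigenspace γ = ⊤ := by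
      rw [eq_top_iff, ← htop]
      refine iSup_le fun j => ?_
      rcases eq_or_ne j g with rfl | hj
      · exact le_sup_left
      · exact (hle j (weight_injective.ne hj)).trans le_sup_right
    have hmod := inf_sup_assoc_of_le (⨆ γ, ⨆ (_ : γ ≠ μ ρ.u₀ + ρ.p ρ.u₀ g), T.eigenspace γ)
      (weightSpace_le_eigenspace (ρ := ρ) (μ := μ) g)
    rw [hind.eq_bot, bot_sup_eq, sup_comm, hsup, inf_top_eq] at hmod
    exact ⟨g, hmod.ge⟩
  · push Not at h
    refine absurd (disjoint_top.1 (hind.mono_right ?_)) hα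
    rw [← htop]
    exact iSup_le fun j => hle j (h j)

end WeightSpace

section HighestWeight

open Filter

variable {n : ℕ} {U B V : Type*} [AddCommGroup U] [Module ℂ U] [CommRing B] [Algebra ℂ B]
  [AddCommGroup V] [Module ℂ V] {ρ : GradedRep (Fin n → ℤ) U B V} {μ : U → ℂ}
  {ℓ : (Fin n → ℤ) →+ ℤ}

theorem isPositive_of_height_pos (hirr : ρ.IsIrreducible) {z : V} (hz : z ≠ 0)
    (hk : ∀ r, 0 < ℓ r → ∀ u b, ρ.X r u b z = 0) {r : Fin n → ℤ} (hr : 0 < ℓ r) :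
    ρ.IsPositive r := by
  refine isPositive_of_mem_eventualKer hirr (fun x b => ?_) hz
  filter_upwards [eventually_ge_atTop 0, eventually_ge_atTop (1 - ℓ x)] with k hk₀ hkx u
  refine hk _ ?_ u b
  rw [map_add, map_zsmul, smul_eq_mul]
  nlinarith

variable [Algebra.FiniteType ℂ B] [NeZero n]

theorem not_isPositive_of_height_eq_zero (hirr : ρ.IsIrreducible) (hnt : ρ.IsNontrivial)
    (hpos : ∀ r, 0 < ℓ r → ρ.IsPositive r) {β : Fin n → ℤ} (hβ : 0 < ℓ β) {r : Fin n → ℤ}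
    (hr : ℓ r = 0) : ¬ ρ.IsPositive r := by
  intro hr'
  obtain ⟨N, hN⟩ := (hr'.eventually_isPositive_zsmul_add hirr (-β)).exists
  have hsum := hN.add (hpos (β - N • r) (by rwa [map_sub, map_zsmul, hr, smul_zero, sub_zero]))
  rw [show N • r + -β + (β - N • r) = 0 by abel] at hsum
  exact hnt.not_isPositive_zero hsum

variable [FiniteDimensional ℂ U]

theorem exists_hasHighestLayer (hirr : ρ.IsIrreducible) (hnt : ρ.IsNontrivial)
    (hfin : ∀ g, FiniteDimensional ℂ (ρ.weightSpace μ g)) (hex : ∃ g, ρ.weightSpace μ g ≠ ⊥)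
    (hcyc : ¬ IsAddCyclic (Fin n → ℤ)) {K : AddSubgroup (Fin n → ℤ)} {β : Fin n → ℤ}
    (hK : IsDirectSumDecomp K β) {z : V} (hz : z ≠ 0)
    (hk : ∀ r, posDeg K β r → ∀ u b, ρ.X r u b z = 0) :
    ∃ (ℓ : (Fin n → ℤ) →+ ℤ) (g : Fin n → ℤ) (d : ℕ),
      ρ.HasHighestLayer (fun u => μ u + ρ.p u g) ℓ ∧
        ∀ i, ℓ i = 0 → Module.finrank ℂ (ρ.weightSpace (fun u => μ u + ρ.p u g) i) ≤ d := by
  obtain ⟨ℓ, hℓ⟩ := hK.exists_height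
  have hpos (r) (hr : 0 < ℓ r) : ρ.IsPositive r :=
    isPositive_of_height_pos hirr hz (fun r hr => hk r ((hℓ r).1 hr)) hr
  have hβ : 0 < ℓ β := (hℓ β).2 ⟨0, zero_mem _, 1, le_rfl, by rw [one_smul, zero_add]⟩
  obtain ⟨g, hg, hg'⟩ := exists_isHighest_of_forall_posDeg hirr hnt hfin hex hcyc
    fun r hr => hpos r ((hℓ r).2 hr)
  obtain ⟨d, hd⟩ := exists_finrank_le_of_not_isPositive hirr hfin g
  refine ⟨ℓ, g, d, ⟨hirr, ?_, fun i hi => ?_⟩, fun i hi => ?_⟩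
  · rwa [weightSpace_add_p, add_zero]
  · rw [weightSpace_add_p]
    exact hg' i ((hℓ i).1 hi)
  · rw [weightSpace_add_p, ← sub_neg_eq_add]
    have hi' : ℓ (-i) = 0 := by rw [map_neg, hi, neg_zero]
    exact hd (-i) (not_isPositive_of_height_eq_zero hirr hnt hpos hβ hi')

end HighestWeight

end GradedRep

/-! ### The extended Witt algebra -/

theorem pairCC_add_intCast {n : ℕ} (u lam : Fin n → ℂ) (g : Fin n → ℤ) :
    pairCC u (fun i => lam i + g i) = pairCC u lam + pairC u g := by
  simp only [pairCC, pairC, mul_add, Finset.sum_add_distrib]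

/-- The pairing `pairC` as a linear map. -/
def pairHom (n : ℕ) : (Fin n → ℂ) →ₗ[ℂ] ((Fin n → ℤ) →+ ℂ) where
  toFun u := AddMonoidHom.mk' (pairC u) fun m m' => by
    simp [pairC, mul_add, Finset.sum_add_distrib]
  map_add' u u' := AddMonoidHom.ext fun m => by
    change pairC (u + u') m = pairC u m + pairC u' m
    simp [pairC, add_mul, Finset.sum_add_distrib]
  map_smul' c u := AddMonoidHom.ext fun m => by
    change pairC (c • u) m = c * pairC u m
    simp [pairC, mul_assoc, Finset.mul_sum]

theorem exists_pairC_ne_zero (n : ℕ) : ∃ e : Fin n → ℂ, ∀ m, m ≠ 0 → pairC e m ≠ 0 := by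
  obtain ⟨e, he⟩ := exists_linearIndependent_of_le_rank (R := ℚ) (M := ℂ) (n := n) (by
    rw [Complex.rank_rat_complex]
    exact (Cardinal.nat_lt_continuum n).le)
  refine ⟨e, fun m => mt fun hm => funext fun i => ?_⟩
  have hsum : ∑ i, (m i : ℚ) • e i = 0 := by
    rw [← hm, pairC]
    exact Finset.sum_congr rfl fun i _ => by rw [Rat.smul_def, mul_comm, Rat.cast_intCast]
  exact_mod_cast Fintype.linearIndependent_iff.1 he _ hsum i

namespace ExtWittRep

variable {n : ℕ} {S B V : Type*} [AddCommGroup S] [Module ℂ S] [CommRing B] [Algebra ℂ B]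
  [AddCommGroup V] [Module ℂ V] (ρ : ExtWittRep n S B V)

theorem D_zero (r : Fin n → ℤ) (b : B) : ρ.D 0 r b = 0 := by
  simpa using ρ.D_smul_u 0 0 r b

theorem E_zero (r : Fin n → ℤ) (b : B) : ρ.E 0 r b = 0 := by
  simpa using ρ.E_smul_s 0 0 r b

theorem E_sub_smul (s t : S) (a : ℂ) (m : Fin n → ℤ) (b : B) :
    ρ.E (s - a • t) m b = ρ.E s m b - a • ρ.E t m b := by
  rw [sub_eq_add_neg, ← neg_smul, ρ.E_add_s, ρ.E_smul_s, neg_smul, sub_eq_add_neg]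

theorem lie_D_add_E (u v : Fin n → ℂ) (s t : S) (r r' : Fin n → ℤ) (b c : B) :
    ⁅ρ.D u r b + ρ.E s r b, ρ.D v r' c + ρ.E t r' c⁆ =
      ρ.D (pairC u r' • v - pairC v r • u) (r + r') (b * c) +
        ρ.E (pairC u r' • t - pairC v r • s) (r + r') (b * c) := by
  have hED : ⁅ρ.E s r b, ρ.D v r' c⁆ = -(pairC v r • ρ.E s (r + r') (b * c)) := by
    rw [Ring.lie_def, ← neg_sub, ← Ring.lie_def, ρ.comm_DE, mul_comm]
  have hexpand (a e d f : Module.End ℂ V) :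
      ⁅a + e, d + f⁆ = ⁅a, d⁆ + ⁅a, f⁆ + ⁅e, d⁆ + ⁅e, f⁆ := by
    simp only [Ring.lie_def]
    noncomm_ring
  rw [hexpand, ρ.comm_DD, ρ.comm_DE, hED, ρ.comm_EE, E_sub_smul, ρ.E_smul_s, add_comm r' r]
  abel

/-- The loop extended Witt algebra as a graded Lie algebra with `U = ℂⁿ × S`, where `(u, s)` in
degree `r` stands for `D(u,r) + s ⊗ tʳ`. -/
def toGraded : GradedRep (Fin n → ℤ) ((Fin n → ℂ) × S) B V where
  p := (pairHom n).comp (LinearMap.fst ℂ _ _)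
  X r := LinearMap.mk₂ ℂ (fun q b => ρ.D q.1 r b + ρ.E q.2 r b)
    (fun q q' b => by rw [Prod.fst_add, Prod.snd_add, ρ.D_add_u, ρ.E_add_s]; abel)
    (fun c q b => by rw [Prod.smul_fst, Prod.smul_snd, ρ.D_smul_u, ρ.E_smul_s, smul_add])
    (fun q b b' => by rw [ρ.D_add_b, ρ.E_add_b]; abel)
    (fun c q b => by rw [ρ.D_smul_b, ρ.E_smul_b, smul_add])
  lie_X r q b r' q' c := ρ.lie_D_add_E q.1 q'.1 q.2 q'.2 r r' b c
  u₀ := ((exists_pairC_ne_zero n).choose, 0)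
  p_u₀_ne_zero {x} := (exists_pairC_ne_zero n).choose_spec x

theorem toGraded_X (r : Fin n → ℤ) (u : Fin n → ℂ) (s : S) (b : B) :
    ρ.toGraded.X r (u, s) b = ρ.D u r b + ρ.E s r b := rfl

theorem toGraded_X_left (r : Fin n → ℤ) (u : Fin n → ℂ) (b : B) :
    ρ.toGraded.X r (u, 0) b = ρ.D u r b := by
  rw [toGraded_X, E_zero, add_zero]

theorem toGraded_X_right (r : Fin n → ℤ) (s : S) (b : B) :
    ρ.toGraded.X r (0, s) b = ρ.E s r b := by
  rw [toGraded_X, D_zero, zero_add]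

theorem toGraded_p_right (s : S) : ρ.toGraded.p (0, s) = 0 :=
  map_zero (pairHom n)

variable {ρ}

theorem toGraded_isInvariant_iff {W : Submodule ℂ V} :
    ρ.toGraded.IsInvariant W ↔ ρ.Invariant W := by
  refine ⟨fun h => ⟨fun u r b x hx => ?_, fun s m b x hx => ?_⟩, fun h r q b x hx => ?_⟩
  · rw [← toGraded_X_left]
    exact h r _ b x hx
  · rw [← toGraded_X_right]
    exact h m _ b x hx
  · exact add_mem (h.1 q.1 r b x hx) (h.2 q.2 r b x hx)

theorem IsIrreducible.toGraded (h : ρ.IsIrreducible) : ρ.toGraded.IsIrreducible :=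
  ⟨nontrivial_of_ne _ _ h.1.choose_spec, fun W hW => h.2 W (toGraded_isInvariant_iff.1 hW)⟩

theorem IsNontrivial.toGraded (h : ρ.IsNontrivial) : ρ.toGraded.IsNontrivial := by
  rcases h with ⟨u, r, b, x, h⟩ | ⟨s, r, b, x, h⟩
  · exact ⟨r, (u, 0), b, fun h0 => h (by rw [← toGraded_X_left, h0, LinearMap.zero_apply])⟩
  · exact ⟨r, (0, s), b, fun h0 => h (by rw [← toGraded_X_right, h0, LinearMap.zero_apply])⟩

theorem isSinglePointEval_of_toGraded
    (h : ∃ η : B →ₐ[ℂ] ℂ, ∀ r q b, ρ.toGraded.X r q b = η b • ρ.toGraded.X r q 1) :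
    ρ.IsSinglePointEval := by
  obtain ⟨η, hη⟩ := h
  refine ⟨η, fun u r b => ?_, fun s m b => ?_⟩
  · rw [← toGraded_X_left, hη, toGraded_X_left]
  · rw [← toGraded_X_right, hη, toGraded_X_right]

section WeightSpace

/-- The weight `(lam, c)` of the Cartan subalgebra as a function on `ℂⁿ × S`. -/
def weight (lam : Fin n → ℂ) (c : S →ₗ[ℂ] ℂ) (q : (Fin n → ℂ) × S) : ℂ := pairCC q.1 lam + c q.2

variable {lam : Fin n → ℂ} {c : S →ₗ[ℂ] ℂ}

theorem weightSpace_toGraded (lam : Fin n → ℂ) (c : S →ₗ[ℂ] ℂ) (g : Fin n → ℤ) :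
    ρ.toGraded.weightSpace (weight lam c) g = ρ.weightSpace (fun i => lam i + g i) c := by
  ext x
  have hweight (q : (Fin n → ℂ) × S) : weight lam c q + ρ.toGraded.p q g =
      pairCC q.1 (fun i => lam i + g i) + c q.2 := by
    rw [pairCC_add_intCast, weight, add_right_comm]
    rfl
  simp only [GradedRep.mem_weightSpace, hweight]
  refine ⟨fun h => ⟨fun u => ?_, fun s => ?_⟩, fun h q => ?_⟩
  · rw [← toGraded_X_left, h, map_zero, add_zero]
  · rw [← toGraded_X_right, h]
    simp [pairCC]
  · rw [← Prod.mk.eta (p := q), toGraded_X, LinearMap.add_apply, h.1, h.2, add_smul]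

theorem weightSpace_toGraded_zero (lam : Fin n → ℂ) (c : S →ₗ[ℂ] ℂ) :
    ρ.toGraded.weightSpace (weight lam c) 0 = ρ.weightSpace lam c := by
  simp [weightSpace_toGraded]

theorem exists_weightSpace_toGraded_ne_bot (hne : ρ.weightSpace lam c ≠ ⊥) :
    ∃ g, ρ.toGraded.weightSpace (weight lam c) g ≠ ⊥ :=
  ⟨0, by rwa [weightSpace_toGraded_zero]⟩

theorem weightSpace_le_eigenspace (lam : Fin n → ℂ) (c : S →ₗ[ℂ] ℂ) :
    ρ.weightSpace lam c ≤ Module.End.eigenspace (ρ.toGraded.X 0 ρ.toGraded.u₀ 1)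
      (pairCC ρ.toGraded.u₀.1 lam) := by
  intro x hx
  rw [Module.End.mem_eigenspace_iff, ← hx.1, ← toGraded_X_left]
  rfl

theorem HarishChandra.exists_weightSpace_ne_bot [Nontrivial V] (h : ρ.HarishChandra) :
    ∃ lam c, ρ.weightSpace lam c ≠ ⊥ := by
  by_contra! hcon
  refine bot_ne_top (α := Submodule ℂ V) ?_
  rw [← h.1, eq_comm, iSup_eq_bot]
  exact fun q => hcon q.1 q.2

theorem HarishChandra.finiteDimensional_toGraded (h : ρ.HarishChandra) (lam : Fin n → ℂ)
    (c : S →ₗ[ℂ] ℂ) (g : Fin n → ℤ) :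
    FiniteDimensional ℂ (ρ.toGraded.weightSpace (weight lam c) g) := by
  rw [weightSpace_toGraded]
  exact h.2 _ _

theorem UniformlyBounded.exists_boundedIrreducible (h : ρ.UniformlyBounded)
    (hhc : ρ.HarishChandra) (hirr : ρ.IsIrreducible) (hne : ρ.weightSpace lam c ≠ ⊥) :
    ∃ d, ρ.toGraded.BoundedIrreducible (weight lam c) d := by
  obtain ⟨N, hN⟩ := h
  refine ⟨N, hirr.toGraded, exists_weightSpace_toGraded_ne_bot hne,
    hhc.finiteDimensional_toGraded lam c, fun g => ?_⟩
  rw [weightSpace_toGraded]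
  exact Module.finrank_le_of_rank_le (hN _ _)

theorem uniformlyBounded_of_finrank_le (hirr : ρ.IsIrreducible) (hhc : ρ.HarishChandra)
    (hne : ρ.weightSpace lam c ≠ ⊥) {d : ℕ}
    (hd : ∀ g, Module.finrank ℂ (ρ.toGraded.weightSpace (weight lam c) g) ≤ d) :
    ρ.UniformlyBounded := by
  refine ⟨d, fun lam' c' => ?_⟩
  by_cases h0 : ρ.weightSpace lam' c' = ⊥
  · rw [h0, rank_bot]
    exact zero_le
  have hle := weightSpace_le_eigenspace (ρ := ρ) lam' c'
  rw [← weightSpace_toGraded_zero] at hne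
  obtain ⟨g, hg⟩ := GradedRep.exists_eigenspace_le_weightSpace
    (GradedRep.iSup_weightSpace hirr.toGraded hne) (ne_bot_of_le_ne_bot h0 hle)
  have := hhc.finiteDimensional_toGraded lam c g
  refine (Submodule.rank_mono (hle.trans hg)).trans ?_
  rw [← Module.finrank_eq_rank]
  exact_mod_cast hd g

theorem isHighestWeight_of_weightSpace_eq_bot (hirr : ρ.IsIrreducible)
    {K : AddSubgroup (Fin n → ℤ)} {β : Fin n → ℤ} (hK : IsDirectSumDecomp K β) {h : Fin n → ℤ}
    (hne : ρ.toGraded.weightSpace (weight lam c) h ≠ ⊥)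
    (hbot : ∀ r, posDeg K β r → ρ.toGraded.weightSpace (weight lam c) (h + r) = ⊥) :
    ρ.IsHighestWeight := by
  obtain ⟨z, hz, hz₀⟩ := Submodule.exists_mem_ne_zero_of_ne_bot hne
  have hkill (r) (hr : posDeg K β r) (q b) : ρ.toGraded.X r q b z = 0 :=
    (Submodule.mem_bot ℂ).1 ((hbot r hr).le (GradedRep.X_mem_weightSpace hz r q b))
  refine ⟨K, β, hK, z, hz₀, ⟨_, c, (weightSpace_toGraded lam c h).le hz⟩, fun u r b hr => ?_,
    fun s m b hm => ?_, fun W hW hzW => ?_⟩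
  · rw [← toGraded_X_left]
    exact hkill r hr _ b
  · rw [← toGraded_X_right]
    exact hkill m hm _ b
  · exact hirr.toGraded.eq_top (toGraded_isInvariant_iff.2 hW) hzW hz₀

theorem uniformlyBounded_or_isHighestWeight [FiniteDimensional ℂ S] [Algebra.FiniteType ℂ B]
    [NeZero n] (hnt : ρ.IsNontrivial) (hhc : ρ.HarishChandra) (hirr : ρ.IsIrreducible) :
    ρ.UniformlyBounded ∨ ρ.IsHighestWeight := by
  have := hirr.toGraded.1
  obtain ⟨lam, c, hne⟩ := hhc.exists_weightSpace_ne_bot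
  have hfin := hhc.finiteDimensional_toGraded lam c
  by_cases hpos : ∃ r, ρ.toGraded.IsPositive r
  · obtain ⟨δ, hδ⟩ := hpos
    obtain ⟨K, β, hK, h, hh, hbot⟩ := hδ.exists_isHighest hirr.toGraded hnt.toGraded hfin
      (exists_weightSpace_toGraded_ne_bot hne)
    exact .inr (isHighestWeight_of_weightSpace_eq_bot hirr hK hh hbot)
  · push Not at hpos
    obtain ⟨d, hd⟩ := GradedRep.exists_finrank_le_of_not_isPositive hirr.toGraded hfin 0
    refine .inl (uniformlyBounded_of_finrank_le hirr hhc hne (d := d) fun g => ?_)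
    rw [← zero_add g, ← sub_neg_eq_add]
    exact hd (-g) (hpos _)

end WeightSpace

section Reduction

variable {lam : Fin n → ℂ} {c : S →ₗ[ℂ] ℂ}

/-- The action of `𝔏_{S,n}(B)` factors through `S ⧸ S₀` with `dim (S ⧸ S₀) ≤ 1`, and `V` is
irreducible over what remains: `Wₙ ⊗ B` if `S₀ = S`, and `𝔏(B)`, realised as
`(Wₙ ⋉ (s₀ ⊗ Aₙ)) ⊗ B` for any `s₀ ∉ S₀`, otherwise. -/
def FactorsThroughLine (ρ : ExtWittRep n S B V) : Prop :=
  ∃ S₀ : Submodule ℂ S,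
    (∀ s ∈ S₀, ∀ m b, ρ.E s m b = 0) ∧
    Module.finrank ℂ (S ⧸ S₀) ≤ 1 ∧
    (S₀ = ⊤ → (∃ x : V, x ≠ 0) ∧
      ∀ W : Submodule ℂ V, (∀ u r b, ∀ x ∈ W, ρ.D u r b x ∈ W) → W = ⊥ ∨ W = ⊤) ∧
    ∀ s₀ ∉ S₀, (∃ x : V, x ≠ 0) ∧
      ∀ W : Submodule ℂ V, (∀ u r b, ∀ x ∈ W, ρ.D u r b x ∈ W) ∧
        (∀ m b, ∀ x ∈ W, ρ.E s₀ m b x ∈ W) → W = ⊥ ∨ W = ⊤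

theorem E_zero_one_eq_zero_of_mem_ker (hirr : ρ.IsIrreducible) (hne : ρ.weightSpace lam c ≠ ⊥)
    {s : S} (hs : s ∈ LinearMap.ker c) : ρ.E s 0 1 = 0 := by
  rw [← weightSpace_toGraded_zero] at hne
  refine GradedRep.eq_zero_of_forall_mem_weightSpace
    (GradedRep.iSup_weightSpace hirr.toGraded hne) fun g v hv => ?_
  rw [weightSpace_toGraded] at hv
  rw [hv.2 s, LinearMap.mem_ker.1 hs, zero_smul]

theorem E_eq_smul_E (hker : ∀ s ∈ LinearMap.ker c, ∀ m b, ρ.E s m b = 0) {s₀ : S}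
    (hs₀ : c s₀ ≠ 0) (s : S) (m : Fin n → ℤ) (b : B) :
    ρ.E s m b = (c s / c s₀) • ρ.E s₀ m b := by
  have hmem : s - (c s / c s₀) • s₀ ∈ LinearMap.ker c := by
    rw [LinearMap.mem_ker, map_sub, map_smul, smul_eq_mul, div_mul_cancel₀ _ hs₀, sub_self]
  rw [← sub_eq_zero, ← E_sub_smul, hker _ hmem]

theorem factorsThroughLine (hirr : ρ.IsIrreducible) (hne : ρ.weightSpace lam c ≠ ⊥)
    (hcentral : ∀ q, ρ.toGraded.p q = 0 → ρ.toGraded.X 0 q 1 = 0 →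
      ∀ m b, ρ.toGraded.X m q b = 0) : ρ.FactorsThroughLine := by
  have hker (s) (hs : s ∈ LinearMap.ker c) (m b) : ρ.E s m b = 0 := by
    rw [← toGraded_X_right]
    refine hcentral _ (ρ.toGraded_p_right s) ?_ m b
    rw [toGraded_X_right, E_zero_one_eq_zero_of_mem_ker hirr hne hs]
  refine ⟨LinearMap.ker c, hker, ?_, fun htop => ⟨hirr.1, fun W hW => hirr.2 W ⟨hW, ?_⟩⟩,
    fun s₀ hs₀ => ⟨hirr.1, fun W hW => hirr.2 W ⟨hW.1, ?_⟩⟩⟩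
  · rw [c.quotKerEquivRange.finrank_eq]
    exact (Submodule.finrank_le _).trans (Module.finrank_self ℂ).le
  · intro s m b x _
    rw [hker s (htop ▸ Submodule.mem_top), LinearMap.zero_apply]
    exact zero_mem W
  · intro s m b x hx
    rw [E_eq_smul_E hker hs₀, LinearMap.smul_apply]
    exact W.smul_mem _ (hW.2 m b x hx)

variable [FiniteDimensional ℂ S]

theorem UniformlyBounded.factorsThroughLine_and_isSinglePointEval [NeZero n]
    (h : ρ.UniformlyBounded) (hnt : ρ.IsNontrivial) (hhc : ρ.HarishChandra)
    (hirr : ρ.IsIrreducible) : ρ.FactorsThroughLine ∧ ρ.IsSinglePointEval := by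
  have := hirr.toGraded.1
  obtain ⟨lam, c, hne⟩ := hhc.exists_weightSpace_ne_bot
  obtain ⟨d, hd⟩ := h.exists_boundedIrreducible hhc hirr hne
  exact ⟨factorsThroughLine hirr hne fun q => hd.X_eq_zero_of_X_zero_eq_zero,
    isSinglePointEval_of_toGraded (hd.exists_eval hnt.toGraded)⟩

theorem IsHighestWeight.factorsThroughLine_and_isSinglePointEval [Algebra.FiniteType ℂ B]
    (h : ρ.IsHighestWeight) (hn : 2 ≤ n) (hnt : ρ.IsNontrivial) (hhc : ρ.HarishChandra)
    (hirr : ρ.IsIrreducible) : ρ.FactorsThroughLine ∧ ρ.IsSinglePointEval := by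
  have : NeZero n := ⟨by lia⟩
  obtain ⟨K, β, hK, z, hz, ⟨lam, c, hzw⟩, hD, hE, -⟩ := h
  have hkill (r) (hr : posDeg K β r) (q b) : ρ.toGraded.X r q b z = 0 := by
    rw [← Prod.mk.eta (p := q), toGraded_X, LinearMap.add_apply, hD _ r b hr, hE _ r b hr, add_zero]
  have hne : ρ.weightSpace lam c ≠ ⊥ := (Submodule.ne_bot_iff _).2 ⟨z, hzw, hz⟩
  obtain ⟨ℓ, g, d, hlayer, hd⟩ := GradedRep.exists_hasHighestLayer hirr.toGraded hnt.toGraded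
    (hhc.finiteDimensional_toGraded lam c) (exists_weightSpace_toGraded_ne_bot hne)
    (not_isAddCyclic_pi_int hn) hK hz hkill
  have hfin (i) : FiniteDimensional ℂ
      (ρ.toGraded.weightSpace (fun u => weight lam c u + ρ.toGraded.p u g) i) := by
    rw [GradedRep.weightSpace_add_p]
    exact hhc.finiteDimensional_toGraded lam c _
  have := nontrivial_ker_of_two_le hn ℓ
  have := fg_ker ℓ
  exact ⟨factorsThroughLine hirr hne fun q => hlayer.X_eq_zero_of_X_zero_eq_zero hfin hd,
    isSinglePointEval_of_toGraded (hlayer.exists_eval hnt.toGraded hfin hd)⟩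

end Reduction

end ExtWittRep

end LoopWitt

/-- **Main theorem.** A non-trivial irreducible `𝔏_{S,n}(B)`-module with
finite dimensional weight spaces is either uniformly bounded or a highest weight module;
in either case it reduces to an irreducible module for `𝔏(B)` or `Wₙ ⊗ B`
(for `n ≥ 1` in the uniformly bounded case, `n ≥ 2` in the highest weight case), and as
such it is a single point evaluation module. -/
theorem stmt15 {n : ℕ} (hn : 1 ≤ n) {S B V : Type*}
    [AddCommGroup S] [Module ℂ S] [FiniteDimensional ℂ S]
    [CommRing B] [Algebra ℂ B] [Algebra.FiniteType ℂ B]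
    [AddCommGroup V] [Module ℂ V]
    (ρ : ExtWittRep n S B V)
    (hnt : ρ.IsNontrivial) (hhc : ρ.HarishChandra) (hirr : ρ.IsIrreducible) :
    -- the dichotomy:
    (ρ.UniformlyBounded ∨ ρ.IsHighestWeight) ∧
    -- uniformly bounded case (`n ≥ 1`):
    (ρ.UniformlyBounded →
      (∃ S0 : Submodule ℂ S,
        (∀ s ∈ S0, ∀ (m : Fin n → ℤ) (b : B), ρ.E s m b = 0) ∧
        Module.finrank ℂ (S ⧸ S0) ≤ 1 ∧
        ((S0 = ⊤ →
          (∃ x : V, x ≠ 0) ∧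
          ∀ U : Submodule ℂ V,
            (∀ u r b, ∀ x ∈ U, ρ.D u r b x ∈ U) → U = ⊥ ∨ U = ⊤) ∧
         (∀ s₀ : S, s₀ ∉ S0 →
          (∃ x : V, x ≠ 0) ∧
          ∀ U : Submodule ℂ V,
            ((∀ u r b, ∀ x ∈ U, ρ.D u r b x ∈ U) ∧
              (∀ (m : Fin n → ℤ) (b : B), ∀ x ∈ U, ρ.E s₀ m b x ∈ U)) →
            U = ⊥ ∨ U = ⊤))) ∧
      ρ.IsSinglePointEval) ∧
    -- highest weight case (`n ≥ 2`):
    (ρ.IsHighestWeight → 2 ≤ n →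
      (∃ S0 : Submodule ℂ S,
        (∀ s ∈ S0, ∀ (m : Fin n → ℤ) (b : B), ρ.E s m b = 0) ∧
        Module.finrank ℂ (S ⧸ S0) ≤ 1 ∧
        ((S0 = ⊤ →
          (∃ x : V, x ≠ 0) ∧
          ∀ U : Submodule ℂ V,
            (∀ u r b, ∀ x ∈ U, ρ.D u r b x ∈ U) → U = ⊥ ∨ U = ⊤) ∧
         (∀ s₀ : S, s₀ ∉ S0 →
          (∃ x : V, x ≠ 0) ∧
          ∀ U : Submodule ℂ V,
            ((∀ u r b, ∀ x ∈ U, ρ.D u r b x ∈ U) ∧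
              (∀ (m : Fin n → ℤ) (b : B), ∀ x ∈ U, ρ.E s₀ m b x ∈ U)) →
            U = ⊥ ∨ U = ⊤))) ∧
      ρ.IsSinglePointEval) := by
  have : NeZero n := ⟨by lia⟩
  exact ⟨ExtWittRep.uniformlyBounded_or_isHighestWeight hnt hhc hirr,
    fun h => h.factorsThroughLine_and_isSinglePointEval hnt hhc hirr,
    fun h hn' => h.factorsThroughLine_and_isSinglePointEval hn' hnt hhc hirr⟩
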